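/- arXiv:2003.12709 — 3 statements merged into one kernel-verified Lean document; each statement's English description precedes it below -/
import Mathlib

section
/- For a convex polyhedron, taking the right angle as unit, the sum of the angles of all its faces equals 4(n0 - 2), where n0 is the number of vertices. Equivalently, the sum of all face angles equals 2π(n0 - 2). -/
open MeasureTheory Real

local notation "E3" => EuclideanSpace ℝ (Fin 3)

/-- A bounded function on `[0, π]` that is additive and vanishes at `π` is zero. -/
lemma eq_zero_of_additive_of_bounded {h : ℝ → ℝ} {M : ℝ}
    (hadd : ∀ s t, 0 ≤ s → 0 ≤ t → s + t ≤ π → h (s + t) = h s + h t)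
    (hpi : h π = 0) (hM : ∀ t, 0 ≤ t → t ≤ π → |h t| ≤ M)
    {t : ℝ} (ht : 0 ≤ t) (ht' : t ≤ π) : h t = 0 := by
  have key : ∀ n : ℕ, ∀ t, 0 ≤ t → t ≤ π → |h t| ≤ M / 2 ^ n := by
    intro n
    induction n with
    | zero => simpa using hM
    | succ n ih =>
      have half : ∀ t, 0 ≤ t → t ≤ π / 2 → |h t| ≤ M / 2 ^ (n + 1) := by
        intro t h0 h1
        have h2 := ih (t + t) (by linarith) (by linarith)
        rw [hadd t t h0 h0 (by linarith), ← two_mul, abs_mul, abs_two] at h2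
        rw [pow_succ, ← div_div]
        linarith
      intro t h0 h1
      rcases le_total t (π / 2) with h2 | h2
      · exact half t h0 h2
      · have h3 := hadd t (π - t) h0 (by linarith) (by linarith)
        rw [add_sub_cancel, hpi] at h3
        rw [show h t = -h (π - t) by linarith, abs_neg]
        exact half _ (by linarith) (by linarith)
  have hlim : Filter.Tendsto (fun n : ℕ => M / 2 ^ n) Filter.atTop (nhds 0) := by
    have := (tendsto_pow_atTop_nhds_zero_of_lt_one (r := (1/2 : ℝ)) (by norm_num)
      (by norm_num)).const_mul M
    simpa [div_eq_mul_inv] using this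
  have := ge_of_tendsto' hlim fun n => key n t ht ht'
  exact abs_nonpos_iff.mp this

/-- Lebesgue measure restricted to the unit ball. -/
noncomputable def ballMeasure : Measure E3 := volume.restrict (Metric.ball 0 1)

instance : IsFiniteMeasure ballMeasure :=
  ⟨by simp [ballMeasure]⟩

lemma ballMeasure_real_univ_pos : 0 < ballMeasure.real Set.univ := by
  rw [measureReal_def, ENNReal.toReal_pos_iff]
  refine ⟨?_, measure_lt_top _ _⟩
  simpa [ballMeasure] using Metric.measure_ball_pos volume (0 : E3) one_pos

lemma measurePreserving_ballMeasure (e : E3 ≃ₗᵢ[ℝ] E3) :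
    MeasurePreserving e ballMeasure ballMeasure := by
  have := e.measurePreserving.restrict_preimage (s := Metric.ball 0 1) measurableSet_ball
  rwa [e.preimage_ball, map_zero] at this

lemma ae_inner_ne_zero {a : E3} (ha : a ≠ 0) : ∀ᵐ x ∂ballMeasure, inner ℝ x a ≠ 0 := by
  apply ae_restrict_of_ae
  have h := Measure.addHaar_submodule (volume : Measure E3) (ℝ ∙ a)ᗮ (by
    intro h
    have : a ∈ (ℝ ∙ a)ᗮ := h ▸ Submodule.mem_top
    rw [Submodule.mem_orthogonal_singleton_iff_inner_right] at this
    exact ha (inner_self_eq_zero.mp this))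
  rw [ae_iff]
  convert h using 2
  ext x
  simp [Submodule.mem_orthogonal_singleton_iff_inner_left]

/-- The vectors having inner products of opposite signs with `a` and `b`. -/
def signChange (a b : E3) : Set E3 := {x | inner ℝ x a * inner ℝ x b < 0}

lemma measurableSet_signChange (a b : E3) : MeasurableSet (signChange a b) :=
  measurableSet_lt (by fun_prop) (by fun_prop)

lemma signChange_smul {r s : ℝ} (hr : 0 < r) (hs : 0 < s) (a b : E3) :
    signChange (r • a) (s • b) = signChange a b := by
  ext x
  simp only [signChange, Set.mem_ofPred_eq, real_inner_smul_right]
  rw [show r * inner ℝ x a * (s * inner ℝ x b) = (r * s) * (inner ℝ x a * inner ℝ x b) by ring]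
  have := mul_pos hr hs
  constructor <;> intro h <;> nlinarith

/-- The unit vector at angle `t` in the plane of the first two vectors of a basis. -/
noncomputable def circleVec (c : OrthonormalBasis (Fin 3) ℝ E3) (t : ℝ) : E3 :=
  cos t • c 0 + sin t • c 1

lemma ballMeasure_signChange_rotate (c : OrthonormalBasis (Fin 3) ℝ E3) (r s t : ℝ) :
    ballMeasure.real (signChange (circleVec c (r + s)) (circleVec c (r + t))) =
      ballMeasure.real (signChange (circleVec c s) (circleVec c t)) := by
  have horth : Orthonormal ℝ ![circleVec c r, circleVec c (r + π / 2), c 2] := by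
    have h01 := c.inner_eq_zero (i := 0) (j := 1) (by decide)
    have h10 := c.inner_eq_zero (i := 1) (j := 0) (by decide)
    have h02 := c.inner_eq_zero (i := 0) (j := 2) (by decide)
    have h20 := c.inner_eq_zero (i := 2) (j := 0) (by decide)
    have h12 := c.inner_eq_zero (i := 1) (j := 2) (by decide)
    have h21 := c.inner_eq_zero (i := 2) (j := 1) (by decide)
    have h00 := c.inner_eq_one 0
    have h11 := c.inner_eq_one 1
    have h22 := c.inner_eq_one 2
    rw [orthonormal_iff_ite]
    have hsc := sin_sq_add_cos_sq r
    intro i j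
    fin_cases i <;> fin_cases j <;>
      simp [circleVec, inner_add_left, inner_add_right, real_inner_smul_left,
        real_inner_smul_right, h00, h11, h22, h01, h10, h02, h20, h12, h21, cos_add_pi_div_two,
        sin_add_pi_div_two, -inner_self_eq_norm_sq_to_K] <;>
      nlinarith
  let d : OrthonormalBasis (Fin 3) ℝ E3 :=
    (basisOfOrthonormalOfCardEqFinrank horth (by simp)).toOrthonormalBasis (by simpa using horth)
  have hd : ∀ i, d i = ![circleVec c r, circleVec c (r + π / 2), c 2] i := by
    intro i; simp [d]
  let e := c.equiv d (Equiv.refl _)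
  have he : ∀ t, e (circleVec c t) = circleVec c (r + t) := by
    intro t
    have h0 : e (c 0) = circleVec c r := by simp [e, hd]
    have h1 : e (c 1) = circleVec c (r + π / 2) := by simp [e, hd]
    rw [circleVec, map_add, map_smul, map_smul, h0, h1]
    simp only [circleVec, cos_add, sin_add, cos_pi_div_two, sin_pi_div_two]
    module
  have hpre : e ⁻¹' signChange (circleVec c (r + s)) (circleVec c (r + t)) =
      signChange (circleVec c s) (circleVec c t) := by
    ext x
    simp [signChange, ← he]
  rw [← hpre, (measurePreserving_ballMeasure e).measureReal_preimage
    (measurableSet_signChange _ _).nullMeasurableSet]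

lemma circleVec_ne_zero (c : OrthonormalBasis (Fin 3) ℝ E3) (t : ℝ) : circleVec c t ≠ 0 := by
  intro h
  have h0 : inner ℝ (c 0) (circleVec c t) = cos t := by
    simp [circleVec, inner_add_right, real_inner_smul_right, c.inner_eq_zero]
  have h1 : inner ℝ (c 1) (circleVec c t) = sin t := by
    simp [circleVec, inner_add_right, real_inner_smul_right, c.inner_eq_zero]
  rw [h, inner_zero_right] at h0 h1
  have := sin_sq_add_cos_sq t
  rw [← h0, ← h1] at this
  norm_num at this

lemma ballMeasure_signChange_add (c : OrthonormalBasis (Fin 3) ℝ E3) {s t : ℝ}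
    (hs : 0 ≤ s) (ht : 0 ≤ t) (hst : s + t ≤ π) :
    ballMeasure.real (signChange (circleVec c 0) (circleVec c (s + t))) =
      ballMeasure.real (signChange (circleVec c 0) (circleVec c s)) +
      ballMeasure.real (signChange (circleVec c 0) (circleVec c t)) := by
  have hself : ∀ t, ballMeasure.real (signChange (circleVec c t) (circleVec c t)) = 0 := by
    intro t
    have : signChange (circleVec c t) (circleVec c t) = ∅ := by
      ext x; simp [signChange, mul_self_nonneg]
    simp [this]
  rcases hs.eq_or_lt with rfl | hs
  · simp [hself]
  rcases ht.eq_or_lt with rfl | ht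
  · simp [hself]
  have hdisj : ∀ x, x ∈ signChange (circleVec c 0) (circleVec c s) →
      x ∉ signChange (circleVec c s) (circleVec c (s + t)) := by
    intro x h h'
    have hcomb : sin (s + t) • circleVec c s =
        sin t • circleVec c 0 + sin s • circleVec c (s + t) := by
      have h1 : sin (s + t) * cos s = sin t + sin s * cos (s + t) := by
        rw [sin_add, cos_add]
        linear_combination sin t * sin_sq_add_cos_sq s
      have h2 : sin (s + t) * sin s = sin s * sin (s + t) := mul_comm _ _
      simp only [circleVec, cos_zero, sin_zero, smul_add, smul_smul, h1, h2]
      module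
    have hin := congrArg (inner ℝ x) hcomb
    simp only [inner_add_right, real_inner_smul_right] at hin
    simp only [signChange, Set.mem_ofPred_eq] at h h'
    have hsin_t : 0 < sin t := sin_pos_of_pos_of_lt_pi ht (by linarith)
    have hsin_s : 0 < sin s := sin_pos_of_pos_of_lt_pi hs (by linarith)
    have hsin_st : 0 ≤ sin (s + t) := sin_nonneg_of_nonneg_of_le_pi (by linarith) hst
    generalize inner ℝ x (circleVec c 0) = A at *
    generalize inner ℝ x (circleVec c s) = B at *
    generalize inner ℝ x (circleVec c (s + t)) = C at *
    have h1 : sin (s + t) * (B * B) = sin t * (A * B) + sin s * (B * C) := by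
      linear_combination B * hin
    nlinarith [mul_nonneg hsin_st (mul_self_nonneg B), mul_neg_of_pos_of_neg hsin_t h,
      mul_neg_of_pos_of_neg hsin_s h']
  have hrot := ballMeasure_signChange_rotate c s 0 t
  rw [add_zero] at hrot
  rw [← hrot, ← measureReal_union₀' (measurableSet_signChange _ _).nullMeasurableSet]
  · apply measureReal_congr
    rw [Filter.eventuallyEq_set]
    filter_upwards [ae_inner_ne_zero (circleVec_ne_zero c 0),
      ae_inner_ne_zero (circleVec_ne_zero c s),
      ae_inner_ne_zero (circleVec_ne_zero c (s + t))] with x h0 h1 h2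
    have hd := hdisj x
    simp only [signChange, Set.mem_union, Set.mem_ofPred_eq] at hd ⊢
    generalize inner ℝ x (circleVec c 0) = A at *
    generalize inner ℝ x (circleVec c s) = B at *
    generalize inner ℝ x (circleVec c (s + t)) = C at *
    have hB : 0 < B * B := mul_self_pos.mpr h1
    have hprod : (A * B) * (B * C) = (A * C) * (B * B) := by ring
    constructor
    · intro h
      by_contra! h'
      nlinarith [mul_nonneg h'.1 h'.2, mul_neg_of_neg_of_pos h hB]
    · intro h
      have hlt : (A * B) * (B * C) < 0 := by
        rcases h with h | h
        · have : 0 < B * C := lt_of_le_of_ne (not_lt.mp fun h' => hd h h')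
            (mul_ne_zero h1 h2).symm
          exact mul_neg_of_neg_of_pos h this
        · have : 0 < A * B := lt_of_le_of_ne (not_lt.mp fun h' => hd h' h)
            (mul_ne_zero h0 h1).symm
          exact mul_neg_of_pos_of_neg this h
      rw [hprod] at hlt
      exact neg_of_mul_neg_left hlt hB.le
  · exact (Set.disjoint_left.mpr hdisj).aedisjoint

lemma ballMeasure_signChange_circleVec (c : OrthonormalBasis (Fin 3) ℝ E3) {t : ℝ}
    (ht : 0 ≤ t) (ht' : t ≤ π) :
    ballMeasure.real (signChange (circleVec c 0) (circleVec c t)) =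
      t / π * ballMeasure.real Set.univ := by
  have hpi : ballMeasure.real (signChange (circleVec c 0) (circleVec c π)) =
      ballMeasure.real Set.univ := by
    apply measureReal_congr
    rw [Filter.eventuallyEq_set]
    filter_upwards [ae_inner_ne_zero (circleVec_ne_zero c 0)] with x h0
    have : circleVec c π = - circleVec c 0 := by simp [circleVec]
    simp only [signChange, this, inner_neg_right, mul_neg, Set.mem_ofPred_eq, Set.mem_univ,
      iff_true, neg_lt_zero]
    exact mul_self_pos.mpr h0
  rw [← sub_eq_zero]
  refine eq_zero_of_additive_of_bounded
    (h := fun t => ballMeasure.real (signChange (circleVec c 0) (circleVec c t)) -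
      t / π * ballMeasure.real Set.univ) (M := ballMeasure.real Set.univ) ?_ ?_ ?_ ht ht'
  · intro s t hs ht hst
    simp only [ballMeasure_signChange_add c hs ht hst]
    ring
  · simp [hpi, pi_ne_zero]
  · intro t h0 h1
    have hle : ballMeasure.real (signChange (circleVec c 0) (circleVec c t)) ≤
      ballMeasure.real Set.univ := measureReal_mono (Set.subset_univ _)
    have h2 : 0 ≤ t / π := div_nonneg h0 pi_pos.le
    have h3 : t / π ≤ 1 := (div_le_one pi_pos).mpr h1
    have h4 := ballMeasure_real_univ_pos
    have h5 : 0 ≤ ballMeasure.real (signChange (circleVec c 0) (circleVec c t)) :=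
      measureReal_nonneg
    rw [abs_le]
    constructor <;> nlinarith

/-- The proportion of vectors separating the signs of two vectors is their angle over `π`. -/
lemma ballMeasure_signChange {a b : E3} (hab : LinearIndependent ℝ ![a, b]) :
    ballMeasure.real (signChange a b) =
      InnerProductGeometry.angle a b / π * ballMeasure.real Set.univ := by
  have ha : a ≠ 0 := hab.ne_zero 0
  have hb : b ≠ 0 := hab.ne_zero 1
  have hna : 0 < ‖a‖ := norm_pos_iff.mpr ha
  have hnb : 0 < ‖b‖ := norm_pos_iff.mpr hb
  set θ := InnerProductGeometry.angle a b with hθ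
  have hcos : inner ℝ a b = ‖a‖ * ‖b‖ * cos θ := by
    rw [hθ, ← InnerProductGeometry.cos_angle_mul_norm_mul_norm]; ring
  have hsin : 0 < sin θ := by
    refine lt_of_le_of_ne (InnerProductGeometry.sin_angle_nonneg a b) fun h => ?_
    rw [eq_comm, InnerProductGeometry.sin_eq_zero_iff_angle_eq_zero_or_angle_eq_pi,
      InnerProductGeometry.angle_eq_zero_iff, InnerProductGeometry.angle_eq_pi_iff] at h
    rw [LinearIndependent.pair_iff' ha] at hab
    rcases h with ⟨-, r, -, h⟩ | ⟨-, r, -, h⟩ <;> exact hab r h.symm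
  have hunit : ∀ x : E3, 0 < ‖x‖ → inner ℝ (‖x‖⁻¹ • x) (‖x‖⁻¹ • x) = (1 : ℝ) := by
    intro x hx
    rw [real_inner_smul_left, real_inner_smul_right, real_inner_self_eq_norm_sq]
    field_simp
  have h11 := hunit a hna
  have hbb := hunit b hnb
  have h1b : inner ℝ (‖a‖⁻¹ • a) (‖b‖⁻¹ • b) = cos θ := by
    rw [real_inner_smul_left, real_inner_smul_right, hcos]
    field_simp
  have hA₀ : a = ‖a‖ • ‖a‖⁻¹ • a := by rw [smul_smul, mul_inv_cancel₀ hna.ne', one_smul]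
  have hB₀ : b = ‖b‖ • ‖b‖⁻¹ • b := by rw [smul_smul, mul_inv_cancel₀ hnb.ne', one_smul]
  generalize ‖a‖⁻¹ • a = e₁ at *
  generalize ‖b‖⁻¹ • b = e at *
  obtain ⟨e₂, he₂⟩ : ∃ e₂, e₂ = (sin θ)⁻¹ • (e - cos θ • e₁) := ⟨_, rfl⟩
  have h12 : inner ℝ e₁ e₂ = 0 := by
    rw [he₂, real_inner_smul_right, inner_sub_right, h1b, real_inner_smul_right, h11]
    ring
  have h22 : inner ℝ e₂ e₂ = 1 := by
    have hsc := sin_sq_add_cos_sq θ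
    rw [he₂, real_inner_smul_right, real_inner_smul_left, inner_sub_left, inner_sub_right,
      inner_sub_right, hbb, real_inner_smul_left, real_inner_smul_left, real_inner_smul_right,
      real_inner_smul_right, h11, real_inner_comm, h1b]
    field_simp
    linarith
  have horth : Orthonormal ℝ (![e₁, e₂, 0] ∘ ((↑) : ({0, 1} : Set (Fin 3)) → Fin 3)) := by
    rw [orthonormal_iff_ite]
    rintro ⟨i, hi⟩ ⟨j, hj⟩
    rcases hi with rfl | rfl <;> rcases hj with rfl | rfl <;>
      simp [-inner_self_eq_norm_sq_to_K, h11, h12, h22, real_inner_comm, Subtype.ext_iff]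
  obtain ⟨c, hc⟩ := Orthonormal.exists_orthonormalBasis_extension_of_card_eq (by simp) horth
  have hc0 : c 0 = e₁ := by simpa using hc 0 (by simp)
  have hc1 : c 1 = e₂ := by simpa using hc 1 (by simp)
  have hA : a = ‖a‖ • circleVec c 0 := by simpa [circleVec, hc0] using hA₀
  have hB : b = ‖b‖ • circleVec c θ := by
    rwa [circleVec, hc0, hc1, he₂, smul_smul (sin θ), mul_inv_cancel₀ hsin.ne', one_smul,
      add_sub_cancel]
  rw [hA, hB, signChange_smul hna hnb]
  exact ballMeasure_signChange_circleVec c (InnerProductGeometry.angle_nonneg a b)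
    (InnerProductGeometry.angle_le_pi a b)
/-- `h` is nonpositive on `T` and vanishes at points where `l` takes both signs. -/
def IsStraddlingSupport {α : Type*} (T : Finset α) (l h : α → ℝ) : Prop :=
  (∀ x ∈ T, h x ≤ 0) ∧ (∃ s ∈ T, 0 < l s ∧ h s = 0) ∧ ∃ t ∈ T, l t < 0 ∧ h t = 0

section Support

variable {α : Type*} {T : Finset α} {l f m : α → ℝ}

lemma eq_zero_of_vanish {s t : α} {ρ τ : ℝ} (hfs : f s < 0) (hft : f t < 0)
    (hs : 0 < l s) (ht : l t < 0) (h1 : ρ * f s + τ * l s = 0) (h2 : ρ * f t + τ * l t = 0) :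
    ρ = 0 ∧ τ = 0 := by
  have h3 : ρ * (f s * l t - f t * l s) = 0 := by linear_combination l t * h1 - l s * h2
  have h4 : 0 < f s * l t - f t * l s := by nlinarith [mul_pos_of_neg_of_neg hfs ht]
  have h5 : ρ = 0 := by simpa [h4.ne'] using h3
  subst h5
  exact ⟨rfl, by simpa [hs.ne'] using h1⟩

lemma exists_isStraddlingSupport (m : α → ℝ) (hl : ∀ x ∈ T, l x ≠ 0) (hf : ∀ x ∈ T, f x < 0)
    (hpos : ∃ s ∈ T, 0 < l s) (hneg : ∃ t ∈ T, l t < 0) :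
    ∃ ρ τ : ℝ, IsStraddlingSupport T l fun x => m x + ρ * f x + τ * l x := by
  classical
  let D := (T.filter (0 < l ·)) ×ˢ (T.filter (l · < 0))
  have hD : D.Nonempty := by
    obtain ⟨s, hs, hs'⟩ := hpos
    obtain ⟨t, ht, ht'⟩ := hneg
    exact ⟨(s, t), by simp [D, *]⟩
  let q : (α → ℝ) → α × α → ℝ := fun g p => g p.2 * l p.1 - g p.1 * l p.2
  obtain ⟨⟨s₀, t₀⟩, hmem, hmax⟩ := D.exists_max_image (fun p => q m p / (- q f p)) hD
  have hq : ∀ p ∈ D, 0 < - q f p := by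
    rintro ⟨s, t⟩ hp
    simp only [D, Finset.mem_product, Finset.mem_filter] at hp
    simp only [q]
    nlinarith [mul_pos_of_neg_of_neg (hf s hp.1.1) hp.2.2,
      mul_pos (neg_pos.mpr (hf t hp.2.1)) hp.1.2]
  obtain ⟨ρ, hρ⟩ : ∃ ρ, ρ = q m (s₀, t₀) / (- q f (s₀, t₀)) := ⟨_, rfl⟩
  have hle : ∀ s ∈ T, 0 < l s → ∀ t ∈ T, l t < 0 →
      (m t + ρ * f t) * l s - (m s + ρ * f s) * l t ≤ 0 := by
    intro s hs hs' t ht ht'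
    have hp : (s, t) ∈ D := by simp [D, *]
    have h1 := hmax _ hp
    rw [← hρ, div_le_iff₀ (hq _ hp)] at h1
    simp only [q] at h1
    linarith
  have h0 := hq _ hmem
  rw [eq_div_iff h0.ne'] at hρ
  simp only [D, Finset.mem_product, Finset.mem_filter] at hmem
  obtain ⟨⟨hs₀, hs₀'⟩, ht₀, ht₀'⟩ := hmem
  have heq : (m t₀ + ρ * f t₀) * l s₀ - (m s₀ + ρ * f s₀) * l t₀ = 0 := by
    simp only [q] at hρ
    linarith
  obtain ⟨τ, hτ⟩ : ∃ τ, m s₀ + ρ * f s₀ + τ * l s₀ = 0 :=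
    ⟨-(m s₀ + ρ * f s₀) / l s₀, by field_simp; ring⟩
  have hτ' : m t₀ + ρ * f t₀ + τ * l t₀ = 0 := by
    have : (m t₀ + ρ * f t₀ + τ * l t₀) * l s₀ = 0 := by linear_combination heq + l t₀ * hτ
    simpa [hs₀'.ne'] using this
  refine ⟨ρ, τ, fun x hx => ?_, ⟨s₀, hs₀, hs₀', hτ⟩, t₀, ht₀, ht₀', hτ'⟩
  rcases (hl x hx).lt_or_gt with hx' | hx'
  · have h1 := hle s₀ hs₀ hs₀' x hx hx'
    have : (m x + ρ * f x + τ * l x) * l s₀ ≤ 0 := by linear_combination h1 + l x * hτ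
    exact nonpos_of_mul_nonpos_left this hs₀'
  · have h1 := hle x hx hx' t₀ ht₀ ht₀'
    have : (m x + ρ * f x + τ * l x) * (- l t₀) ≤ 0 := by linear_combination h1 - l x * hτ'
    exact nonpos_of_mul_nonpos_left this (by linarith)

lemma IsStraddlingSupport.unique (hf : ∀ x ∈ T, f x < 0) {ρ τ ρ' τ' : ℝ}
    (h : IsStraddlingSupport T l fun x => m x + ρ * f x + τ * l x)
    (h' : IsStraddlingSupport T l fun x => m x + ρ' * f x + τ' * l x) : ρ = ρ' ∧ τ = τ' := by
  have key : ∀ {ρ τ ρ' τ' : ℝ}, IsStraddlingSupport T l (fun x => m x + ρ * f x + τ * l x) →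
      IsStraddlingSupport T l (fun x => m x + ρ' * f x + τ' * l x) → ρ ≤ ρ' := by
    rintro ρ τ ρ' τ' ⟨-, ⟨s, hs, hs', hs0⟩, t, ht, ht', ht0⟩ ⟨h', -⟩
    have h1 := h' s hs
    have h2 := h' t ht
    have hfs := hf s hs
    have hft := hf t ht
    simp only at hs0 ht0 h1 h2
    have h3 : 0 < f s * l t - f t * l s := by nlinarith [mul_pos_of_neg_of_neg hfs ht']
    have h4 : 0 ≤ (ρ' - ρ) * (f s * l t - f t * l s) := by
      have e1 : ((ρ' - ρ) * f s + (τ' - τ) * l s) ≤ 0 := by linarith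
      have e2 : ((ρ' - ρ) * f t + (τ' - τ) * l t) ≤ 0 := by linarith
      nlinarith [mul_nonneg_of_nonpos_of_nonpos e1 ht'.le, mul_nonneg (neg_nonneg.mpr e2) hs'.le]
    nlinarith [nonneg_of_mul_nonneg_left h4 h3]
  have hρ := le_antisymm (key h h') (key h' h)
  refine ⟨hρ, ?_⟩
  subst hρ
  obtain ⟨-, ⟨s, hs, hs', hs0⟩, t, ht, ht', ht0⟩ := h
  have h1 := h'.1 s hs
  have h2 := h'.1 t ht
  simp only at hs0 ht0 h1 h2
  nlinarith

lemma IsStraddlingSupport.const_mul {h : α → ℝ} {r : ℝ} (hr : 0 < r)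
    (hs : IsStraddlingSupport T l h) : IsStraddlingSupport T l fun x => r * h x := by
  obtain ⟨hle, ⟨s, hs, hs', hs0⟩, t, ht, ht', ht0⟩ := hs
  exact ⟨fun x hx => mul_nonpos_of_nonneg_of_nonpos hr.le (hle x hx),
    ⟨s, hs, hs', by simp [hs0]⟩, t, ht, ht', by simp [ht0]⟩

end Support

lemma finrank_strongDual : Module.finrank ℝ (StrongDual ℝ E3) = 3 := by
  rw [← (InnerProductSpace.toDual ℝ E3).toLinearEquiv.finrank_eq]
  simp

lemma exists_complement_functional {l f : StrongDual ℝ E3} (h : LinearIndependent ℝ ![l, f]) :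
    ∃ m : StrongDual ℝ E3, (∀ b c : ℝ, m ≠ b • f + c • l) ∧
      ∀ h : StrongDual ℝ E3, ∃ a b c : ℝ, h = a • m + b • f + c • l := by
  have hr := finrank_span_eq_card h
  have hne : Submodule.span ℝ (Set.range ![l, f]) ≠ ⊤ := by
    intro htop
    rw [htop, finrank_top, finrank_strongDual] at hr
    simp at hr
  obtain ⟨m, -, hm⟩ := SetLike.exists_of_lt (lt_top_iff_ne_top.mpr hne)
  have hind : LinearIndependent ℝ ![m, l, f] := linearIndependent_finCons.mpr ⟨h, hm⟩
  have hspan := hind.span_eq_top_of_card_eq_finrank (by simp [finrank_strongDual])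
  refine ⟨m, fun b c hb => hm ?_, fun g => ?_⟩
  · rw [Submodule.mem_span_range_iff_exists_fun]
    exact ⟨![c, b], by simp [hb, add_comm]⟩
  · have hg : g ∈ Submodule.span ℝ (Set.range ![m, l, f]) := hspan ▸ Submodule.mem_top
    rw [Submodule.mem_span_range_iff_exists_fun] at hg
    obtain ⟨c, hc⟩ := hg
    refine ⟨c 0, c 2, c 1, ?_⟩
    rw [← hc]
    simp [Fin.sum_univ_three]
    abel

lemma vectorSpan_le_ker {F : Set E3} {h : StrongDual ℝ E3} {r : ℝ} (hF : ∀ x ∈ F, h x = r) :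
    vectorSpan ℝ F ≤ LinearMap.ker (h : E3 →ₗ[ℝ] ℝ) := by
  rw [vectorSpan_def, Submodule.span_le]
  rintro _ ⟨x, hx, y, hy, rfl⟩
  simp [hF x hx, hF y hy]

lemma finrank_ker_functional {h : StrongDual ℝ E3} (hh : h ≠ 0) :
    Module.finrank ℝ (LinearMap.ker (h : E3 →ₗ[ℝ] ℝ)) = 2 := by
  have h1 := Module.Dual.finrank_ker_add_one_of_ne_zero (f := (h : E3 →ₗ[ℝ] ℝ))
    (fun h0 => hh (ContinuousLinearMap.coe_injective h0))
  simp at h1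
  exact h1

lemma linearIndependent_pair_of_signs {a b : E3} {l f : StrongDual ℝ E3} (hfa : f a < 0)
    (hfb : f b < 0) (ha : 0 < l a) (hb : l b < 0) : LinearIndependent ℝ ![a, b] := by
  rw [LinearIndependent.pair_iff]
  intro s t hst
  have h1 := congrArg f hst
  have h2 := congrArg l hst
  simp only [map_add, map_smul, smul_eq_mul, map_zero] at h1 h2
  have h4 : 0 < f a * l b - f b * l a := by nlinarith [mul_pos_of_neg_of_neg hfa hb]
  have h5 : s * (f a * l b - f b * l a) = 0 := by linear_combination l b * h1 - f b * h2
  have h6 : s = 0 := by simpa [h4.ne'] using h5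
  subst h6
  exact ⟨rfl, by simpa [hb.ne] using h2⟩

/-- The set of maximisers of `h` on `P`. -/
def maxFace (P : Set E3) (h : StrongDual ℝ E3) : Set E3 := {x ∈ P | ∀ y ∈ P, h y ≤ h x}

lemma maxFace_smul {P : Set E3} {h : StrongDual ℝ E3} {r : ℝ} (hr : 0 < r) :
    maxFace P (r • h) = maxFace P h := by
  ext x
  simp [maxFace, hr]

/-- The two-dimensional faces through `v` on which `l` takes values on both sides of `l v`. -/
def straddlingFaces (P : Set E3) (l : StrongDual ℝ E3) (v : E3) : Set (Set E3) :=
  {F | (IsExposed ℝ P F ∧ Module.finrank ℝ (vectorSpan ℝ F) = 2) ∧ v ∈ F ∧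
    (∃ x ∈ F, l v < l x) ∧ ∃ x ∈ F, l x < l v}

section Polytope

variable {P : Set E3} {V : Finset E3}

lemma face_eq_convexHull (hP : P = convexHull ℝ V) (hV : (V : Set E3) = P.extremePoints ℝ)
    {F : Set E3} (hF : IsExposed ℝ P F) : F = convexHull ℝ (F ∩ V) := by
  have hPc : IsCompact P := hP ▸ V.finite_toSet.isCompact_convexHull (𝕜 := ℝ)
  have hPconv : Convex ℝ P := hP ▸ convex_convexHull ℝ _
  have h1 := closure_convexHull_extremePoints (hF.isCompact hPc) (hF.convex hPconv)
  rw [hF.isExtreme.extremePoints_eq, ← hV] at h1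
  have hfin : (F ∩ V : Set E3).Finite := V.finite_toSet.subset Set.inter_subset_right
  rw [(hfin.isClosed_convexHull (𝕜 := ℝ)).closure_eq] at h1
  exact h1.symm

lemma le_of_forall_vertex {W : Set E3} {h : StrongDual ℝ E3} {r : ℝ} (hW : ∀ x ∈ W, h x ≤ r)
    {x : E3} (hx : x ∈ convexHull ℝ W) : h x ≤ r :=
  convexHull_min (t := {x | h x ≤ r}) hW (convex_halfSpace_le h.isLinear r) hx

lemma vectorSpan_eq_top (hint : (interior P).Nonempty) : vectorSpan ℝ P = ⊤ := by
  have h1 := isOpen_interior.affineSpan_eq_top hint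
  have h2 : affineSpan ℝ P = ⊤ := by
    rw [eq_top_iff, ← h1]
    exact affineSpan_mono ℝ interior_subset
  rw [← direction_affineSpan, h2, AffineSubspace.direction_top]

lemma eq_zero_of_const (hint : (interior P).Nonempty) {h : StrongDual ℝ E3} {r : ℝ}
    (hc : ∀ x ∈ P, h x = r) : h = 0 := by
  have h1 := vectorSpan_le_ker hc
  rw [vectorSpan_eq_top hint, top_le_iff, LinearMap.ker_eq_top] at h1
  ext1 x
  exact congrArg (fun g : E3 →ₗ[ℝ] ℝ => g x) h1

lemma exists_strict_functional (hP : P = convexHull ℝ V)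
    (hV : (V : Set E3) = P.extremePoints ℝ) {v : E3} (hv : v ∈ V) :
    ∃ f : StrongDual ℝ E3, ∀ x ∈ V.erase v, f (x - v) < 0 := by
  have hPconv : Convex ℝ P := hP ▸ convex_convexHull ℝ _
  have hvext : v ∈ P.extremePoints ℝ := hV ▸ hv
  have hconv := (hPconv.mem_extremePoints_iff_convex_sdiff.mp hvext).2
  have hnot : v ∉ convexHull ℝ ((V.erase v : Finset E3) : Set E3) := by
    intro h
    refine (convexHull_min ?_ hconv h).2 rfl
    intro x hx
    simp only [Finset.coe_erase] at hx
    exact ⟨hP ▸ subset_convexHull ℝ _ hx.1, hx.2⟩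
  obtain ⟨f, u, hu, hu'⟩ := geometric_hahn_banach_closed_point (convex_convexHull ℝ _)
    ((V.erase v).finite_toSet.isClosed_convexHull (𝕜 := ℝ)) hnot
  refine ⟨f, fun x hx => ?_⟩
  have := hu x (subset_convexHull ℝ _ hx)
  rw [map_sub]
  linarith

lemma le_of_support (hP : P = convexHull ℝ V) {v : E3} {h : StrongDual ℝ E3}
    (hle : ∀ x ∈ V.erase v, h (x - v) ≤ 0) {y : E3} (hy : y ∈ P) : h y ≤ h v := by
  rw [hP] at hy
  refine le_of_forall_vertex (fun x hx => ?_) hy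
  rcases eq_or_ne x v with rfl | hxv
  · exact le_rfl
  · have := hle x (Finset.mem_erase.mpr ⟨hxv, hx⟩)
    rwa [map_sub, sub_nonpos] at this

lemma mem_maxFace_iff (hP : P = convexHull ℝ V) {v : E3} (hv : v ∈ V) {h : StrongDual ℝ E3}
    (hle : ∀ x ∈ V.erase v, h (x - v) ≤ 0) {x : E3} (hx : x ∈ P) :
    x ∈ maxFace P h ↔ h (x - v) = 0 := by
  have hvP : v ∈ P := hP ▸ subset_convexHull ℝ _ hv
  rw [map_sub, sub_eq_zero]
  exact ⟨fun h' => le_antisymm (le_of_support hP hle hx) (h'.2 v hvP),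
    fun h0 => ⟨hx, fun y hy => h0 ▸ le_of_support hP hle hy⟩⟩

/-- Straddling faces are the faces exposed by straddling supports. -/
lemma mem_straddlingFaces_iff (hP : P = convexHull ℝ V) (hV : (V : Set E3) = P.extremePoints ℝ)
    (hint : (interior P).Nonempty) {v : E3} (hv : v ∈ V) {l f : StrongDual ℝ E3}
    (hf : ∀ x ∈ V.erase v, f (x - v) < 0) {F : Set E3} :
    F ∈ straddlingFaces P l v ↔ ∃ h : StrongDual ℝ E3, h ≠ 0 ∧ F = maxFace P h ∧
      IsStraddlingSupport (V.erase v) (fun x => l (x - v)) (fun x => h (x - v)) := by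
  have hVP : ∀ x ∈ V, x ∈ P := fun x hx => hP ▸ subset_convexHull ℝ _ hx
  constructor
  · rintro ⟨⟨hexp, hrank⟩, hvF, hpos, hneg⟩
    obtain ⟨h, hh⟩ := hexp ⟨v, hvF⟩
    have hmax : ∀ x ∈ F, ∀ y ∈ P, h y ≤ h x := by
      intro x hx
      rw [hh] at hx
      exact hx.2
    have hFP : F ⊆ P := hexp.subset
    have hhull := face_eq_convexHull hP hV hexp
    have hconst : ∀ x ∈ F, h (x - v) = 0 := by
      intro x hx
      rw [map_sub, sub_eq_zero]
      exact le_antisymm (hmax v hvF x (hFP hx)) (hmax x hx v (hFP hvF))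
    refine ⟨h, ?_, hh, ?_, ?_, ?_⟩
    · rintro rfl
      have : F = P := by rw [hh]; simp
      rw [this, vectorSpan_eq_top hint, finrank_top] at hrank
      simp at hrank
    · intro x hx
      simp only [map_sub, sub_nonpos]
      exact hmax v hvF x (hVP x (Finset.mem_of_mem_erase hx))
    · by_contra! hcon
      obtain ⟨x, hx, hlx⟩ := hpos
      rw [hhull] at hx
      refine absurd (le_of_forall_vertex (h := l) (r := l v) ?_ hx) (not_le.mpr hlx)
      rintro y ⟨hyF, hyV⟩
      by_contra! hlt
      have hne : y ≠ v := by rintro rfl; exact lt_irrefl _ hlt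
      exact hcon y (Finset.mem_erase.mpr ⟨hne, hyV⟩) (by rw [map_sub]; linarith) (hconst y hyF)
    · by_contra! hcon
      obtain ⟨x, hx, hlx⟩ := hneg
      rw [hhull] at hx
      have : (-l) x ≤ - l v := by
        refine le_of_forall_vertex ?_ hx
        rintro y ⟨hyF, hyV⟩
        by_contra! hlt
        simp only [neg_apply, neg_lt_neg_iff] at hlt
        have hne : y ≠ v := by rintro rfl; exact lt_irrefl _ hlt
        exact hcon y (Finset.mem_erase.mpr ⟨hne, hyV⟩) (by rw [map_sub]; linarith) (hconst y hyF)
      simp only [neg_apply] at this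
      linarith
  · rintro ⟨h, hne, rfl, hle, ⟨s, hs, hs', hs0⟩, t, ht, ht', ht0⟩
    have hmem := fun x hx => mem_maxFace_iff hP hv hle (hVP x hx)
    have hvF := (hmem v hv).mpr (by simp)
    have hsF := (hmem s (Finset.mem_of_mem_erase hs)).mpr hs0
    have htF := (hmem t (Finset.mem_of_mem_erase ht)).mpr ht0
    refine ⟨⟨fun _ => ⟨h, rfl⟩, ?_⟩, hvF, ⟨s, hsF, ?_⟩, t, htF, ?_⟩
    · apply le_antisymm
      · rw [← finrank_ker_functional hne]
        apply Submodule.finrank_mono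
        apply vectorSpan_le_ker (r := h v)
        exact fun x hx => le_antisymm (hvF.2 x hx.1) (hx.2 v hvF.1)
      · have hli := linearIndependent_pair_of_signs (hf s hs) (hf t ht) hs' ht'
        have hc := finrank_span_eq_card hli
        rw [Fintype.card_fin] at hc
        refine hc.ge.trans ?_
        apply Submodule.finrank_mono
        rw [Submodule.span_le]
        rintro _ ⟨i, rfl⟩
        fin_cases i
        · exact vsub_mem_vectorSpan ℝ hsF hvF
        · exact vsub_mem_vectorSpan ℝ htF hvF
    · simpa using hs'
    · simpa using ht'

lemma ncard_straddlingFaces (hP : P = convexHull ℝ V) (hV : (V : Set E3) = P.extremePoints ℝ)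
    (hint : (interior P).Nonempty) {v : E3} (hv : v ∈ V) {l : StrongDual ℝ E3}
    (hl : ∀ x ∈ V.erase v, l (x - v) ≠ 0) (hpos : ∃ x ∈ V, l v < l x)
    (hneg : ∃ x ∈ V, l x < l v) : (straddlingFaces P l v).ncard = 2 := by
  obtain ⟨f, hf⟩ := exists_strict_functional hP hV hv
  have hpos' : ∃ x ∈ V.erase v, 0 < l (x - v) := by
    obtain ⟨x, hx, hlx⟩ := hpos
    refine ⟨x, Finset.mem_erase.mpr ⟨?_, hx⟩, by rw [map_sub]; linarith⟩
    rintro rfl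
    exact lt_irrefl _ hlx
  have hneg' : ∃ x ∈ V.erase v, l (x - v) < 0 := by
    obtain ⟨x, hx, hlx⟩ := hneg
    refine ⟨x, Finset.mem_erase.mpr ⟨?_, hx⟩, by rw [map_sub]; linarith⟩
    rintro rfl
    exact lt_irrefl _ hlx
  have hlf : LinearIndependent ℝ ![l, f] := by
    obtain ⟨s, hs, hs'⟩ := hpos'
    obtain ⟨t, ht, ht'⟩ := hneg'
    rw [LinearIndependent.pair_iff]
    intro a b hab
    have h1 := congrArg (fun g : StrongDual ℝ E3 => g (s - v)) hab
    have h2 := congrArg (fun g : StrongDual ℝ E3 => g (t - v)) hab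
    simp only [add_apply, smul_apply, smul_eq_mul,
      zero_apply] at h1 h2
    exact (eq_zero_of_vanish (f := fun x => f (x - v)) (l := fun x => l (x - v)) (hf s hs)
      (hf t ht) hs' ht' (by linarith) (by linarith)).symm
  obtain ⟨m, hm, hspan⟩ := exists_complement_functional hlf
  obtain ⟨ρ₁, τ₁, h₁⟩ := exists_isStraddlingSupport (fun x => m (x - v)) hl hf hpos' hneg'
  obtain ⟨ρ₂, τ₂, h₂⟩ := exists_isStraddlingSupport (fun x => (-m) (x - v)) hl hf hpos' hneg'
  have hne₁ : m + ρ₁ • f + τ₁ • l ≠ 0 := fun h => hm (-ρ₁) (-τ₁) (by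
    rw [← sub_eq_zero, ← h]; module)
  have hne₂ : -m + ρ₂ • f + τ₂ • l ≠ 0 := fun h => hm ρ₂ τ₂ (by
    rw [← sub_eq_zero, ← neg_eq_zero, ← h]; module)
  rw [Set.ncard_eq_two]
  refine ⟨maxFace P (m + ρ₁ • f + τ₁ • l), maxFace P (-m + ρ₂ • f + τ₂ • l), ?_, ?_⟩
  · intro heq
    obtain ⟨hle₁, ⟨s, hs, hs', hs0⟩, t, ht, ht', ht0⟩ := h₁
    have hvanish : ∀ x ∈ V.erase v, (m + ρ₁ • f + τ₁ • l) (x - v) = 0 →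
        (ρ₁ + ρ₂) * f (x - v) + (τ₁ + τ₂) * l (x - v) = 0 := by
      intro x hx h0
      have hxP : x ∈ P := hP ▸ subset_convexHull ℝ _ (Finset.mem_of_mem_erase hx)
      have h1 := (mem_maxFace_iff hP hv (h := m + ρ₁ • f + τ₁ • l) hle₁ hxP).mpr h0
      rw [heq] at h1
      have h2 := (mem_maxFace_iff hP hv (h := -m + ρ₂ • f + τ₂ • l) h₂.1 hxP).mp h1
      simp only [add_apply, smul_apply, neg_apply, smul_eq_mul] at h0 h2
      linarith
    obtain ⟨hρ, hτ⟩ := eq_zero_of_vanish (f := fun x => f (x - v)) (l := fun x => l (x - v))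
      (hf s hs) (hf t ht) hs' ht' (hvanish s hs hs0) (hvanish t ht ht0)
    have hopp : -m + ρ₂ • f + τ₂ • l = -(m + ρ₁ • f + τ₁ • l) := by
      rw [eq_neg_of_add_eq_zero_right hρ, eq_neg_of_add_eq_zero_right hτ]
      module
    refine hne₁ (eq_zero_of_const hint (r := (m + ρ₁ • f + τ₁ • l) v) fun x hx => ?_)
    have h1 := le_of_support hP (h := m + ρ₁ • f + τ₁ • l) hle₁ hx
    have h2 := le_of_support hP (h := -m + ρ₂ • f + τ₂ • l) h₂.1 hx
    rw [hopp, neg_apply, neg_apply, neg_le_neg_iff] at h2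
    exact le_antisymm h1 h2
  · ext F
    rw [mem_straddlingFaces_iff hP hV hint hv hf]
    constructor
    · rintro ⟨h, hne, rfl, hsup⟩
      obtain ⟨a, b, c, rfl⟩ := hspan h
      rcases lt_trichotomy a 0 with ha | rfl | ha
      · right
        have hr : 0 < (-a)⁻¹ := inv_pos.mpr (neg_pos.mpr ha)
        have heq : (-a)⁻¹ • (a • m + b • f + c • l) =
            -m + ((-a)⁻¹ * b) • f + ((-a)⁻¹ * c) • l := by
          rw [smul_add, smul_add, smul_smul, smul_smul, smul_smul, inv_neg, neg_mul,
            inv_mul_cancel₀ ha.ne]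
          module
        have h3 := hsup.const_mul hr
        have h4 : IsStraddlingSupport (V.erase v) (fun x => l (x - v)) (fun x =>
            (-m) (x - v) + ((-a)⁻¹ * b) * f (x - v) + ((-a)⁻¹ * c) * l (x - v)) := by
          convert h3 using 2 with x
          exact (congrArg (fun g : StrongDual ℝ E3 => g (x - v)) heq).symm
        obtain ⟨h5, h6⟩ := h4.unique hf h₂
        rw [Set.mem_singleton_iff, ← maxFace_smul hr, heq, h5, h6]
      · exfalso
        obtain ⟨-, ⟨s, hs, hs', hs0⟩, t, ht, ht', ht0⟩ := hsup
        simp only [add_apply, smul_apply, smul_eq_mul, zero_mul, zero_add] at hs0 ht0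
        obtain ⟨rfl, rfl⟩ := eq_zero_of_vanish (f := fun x => f (x - v))
          (l := fun x => l (x - v)) (hf s hs) (hf t ht) hs' ht' hs0 ht0
        exact hne (by simp)
      · left
        have hr : 0 < a⁻¹ := inv_pos.mpr ha
        have heq : a⁻¹ • (a • m + b • f + c • l) = m + (a⁻¹ * b) • f + (a⁻¹ * c) • l := by
          rw [smul_add, smul_add, smul_smul, smul_smul, smul_smul, inv_mul_cancel₀ ha.ne',
            one_smul]
        have h3 := hsup.const_mul hr
        have h4 : IsStraddlingSupport (V.erase v) (fun x => l (x - v)) (fun x =>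
            m (x - v) + (a⁻¹ * b) * f (x - v) + (a⁻¹ * c) * l (x - v)) := by
          convert h3 using 2 with x
          exact (congrArg (fun g : StrongDual ℝ E3 => g (x - v)) heq).symm
        obtain ⟨h5, h6⟩ := h4.unique hf h₁
        rw [← maxFace_smul hr, heq, h5, h6]
    · rintro (rfl | rfl)
      · exact ⟨_, hne₁, rfl, h₁⟩
      · exact ⟨_, hne₂, rfl, h₂⟩

lemma sum_ncard_straddlingFaces (hP : P = convexHull ℝ V)
    (hV : (V : Set E3) = P.extremePoints ℝ) (hint : (interior P).Nonempty)
    {l : StrongDual ℝ E3} (hl : Set.InjOn l V) :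
    ∑ v ∈ V, ((straddlingFaces P l v).ncard : ℝ) = 2 * ((V.card : ℝ) - 2) := by
  have hVne : V.Nonempty := by
    rw [← Finset.coe_nonempty, ← convexHull_nonempty_iff (𝕜 := ℝ), ← hP]
    exact hint.mono interior_subset
  obtain ⟨a, ha, hmax⟩ := V.exists_max_image l hVne
  obtain ⟨b, hb, hmin⟩ := V.exists_min_image l hVne
  have hab : a ≠ b := by
    rintro rfl
    have hsub : V.erase a = ∅ := by
      rw [Finset.erase_eq_empty_iff]
      right
      ext x
      rw [Finset.mem_singleton]
      exact ⟨fun hx => hl hx ha (le_antisymm (hmax x hx) (hmin x hx)), fun h => h ▸ ha⟩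
    have hzero : ∀ h : StrongDual ℝ E3, h = 0 := by
      intro h
      refine eq_zero_of_const hint (r := h a) fun x hx => ?_
      have h1 := le_of_support hP (h := h) (v := a) (by simp [hsub]) hx
      have h2 := le_of_support hP (h := -h) (v := a) (by simp [hsub]) hx
      rw [neg_apply, neg_apply, neg_le_neg_iff] at h2
      exact le_antisymm h1 h2
    have : Subsingleton (StrongDual ℝ E3) := ⟨fun x y => by rw [hzero x, hzero y]⟩
    have h3 := finrank_strongDual
    rw [Module.finrank_zero_of_subsingleton] at h3
    omega
  have hPmax : ∀ x ∈ P, l x ≤ l a := fun x hx => le_of_forall_vertex hmax (hP ▸ hx)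
  have hPmin : ∀ x ∈ P, l b ≤ l x := by
    intro x hx
    have := le_of_forall_vertex (h := -l) (r := -l b) (W := V)
      (fun y hy => neg_le_neg (hmin y hy)) (x := x) (hP ▸ hx)
    simpa using this
  have hzero : ∀ v ∈ V, v ∉ (V.erase a).erase b →
      ((straddlingFaces P l v).ncard : ℝ) = 0 := by
    intro v hv hv'
    have hemp : straddlingFaces P l v = ∅ := by
      rw [Set.eq_empty_iff_forall_notMem]
      rintro F ⟨⟨hF, -⟩, -, ⟨x, hx, hlx⟩, y, hy, hly⟩
      have hx' := hPmax x (hF.subset hx)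
      have hy' := hPmin y (hF.subset hy)
      simp only [Finset.mem_erase, hv, and_true, not_and_or, not_not] at hv'
      rcases hv' with rfl | rfl <;> linarith
    simp [hemp]
  have htwo : ∀ v ∈ (V.erase a).erase b, ((straddlingFaces P l v).ncard : ℝ) = 2 := by
    intro v hv
    simp only [Finset.mem_erase] at hv
    obtain ⟨hvb, hva, hv⟩ := hv
    rw [ncard_straddlingFaces hP hV hint hv]
    · norm_num
    · intro x hx
      rw [Finset.mem_erase] at hx
      rw [map_sub, sub_ne_zero]
      exact fun h => hx.1 (hl hx.2 hv h)
    · exact ⟨a, ha, lt_of_le_of_ne (hmax v hv) fun h => hva (hl hv ha h)⟩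
    · exact ⟨b, hb, lt_of_le_of_ne (hmin v hv) fun h => hvb (hl hb hv h).symm⟩
  rw [← Finset.sum_subset ((Finset.erase_subset _ _).trans (Finset.erase_subset _ _)) hzero,
    Finset.sum_congr rfl htwo, Finset.sum_const, nsmul_eq_mul]
  have hb' : b ∈ V.erase a := Finset.mem_erase.mpr ⟨hab.symm, hb⟩
  have h1 := Finset.card_erase_add_one ha
  have h2 := Finset.card_erase_add_one hb'
  have h3 : (V.card : ℝ) = ((V.erase a).erase b).card + 2 := by
    rw [← h1, ← h2]; push_cast; ring
  rw [h3]
  ring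

end Polytope

section Corner

variable {F : Set E3} {u v w : E3}

lemma exists_edge_functional (hv : v ∈ F) (huw : u ≠ w) (hwv : w ≠ v)
    (hu : IsExposed ℝ F (segment ℝ v u)) (hw : IsExposed ℝ F (segment ℝ v w)) :
    ∃ g : StrongDual ℝ E3, g (u - v) = 0 ∧ g (w - v) < 0 ∧ ∀ x ∈ F, g (x - v) ≤ 0 := by
  have huF : u ∈ F := hu.subset (right_mem_segment ℝ v u)
  have hwF : w ∈ F := hw.subset (right_mem_segment ℝ v w)
  have hwu : w ∉ segment ℝ v u := by
    intro hmem
    have hopen : w ∈ openSegment ℝ v u :=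
      mem_openSegment_of_ne_left_right hwv.symm huw hmem
    have h1 := hw.isExtreme.right_mem_of_mem_openSegment hv huF (right_mem_segment ℝ v w) hopen
    exact huw.symm ((wbtw_swap_right_iff ℝ v).mp
      ⟨mem_segment_iff_wbtw.mp hmem, mem_segment_iff_wbtw.mp h1⟩)
  obtain ⟨g, hg⟩ := hu ⟨v, left_mem_segment ℝ v u⟩
  have hgu := right_mem_segment ℝ v u
  have hgv := left_mem_segment ℝ v u
  rw [hg] at hgu hgv hwu
  refine ⟨g, ?_, ?_, fun x hx => ?_⟩
  · rw [map_sub, sub_eq_zero]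
    exact le_antisymm (hgv.2 u huF) (hgu.2 v hv)
  · rw [map_sub, sub_neg]
    refine lt_of_le_of_ne (hgv.2 w hwF) fun h => hwu ⟨hwF, fun y hy => ?_⟩
    rw [h]
    exact hgv.2 y hy
  · rw [map_sub, sub_nonpos]
    exact hgv.2 x hx

lemma right_ne_left_of_finrank_segment
    (h : Module.finrank ℝ (vectorSpan ℝ (segment ℝ v u)) = 1) : u ≠ v := by
  rintro rfl
  rw [segment_same, vectorSpan_singleton, finrank_bot] at h
  omega

/-- At a corner of a polygon the edges are independent, and a functional changes sign
between them exactly when it takes values on both sides of its value at the corner. -/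
lemma corner_properties (hF : Module.finrank ℝ (vectorSpan ℝ F) = 2) (hv : v ∈ F) (huw : u ≠ w)
    (hu : IsExposed ℝ F (segment ℝ v u))
    (hu1 : Module.finrank ℝ (vectorSpan ℝ (segment ℝ v u)) = 1)
    (hw : IsExposed ℝ F (segment ℝ v w))
    (hw1 : Module.finrank ℝ (vectorSpan ℝ (segment ℝ v w)) = 1) :
    LinearIndependent ℝ ![u - v, w - v] ∧ ∀ l : StrongDual ℝ E3,
      l (u - v) * l (w - v) < 0 ↔ (∃ x ∈ F, l v < l x) ∧ ∃ x ∈ F, l x < l v := by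
  have huF : u ∈ F := hu.subset (right_mem_segment ℝ v u)
  have hwF : w ∈ F := hw.subset (right_mem_segment ℝ v w)
  obtain ⟨g, hgu, hgw, hg⟩ :=
    exists_edge_functional hv huw (right_ne_left_of_finrank_segment hw1) hu hw
  obtain ⟨k, hkw, hku, hk⟩ :=
    exists_edge_functional hv huw.symm (right_ne_left_of_finrank_segment hu1) hw hu
  have hli : LinearIndependent ℝ ![u - v, w - v] := by
    rw [LinearIndependent.pair_iff]
    intro s t hst
    have h1 := congrArg g hst
    have h2 := congrArg k hst
    rw [map_add, map_smul, map_smul, hgu, map_zero, smul_zero, zero_add, smul_eq_mul] at h1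
    rw [map_add, map_smul, map_smul, hkw, map_zero, smul_zero, add_zero, smul_eq_mul] at h2
    exact ⟨(mul_eq_zero.mp h2).resolve_right hku.ne, (mul_eq_zero.mp h1).resolve_right hgw.ne⟩
  refine ⟨hli, fun l => ?_⟩
  have hspan : Submodule.span ℝ (Set.range ![u - v, w - v]) = vectorSpan ℝ F := by
    apply Submodule.eq_of_le_of_finrank_eq
    · rw [Submodule.span_le]
      rintro _ ⟨i, rfl⟩
      fin_cases i
      · exact vsub_mem_vectorSpan ℝ huF hv
      · exact vsub_mem_vectorSpan ℝ hwF hv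
    · rw [finrank_span_eq_card hli, hF]
      simp
  have hcone : ∀ x ∈ F, ∃ α β : ℝ, 0 ≤ α ∧ 0 ≤ β ∧
      l x - l v = α * l (u - v) + β * l (w - v) := by
    intro x hx
    have hmem : x - v ∈ vectorSpan ℝ F := vsub_mem_vectorSpan ℝ hx hv
    rw [← hspan, Submodule.mem_span_range_iff_exists_fun] at hmem
    obtain ⟨c, hc⟩ := hmem
    simp only [Fin.sum_univ_two, Matrix.cons_val_zero, Matrix.cons_val_one] at hc
    have h1 := hg x hx
    have h2 := hk x hx
    rw [← hc, map_add, map_smul, map_smul, hgu, smul_zero, zero_add, smul_eq_mul] at h1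
    rw [← hc, map_add, map_smul, map_smul, hkw, smul_zero, add_zero, smul_eq_mul] at h2
    refine ⟨c 0, c 1, ?_, ?_, ?_⟩
    · by_contra! h; nlinarith
    · by_contra! h; nlinarith
    · rw [← map_sub, ← hc]; simp
  constructor
  · intro h
    have hsu : l (u - v) = l u - l v := map_sub _ _ _
    have hsw : l (w - v) = l w - l v := map_sub _ _ _
    rcases mul_neg_iff.mp h with ⟨h1, h2⟩ | ⟨h1, h2⟩
    · exact ⟨⟨u, huF, by linarith⟩, w, hwF, by linarith⟩
    · exact ⟨⟨w, hwF, by linarith⟩, u, huF, by linarith⟩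
  · rintro ⟨⟨x, hx, hlx⟩, y, hy, hly⟩
    obtain ⟨α, β, hα, hβ, hαβ⟩ := hcone x hx
    obtain ⟨α', β', hα', hβ', hαβ'⟩ := hcone y hy
    by_contra! h
    rcases mul_nonneg_iff.mp h with ⟨h1, h2⟩ | ⟨h1, h2⟩
    · nlinarith [mul_nonneg hα' h1, mul_nonneg hβ' h2]
    · nlinarith [mul_nonneg hα (neg_nonneg.mpr h1), mul_nonneg hβ (neg_nonneg.mpr h2)]

end Corner

/-- The vectors whose inner product takes values on `F` on both sides of its value at `v`. -/
def straddlingVectors (F : Set E3) (v : E3) : Set E3 :=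
  {x | (∃ y ∈ F, innerSL ℝ x v < innerSL ℝ x y) ∧ ∃ y ∈ F, innerSL ℝ x y < innerSL ℝ x v}

lemma finite_twoFaces {P : Set E3} {V : Finset E3} (hP : P = convexHull ℝ V)
    (hV : (V : Set E3) = P.extremePoints ℝ) :
    {F : Set E3 | IsExposed ℝ P F ∧ Module.finrank ℝ (vectorSpan ℝ F) = 2}.Finite := by
  refine (V.finite_toSet.finite_subsets.image (convexHull ℝ)).subset ?_
  rintro F ⟨hF, -⟩
  exact ⟨F ∩ V, Set.inter_subset_right, (face_eq_convexHull hP hV hF).symm⟩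

lemma ae_injOn_inner (V : Finset E3) :
    ∀ᵐ x ∂ballMeasure, Set.InjOn (innerSL ℝ x) (V : Set E3) := by
  have h : ∀ p ∈ V ×ˢ V, ∀ᵐ x ∂ballMeasure, p.1 ≠ p.2 → inner ℝ x (p.1 - p.2) ≠ 0 := by
    intro p _
    by_cases hp : p.1 = p.2
    · simp [hp]
    · filter_upwards [ae_inner_ne_zero (sub_ne_zero.mpr hp)] with x hx _ using hx
  rw [← Finset.eventually_all] at h
  filter_upwards [h] with x hx a ha b hb hab
  by_contra hne
  refine hx (a, b) (Finset.mk_mem_product ha hb) hne ?_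
  rw [inner_sub_right, sub_eq_zero]
  exact hab

/-- **Descartes' theorem.** For a convex polyhedron in `ℝ³`, the sum over all
two-dimensional faces `F` and over all vertices `v` of `F` of the interior angle of `F`
at `v` (the angle `∠ u v w` between the two neighbours `u`, `w` of `v` along the edges of
the polygon `F`) equals `2π (n₀ - 2)`, where `n₀` is the number of vertices of the
polyhedron.  (Taking as unit the right angle `π/2`, this sum is `4 (n₀ - 2)`.) -/
theorem descartes_total_angle
    (P : Set (EuclideanSpace ℝ (Fin 3)))
    (hconv : Convex ℝ P)
    (hcompact : IsCompact P)
    (hpoly : ∃ S : Finset (EuclideanSpace ℝ (Fin 3)),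
      P = convexHull ℝ (S : Set (EuclideanSpace ℝ (Fin 3))))
    (hfulldim : (interior P).Nonempty)
    (A : Set (EuclideanSpace ℝ (Fin 3)) → EuclideanSpace ℝ (Fin 3) → ℝ)
    (hA : ∀ F : Set (EuclideanSpace ℝ (Fin 3)), IsExposed ℝ P F →
      Module.finrank ℝ ↥(vectorSpan ℝ F) = 2 →
      ∀ v ∈ F.extremePoints ℝ, ∃ u w : EuclideanSpace ℝ (Fin 3), u ≠ w ∧
        IsExposed ℝ F (segment ℝ v u) ∧
        Module.finrank ℝ ↥(vectorSpan ℝ (segment ℝ v u)) = 1 ∧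
        IsExposed ℝ F (segment ℝ v w) ∧
        Module.finrank ℝ ↥(vectorSpan ℝ (segment ℝ v w)) = 1 ∧
        A F v = EuclideanGeometry.angle u v w) :
    (∑ᶠ (F : Set (EuclideanSpace ℝ (Fin 3)))
        (_ : IsExposed ℝ P F ∧ Module.finrank ℝ ↥(vectorSpan ℝ F) = 2),
      ∑ᶠ (v : EuclideanSpace ℝ (Fin 3)) (_ : v ∈ F.extremePoints ℝ), A F v)
      = 2 * Real.pi * (((P.extremePoints ℝ).ncard : ℝ) - 2) := by
  classical
  obtain ⟨V, hV⟩ : ∃ V : Finset E3, (V : Set E3) = P.extremePoints ℝ := by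
    obtain ⟨S, rfl⟩ := hpoly
    exact ((S.finite_toSet.subset extremePoints_convexHull_subset).exists_finset_coe)
  have hP : P = convexHull ℝ V := by
    have h1 := closure_convexHull_extremePoints hcompact hconv
    rw [← hV, (V.finite_toSet.isClosed_convexHull (𝕜 := ℝ)).closure_eq] at h1
    exact h1.symm
  set faces := (finite_twoFaces hP hV).toFinset with hfaces
  have hmem : ∀ F, F ∈ faces ↔
      IsExposed ℝ P F ∧ Module.finrank ℝ (vectorSpan ℝ F) = 2 := by
    intro F
    rw [hfaces, Set.Finite.mem_toFinset]
    rfl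
  have hext : ∀ F ∈ faces, ∀ v, v ∈ F.extremePoints ℝ ↔ v ∈ V.filter (· ∈ F) := by
    intro F hF v
    rw [((hmem F).mp hF).1.isExtreme.extremePoints_eq, ← hV, Finset.mem_filter, Set.mem_inter_iff,
      Finset.mem_coe, and_comm]
  set M := ballMeasure.real Set.univ with hM
  have hM0 : 0 < M := ballMeasure_real_univ_pos
  have hcorner : ∀ F ∈ faces, ∀ v ∈ V.filter (· ∈ F), MeasurableSet (straddlingVectors F v) ∧
      A F v = π / M * ballMeasure.real (straddlingVectors F v) := by
    intro F hF v hv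
    obtain ⟨hF1, hF2⟩ := (hmem F).mp hF
    obtain ⟨u, w, huw, hu, hu1, hw, hw1, hAv⟩ := hA F hF1 hF2 v ((hext F hF v).mpr hv)
    obtain ⟨hli, hiff⟩ := corner_properties hF2 (Finset.mem_filter.mp hv).2 huw hu hu1 hw hw1
    have heq : straddlingVectors F v = signChange (u - v) (w - v) := by
      ext x
      exact (hiff (innerSL ℝ x)).symm
    rw [heq]
    refine ⟨measurableSet_signChange _ _, ?_⟩
    rw [ballMeasure_signChange hli, hAv, EuclideanGeometry.angle, vsub_eq_sub, vsub_eq_sub, ← hM]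
    field_simp
  have hsum : ∑ F ∈ faces, ∑ v ∈ V.filter (· ∈ F), ballMeasure.real (straddlingVectors F v) =
      2 * ((V.card : ℝ) - 2) * M := by
    have hint : ∀ F ∈ faces, ∀ v ∈ V.filter (· ∈ F),
        Integrable ((straddlingVectors F v).indicator (1 : E3 → ℝ)) ballMeasure :=
      fun F hF v hv => (integrable_const (1 : ℝ)).indicator (hcorner F hF v hv).1
    have hint_eq : ∑ F ∈ faces, ∑ v ∈ V.filter (· ∈ F),
        ballMeasure.real (straddlingVectors F v) =
        ∫ x, ∑ F ∈ faces, ∑ v ∈ V.filter (· ∈ F),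
          (straddlingVectors F v).indicator (1 : E3 → ℝ) x ∂ballMeasure := by
      rw [integral_finsetSum _ fun F hF => integrable_finsetSum _ (hint F hF)]
      refine Finset.sum_congr rfl fun F hF => ?_
      rw [integral_finsetSum _ (hint F hF)]
      exact Finset.sum_congr rfl fun v hv => (integral_indicator_one (hcorner F hF v hv).1).symm
    rw [hint_eq]
    have hae : ∀ᵐ x ∂ballMeasure, ∑ F ∈ faces, ∑ v ∈ V.filter (· ∈ F),
        (straddlingVectors F v).indicator (1 : E3 → ℝ) x = 2 * ((V.card : ℝ) - 2) := by
      filter_upwards [ae_injOn_inner V] with x hx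
      rw [← sum_ncard_straddlingFaces hP hV hfulldim hx]
      simp only [Finset.sum_filter]
      rw [Finset.sum_comm]
      refine Finset.sum_congr rfl fun v _ => ?_
      have hset : straddlingFaces P (innerSL ℝ x) v =
          (faces.filter fun F => v ∈ F ∧ x ∈ straddlingVectors F v : Finset (Set E3)) := by
        ext F
        rw [Finset.mem_coe, Finset.mem_filter, hmem]
        rfl
      rw [hset, Set.ncard_coe_finset, Finset.card_filter, Nat.cast_sum]
      refine Finset.sum_congr rfl fun F _ => ?_
      by_cases h1 : v ∈ F <;> by_cases h2 : x ∈ straddlingVectors F v <;> simp [h1, h2]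
    rw [integral_congr_ae hae, integral_const, smul_eq_mul, mul_comm]
  rw [finsum_cond_eq_sum_of_cond_iff _ fun {F} _ => (hmem F).symm, ← hV, Set.ncard_coe_finset]
  calc ∑ F ∈ faces, ∑ᶠ (v : E3) (_ : v ∈ F.extremePoints ℝ), A F v
      = ∑ F ∈ faces, ∑ v ∈ V.filter (· ∈ F),
          π / M * ballMeasure.real (straddlingVectors F v) := by
        refine Finset.sum_congr rfl fun F hF => ?_
        rw [finsum_cond_eq_sum_of_cond_iff _ fun {v} _ => hext F hF v]
        exact Finset.sum_congr rfl fun v hv => (hcorner F hF v hv).2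
    _ = π / M * (2 * ((V.card : ℝ) - 2) * M) := by
        rw [← hsum, Finset.mul_sum]
        exact Finset.sum_congr rfl fun F _ => (Finset.mul_sum _ _ _).symm
    _ = 2 * π * ((V.card : ℝ) - 2) := by
        field_simp
end

section
/- Let K be a finite triangulated polygon in R^2 homeomorphic to a disc, with possible identifications of simplices on its boundary K0. Then the alternating sum of simplex counts satisfies χ(K) = χ(K0) + 1, where χ denotes n0 - n1 + n2 computed after boundary identifications. -/
/-- A finite abstract simplicial complex with vertices among `Fin n`. -/
structure SComplex where
  n : ℕ
  faces : Finset (Finset (Fin n))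
  not_empty_mem : ∅ ∉ faces
  down_closed : ∀ s ∈ faces, ∀ t ⊆ s, t ≠ ∅ → t ∈ faces

namespace SComplex

/-- The number of `i`-dimensional simplices (`i`-simplices have `i + 1` vertices). -/
def count (K : SComplex) (i : ℕ) : ℕ :=
  (K.faces.filter fun s => s.card = i + 1).card

/-- The alternating sum `n₀ - n₁ + n₂`. -/
def eulerSum (K : SComplex) : ℤ :=
  (K.count 0 : ℤ) - K.count 1 + K.count 2

/-- The complex has dimension at most `2`. -/
def IsTwoDimensional (K : SComplex) : Prop :=
  ∀ s ∈ K.faces, s.card ≤ 3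

/-- The geometric realization of an abstract simplicial complex, topologized as a
subspace of `Fin K.n → ℝ`. -/
abbrev realization (K : SComplex) : Type :=
  {f : Fin K.n → ℝ //
    (∀ v, 0 ≤ f v) ∧ (∑ v, f v = 1) ∧ ∃ s ∈ K.faces, ∀ v, f v ≠ 0 → v ∈ s}

end SComplex

/-- The number of `i`-dimensional simplices of a family `S` of simplices, counted after
applying the vertex-identification map `π` (identified simplices are counted once). -/
def identCount {n m : ℕ} (S : Finset (Finset (Fin n))) (π : Fin n → Fin m) (i : ℕ) : ℕ :=
  ((S.filter fun s => s.card = i + 1).image fun s => s.image π).card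

open Set Filter Topology

section ContinuousLogarithm

variable {Y : Type*} [TopologicalSpace Y]

/-- The function `φ` admits a continuous logarithm on the set `S`. -/
def HasLogOn (φ : Y → ℂ) (S : Set Y) : Prop :=
  ∃ F : Y → ℂ, ContinuousOn F S ∧ ∀ y ∈ S, Complex.exp (F y) = φ y

theorem HasLogOn.mono {φ : Y → ℂ} {S T : Set Y} (h : HasLogOn φ S) (hT : T ⊆ S) :
    HasLogOn φ T := by
  obtain ⟨F, hF, hexp⟩ := h
  exact ⟨F, hF.mono hT, fun y hy => hexp y (hT hy)⟩

theorem HasLogOn.congr {φ ψ : Y → ℂ} {S : Set Y} (h : HasLogOn φ S) (he : ∀ y ∈ S, φ y = ψ y) :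
    HasLogOn ψ S := by
  obtain ⟨F, hF, hexp⟩ := h
  exact ⟨F, hF, fun y hy => (hexp y hy).trans (he y hy)⟩

theorem HasLogOn.of_norm_sub_lt {φ ψ : Y → ℂ} {S : Set Y} (h : HasLogOn φ S)
    (hφ : ContinuousOn φ S) (hψ : ContinuousOn ψ S) (hlt : ∀ y ∈ S, ‖ψ y - φ y‖ < ‖φ y‖) :
    HasLogOn ψ S := by
  obtain ⟨F, hF, hexp⟩ := h
  have hne : ∀ y ∈ S, φ y ≠ 0 := fun y hy h0 => by
    have := hlt y hy
    rw [h0, norm_zero] at this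
    exact absurd this (not_lt.2 (norm_nonneg _))
  have hslit : ∀ y ∈ S, ψ y / φ y ∈ Complex.slitPlane := fun y hy => by
    have h1 : ‖(ψ y - φ y) / φ y‖ < 1 := by
      rw [norm_div, div_lt_one (norm_pos_iff.2 (hne y hy))]
      exact hlt y hy
    have h2 := Complex.mem_slitPlane_of_norm_lt_one h1
    rwa [sub_div, div_self (hne y hy), add_sub_cancel] at h2
  refine ⟨fun y => F y + Complex.log (ψ y / φ y),
    hF.add ((hψ.div hφ hne).clog hslit), fun y hy => ?_⟩
  rw [Complex.exp_add, hexp y hy, Complex.exp_log (Complex.slitPlane_ne_zero (hslit y hy)),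
    mul_div_cancel₀ _ (hne y hy)]

/-- Homotopy invariance of the existence of a continuous logarithm on a compact set. -/
theorem HasLogOn.of_homotopy {P : Type*} [TopologicalSpace P] {S : Set Y} (hS : IsCompact S)
    {T : Set P} (hT : IsPreconnected T) {φ : P → Y → ℂ} (hφ : Continuous (Function.uncurry φ))
    (hne : ∀ t ∈ T, ∀ y ∈ S, φ t y ≠ 0) {t₀ t₁ : P} (h₀ : t₀ ∈ T) (h₁ : t₁ ∈ T)
    (h : HasLogOn (φ t₀) S) : HasLogOn (φ t₁) S := by
  have hcont : ∀ t, Continuous (φ t) := fun t => hφ.comp (Continuous.prodMk_right t)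
  refine hT.induction₂' (fun a b => HasLogOn (φ a) S → HasLogOn (φ b) S) (fun a ha => ?_)
    (fun a b c _ _ _ hab hbc => hbc ∘ hab) h₀ h₁ h
  have hev : ∀ᶠ b in 𝓝 a, ∀ y ∈ S, ‖φ b y - φ a y‖ < ‖φ a y‖ ∧ ‖φ a y - φ b y‖ < ‖φ b y‖ := by
    refine hS.eventually_forall_of_forall_eventually fun y hy => ?_
    have hpos : 0 < ‖φ a y‖ := norm_pos_iff.2 (hne a ha y hy)
    have hc : Continuous fun z : P × Y => φ z.1 z.2 := hφ
    have hca : Continuous fun z : P × Y => φ a z.2 := (hcont a).comp continuous_snd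
    have e1 : ∀ᶠ z : P × Y in 𝓝 (a, y), ‖φ z.1 z.2 - φ a z.2‖ < ‖φ a z.2‖ :=
      (hc.sub hca).norm.continuousAt.eventually_lt hca.norm.continuousAt (by simpa using hpos)
    have e2 : ∀ᶠ z : P × Y in 𝓝 (a, y), ‖φ a z.2 - φ z.1 z.2‖ < ‖φ z.1 z.2‖ :=
      (hca.sub hc).norm.continuousAt.eventually_lt hc.norm.continuousAt (by simpa using hpos)
    exact e1.and e2
  filter_upwards [nhdsWithin_le_nhds hev] with b hb
  exact ⟨fun h => h.of_norm_sub_lt (hcont a).continuousOn (hcont b).continuousOn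
      fun y hy => (hb y hy).1,
    fun h => h.of_norm_sub_lt (hcont b).continuousOn (hcont a).continuousOn
      fun y hy => (hb y hy).2⟩

theorem IsPreconnected.eq_of_exp_eq_one {S : Set Y} (hS : IsPreconnected S) {G : Y → ℂ}
    (hG : ContinuousOn G S) (hexp : ∀ y ∈ S, Complex.exp (G y) = 1) {x y : Y} (hx : x ∈ S)
    (hy : y ∈ S) : G x = G y := by
  refine hS.induction₂ (fun a b => G a = G b) (fun a ha => ?_)
    (fun a b c _ _ _ hab hbc => hab.trans hbc) (fun a b _ _ h => h.symm) hx hy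
  have hev : ∀ᶠ b in 𝓝[S] a, ‖G b - G a‖ < 1 := by
    have := (hG a ha).eventually (Metric.ball_mem_nhds (G a) one_pos)
    simpa [dist_eq_norm] using this
  filter_upwards [hev, self_mem_nhdsWithin] with b hb hbS
  have h1 : Complex.exp (G b - G a) = 1 := by
    rw [Complex.exp_sub, hexp b hbS, hexp a ha, div_one]
  obtain ⟨n, hn⟩ := Complex.exp_eq_one_iff.1 h1
  rw [hn] at hb
  have hn0 : n = 0 := by
    by_contra hn0
    have h2 : (1 : ℝ) ≤ |(n : ℝ)| := by exact_mod_cast Int.one_le_abs hn0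
    have h3 : ‖(n : ℂ) * (2 * Real.pi * Complex.I)‖ = |(n : ℝ)| * (2 * Real.pi) := by
      simp [abs_of_pos Real.pi_pos]
    rw [h3] at hb
    nlinarith [Real.pi_gt_three]
  rw [hn0] at hn
  simp only [Int.cast_zero, zero_mul] at hn
  exact (sub_eq_zero.1 hn).symm

/-- Two continuous logarithms of a function on a preconnected set have the same increments. -/
theorem IsPreconnected.sub_eq_sub_of_exp_eq {S : Set Y} (hS : IsPreconnected S) {F G : Y → ℂ}
    (hF : ContinuousOn F S) (hG : ContinuousOn G S)
    (hexp : ∀ y ∈ S, Complex.exp (F y) = Complex.exp (G y)) {x y : Y} (hx : x ∈ S)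
    (hy : y ∈ S) : F y - F x = G y - G x := by
  have h := hS.eq_of_exp_eq_one (G := fun y => F y - G y) (hF.sub hG) (fun y hy => by
    rw [Complex.exp_sub, hexp y hy, div_self (Complex.exp_ne_zero _)]) hx hy
  linear_combination -h

theorem HasLogOn.union {φ : Y → ℂ} {A B : Set Y} (hA : IsClosed A) (hB : IsClosed B)
    {F G : Y → ℂ} (hF : ContinuousOn F A) (hFexp : ∀ y ∈ A, Complex.exp (F y) = φ y)
    (hG : ContinuousOn G B) (hGexp : ∀ y ∈ B, Complex.exp (G y) = φ y)
    (heq : ∀ y ∈ A ∩ B, F y = G y) :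
    ∃ H : Y → ℂ, ContinuousOn H (A ∪ B) ∧ (∀ y ∈ A ∪ B, Complex.exp (H y) = φ y) ∧
      (∀ y ∈ A, H y = F y) ∧ ∀ y ∈ B, H y = G y := by
  classical
  have hHA : ∀ y ∈ A, A.piecewise F G y = F y := fun y hy => piecewise_eq_of_mem _ _ _ hy
  have hHB : ∀ y ∈ B, A.piecewise F G y = G y := fun y hy => by
    by_cases hyA : y ∈ A
    · rw [hHA y hyA, heq y ⟨hyA, hy⟩]
    · exact piecewise_eq_of_notMem _ _ _ hyA
  refine ⟨A.piecewise F G, (hF.congr hHA).union_of_isClosed (hG.congr hHB) hA hB, ?_, hHA, hHB⟩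
  rintro y (hy | hy)
  · rw [hHA y hy, hFexp y hy]
  · rw [hHB y hy, hGexp y hy]

theorem HasLogOn.union_of_isPreconnected {φ : Y → ℂ} {A B : Set Y} (hA : IsClosed A)
    (hB : IsClosed B) (hφA : HasLogOn φ A) (hφB : HasLogOn φ B) (hAB : IsPreconnected (A ∩ B))
    (hne : (A ∩ B).Nonempty) : HasLogOn φ (A ∪ B) := by
  obtain ⟨F, hF, hFexp⟩ := hφA
  obtain ⟨G, hG, hGexp⟩ := hφB
  obtain ⟨x, hx⟩ := hne
  obtain ⟨H, hH, hHexp, -⟩ := HasLogOn.union hA hB hF hFexp (G := fun y => G y + (F x - G x))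
    (hG.add continuousOn_const) (fun y hy => by
      rw [Complex.exp_add, Complex.exp_sub, hFexp x hx.1, hGexp x hx.2, hGexp y hy, div_self,
        mul_one]
      rw [← hFexp x hx.1]
      exact Complex.exp_ne_zero _) (fun y hy => by
      have := hAB.sub_eq_sub_of_exp_eq (hF.mono inter_subset_left) (hG.mono inter_subset_right)
        (fun z hz => (hFexp z hz.1).trans (hGexp z hz.2).symm) hx hy
      linear_combination this)
  exact ⟨H, hH, hHexp⟩

theorem ContinuousOn.exists_continuous_eqOn.{u, v} {X : Type u} {Z : Type v}
    [TopologicalSpace X] [NormalSpace X] [TopologicalSpace Z] [TietzeExtension.{u, v} Z]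
    {f : X → Z} {S : Set X} (hS : IsClosed S)
    (hf : ContinuousOn f S) : ∃ g : X → Z, Continuous g ∧ ∀ x ∈ S, g x = f x := by
  obtain ⟨g, hg⟩ := ContinuousMap.exists_restrict_eq hS ⟨S.domRestrict f, hf.domRestrict⟩
  exact ⟨g, g.continuous, fun x hx => congrArg (fun F : C(S, Z) => F ⟨x, hx⟩) hg⟩

theorem HasLogOn.of_convex {E : Type*} [NormedAddCommGroup E] [NormedSpace ℝ E] {S : Set E}
    (hconv : Convex ℝ S) (hS : IsCompact S) {φ : E → ℂ} (hφ : ContinuousOn φ S)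
    (hne : ∀ y ∈ S, φ y ≠ 0) : HasLogOn φ S := by
  rcases S.eq_empty_or_nonempty with rfl | ⟨x, hx⟩
  · exact ⟨0, continuousOn_empty _, fun y hy => hy.elim⟩
  obtain ⟨ψ, hψ, hψφ⟩ := hφ.exists_continuous_eqOn hS.isClosed
  have hmem : ∀ t ∈ Icc (0 : ℝ) 1, ∀ y ∈ S, x + t • (y - x) ∈ S := fun t ht y hy =>
    hconv.add_smul_sub_mem hx hy ht
  have h := HasLogOn.of_homotopy (φ := fun (t : ℝ) y => ψ (x + t • (y - x))) (t₀ := 0) (t₁ := 1)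
    hS (isPreconnected_Icc (a := (0 : ℝ)) (b := 1))
    (hψ.comp (by fun_prop))
    (fun t ht y hy => by
      rw [hψφ _ (hmem t ht y hy)]
      exact hne _ (hmem t ht y hy)) (by simp) (by simp)
    ⟨fun _ => Complex.log (ψ x), continuousOn_const, fun y hy => by
      simp only [zero_smul, add_zero]
      exact Complex.exp_log (by rw [hψφ x hx]; exact hne x hx)⟩
  exact h.congr fun y hy => by simpa using hψφ y hy

theorem not_hasLogOn_sphere : ¬ HasLogOn (fun z : ℂ => z) (Metric.sphere 0 1) := by
  rintro ⟨F, hF, hexp⟩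
  have hmem : ∀ θ : ℝ, Complex.exp (θ * Complex.I) ∈ Metric.sphere (0 : ℂ) 1 := fun θ => by
    simp [Complex.norm_exp_ofReal_mul_I]
  have hc : Continuous fun θ : ℝ => F (Complex.exp (θ * Complex.I)) :=
    hF.comp_continuous (by fun_prop) hmem
  have h := isPreconnected_univ.sub_eq_sub_of_exp_eq (x := (0 : ℝ)) (y := 2 * Real.pi)
    (F := fun θ : ℝ => F (Complex.exp (θ * Complex.I))) (G := fun θ : ℝ => θ * Complex.I)
    hc.continuousOn (by fun_prop) (fun θ _ => hexp _ (hmem θ)) (mem_univ _) (mem_univ _)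
  simp [Complex.exp_two_pi_mul_I, Real.pi_ne_zero] at h

theorem not_hasLogOn_sphere_sub {q : ℂ} (hq : ‖q‖ < 1) :
    ¬ HasLogOn (fun z : ℂ => z - q) (Metric.sphere 0 1) := fun h => by
  refine not_hasLogOn_sphere ((HasLogOn.of_homotopy (φ := fun (t : ℂ) z => z - t) (t₀ := q)
    (t₁ := 0) (isCompact_sphere _ _) (convex_ball (0 : ℂ) 1).isPreconnected (by fun_prop)
    (fun t ht z hz h0 => ?_) (by simpa using hq) (by simp) h).congr (by simp))
  rw [sub_eq_zero.1 h0] at hz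
  simp only [mem_sphere_iff_norm, mem_ball_iff_norm, sub_zero] at hz ht
  exact ht.ne hz

theorem isPreconnected_closedBall_diff_singleton (q : ℂ) :
    IsPreconnected (Metric.closedBall (0 : ℂ) 1 \ {q}) := by
  have hball : IsPreconnected (Metric.ball (0 : ℂ) 1 \ {q}) := by
    by_cases hq : q ∈ Metric.ball (0 : ℂ) 1
    · have h := (isConnected_compl_singleton_of_one_lt_rank (by simp [Complex.rank_real_complex])
        ((Homeomorph.unitBall (E := ℂ)).symm ⟨q, hq⟩)).isPreconnected
      convert h.image (fun z => ((Homeomorph.unitBall z : Metric.ball (0 : ℂ) 1) : ℂ))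
        (by fun_prop) using 1
      ext z
      simp only [Set.mem_sdiff, mem_singleton_iff, mem_image, mem_compl_iff]
      constructor
      · rintro ⟨hz, hzq⟩
        exact ⟨Homeomorph.unitBall.symm ⟨z, hz⟩, fun h => hzq (by simpa using h), by simp⟩
      · rintro ⟨w, hw, rfl⟩
        refine ⟨Subtype.coe_prop _, fun h => hw ?_⟩
        rw [Homeomorph.eq_symm_apply]
        exact Subtype.ext h
    · rw [sdiff_singleton_eq_self hq]
      exact (convex_ball (0 : ℂ) 1).isPreconnected
  refine hball.subset_closure (sdiff_subset_sdiff_left Metric.ball_subset_closedBall) ?_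
  have hd : Metric.ball (0 : ℂ) 1 \ {q} = {q}ᶜ ∩ Metric.ball 0 1 := by
    rw [Set.sdiff_eq, inter_comm]
  rintro z ⟨hz, hzq⟩
  rw [← closure_ball (0 : ℂ) one_ne_zero] at hz
  rw [hd]
  exact isOpen_compl_singleton.inter_closure ⟨hzq, hz⟩

end ContinuousLogarithm

section Disc

/-- Continuous maps `h : E → ℂ` and `k : ℂ → E` which restrict to mutually inverse
homeomorphisms between `R` and the closed unit disc. -/
structure IsDiscParam {E : Type*} [TopologicalSpace E] (R : Set E) (h : E → ℂ) (k : ℂ → E) :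
    Prop where
  continuous_h : Continuous h
  continuous_k : Continuous k
  mapsTo_h : ∀ x ∈ R, h x ∈ Metric.closedBall (0 : ℂ) 1
  mapsTo_k : ∀ z ∈ Metric.closedBall (0 : ℂ) 1, k z ∈ R
  left_inv : ∀ x ∈ R, k (h x) = x
  right_inv : ∀ z ∈ Metric.closedBall (0 : ℂ) 1, h (k z) = z

namespace IsDiscParam

variable {E : Type*} [TopologicalSpace E] {R : Set E} {h : E → ℂ} {k : ℂ → E}

theorem injOn (H : IsDiscParam R h k) : InjOn h R := fun x hx y hy hxy => by
  rw [← H.left_inv x hx, hxy, H.left_inv y hy]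

theorem hasLogOn (H : IsDiscParam R h k) {φ : E → ℂ} (hφ : ContinuousOn φ R)
    (hne : ∀ x ∈ R, φ x ≠ 0) : HasLogOn φ R := by
  obtain ⟨F, hF, hexp⟩ := HasLogOn.of_convex (convex_closedBall (0 : ℂ) 1)
    (isCompact_closedBall _ _) (φ := φ ∘ k)
    (hφ.comp H.continuous_k.continuousOn H.mapsTo_k) (fun z hz => hne _ (H.mapsTo_k z hz))
  refine ⟨F ∘ h, hF.comp H.continuous_h.continuousOn H.mapsTo_h, fun x hx => ?_⟩
  rw [Function.comp_apply, hexp _ (H.mapsTo_h x hx), Function.comp_apply, H.left_inv x hx]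

theorem isPreconnected_diff_singleton (H : IsDiscParam R h k) (p : E) :
    IsPreconnected (R \ {p}) := by
  have himage : ∀ S ⊆ Metric.closedBall (0 : ℂ) 1, IsPreconnected S → IsPreconnected (k '' S) :=
    fun S _ hS => hS.image k H.continuous_k.continuousOn
  by_cases hp : p ∈ R
  · convert himage (Metric.closedBall (0 : ℂ) 1 \ {h p}) sdiff_subset
      (isPreconnected_closedBall_diff_singleton _) using 1
    ext x
    constructor
    · rintro ⟨hx, hxp⟩
      exact ⟨h x, ⟨H.mapsTo_h x hx, fun e => hxp (H.injOn hx hp e)⟩, H.left_inv x hx⟩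
    · rintro ⟨z, ⟨hz, hzp⟩, rfl⟩
      refine ⟨H.mapsTo_k z hz, fun e => hzp ?_⟩
      rw [mem_singleton_iff] at e ⊢
      rw [← e, H.right_inv z hz]
  · rw [sdiff_singleton_eq_self hp]
    convert himage _ subset_rfl (convex_closedBall (0 : ℂ) 1).isPreconnected using 1
    ext x
    exact ⟨fun hx => ⟨h x, H.mapsTo_h x hx, H.left_inv x hx⟩,
      by rintro ⟨z, hz, rfl⟩; exact H.mapsTo_k z hz⟩

end IsDiscParam

end Disc

/-- The closed simplex with vertex set `s`, in barycentric coordinates. -/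
def cell {n : ℕ} (s : Finset (Fin n)) : Set (Fin n → ℝ) :=
  {x | (∀ v, 0 ≤ x v) ∧ ∑ v, x v = 1 ∧ ∀ v, x v ≠ 0 → v ∈ s}

section Cell

variable {n : ℕ} {s t : Finset (Fin n)}

theorem convex_cell (s : Finset (Fin n)) : Convex ℝ (cell s) := by
  rintro x ⟨hx0, hx1, hxs⟩ y ⟨hy0, hy1, hys⟩ a b ha hb hab
  refine ⟨fun v => ?_, ?_, fun v hv => ?_⟩
  · have := hx0 v
    have := hy0 v
    simp only [Pi.add_apply, Pi.smul_apply, smul_eq_mul]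
    positivity
  · simp only [Pi.add_apply, Pi.smul_apply, smul_eq_mul, Finset.sum_add_distrib,
      ← Finset.mul_sum, hx1, hy1, mul_one, hab]
  · by_contra hvs
    refine hv ?_
    have h1 : x v = 0 := by_contra fun h => hvs (hxs v h)
    have h2 : y v = 0 := by_contra fun h => hvs (hys v h)
    simp [h1, h2]

theorem isCompact_cell (s : Finset (Fin n)) : IsCompact (cell s) := by
  have h : cell s = stdSimplex ℝ (Fin n) ∩ ⋂ v ∈ (s : Set (Fin n))ᶜ, {x | x v = 0} := by
    ext x
    simp only [cell, stdSimplex, mem_inter_iff, mem_ofPred_eq, mem_iInter, mem_compl_iff,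
      Finset.mem_coe, and_assoc]
    refine and_congr_right fun _ => and_congr_right fun _ => forall_congr' fun v => ?_
    tauto
  rw [h]
  exact (isCompact_stdSimplex ℝ (Fin n)).inter_right (isClosed_biInter fun v _ =>
    isClosed_eq (continuous_apply v) continuous_const)

theorem cell_mono (h : s ⊆ t) : cell s ⊆ cell t := fun _ hx =>
  ⟨hx.1, hx.2.1, fun v hv => h (hx.2.2 v hv)⟩

theorem cell_inter (s t : Finset (Fin n)) : cell s ∩ cell t = cell (s ∩ t) := by
  ext x
  simp only [cell, mem_inter_iff, mem_ofPred_eq, Finset.mem_inter]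
  grind

theorem single_mem_cell {v : Fin n} (hv : v ∈ s) : (Pi.single v 1 : Fin n → ℝ) ∈ cell s := by
  refine ⟨fun w => ?_, by simp, fun w hw => ?_⟩
  · by_cases h : w = v
    · subst h; simp
    · simp [h]
  · by_cases h : w = v
    · rwa [h]
    · simp [h] at hw

theorem cell_singleton (v : Fin n) : cell {v} = {(Pi.single v 1 : Fin n → ℝ)} := by
  refine Subset.antisymm (fun x hx => ?_)
    (singleton_subset_iff.2 (single_mem_cell (Finset.mem_singleton_self v)))
  have h0 : ∀ w ≠ v, x w = 0 := fun w hw =>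
    by_contra fun h => hw (Finset.mem_singleton.1 (hx.2.2 w h))
  have h1 : x v = 1 := by
    rw [← hx.2.1, Finset.sum_eq_single v (fun w _ hw => h0 w hw) (by simp)]
  rw [mem_singleton_iff]
  ext w
  by_cases h : w = v
  · subst h; simp [h1]
  · simp [h, h0 w h]

end Cell

namespace SComplex

variable (K : SComplex)

/-- The underlying point set of the geometric realization. -/
def body : Set (Fin K.n → ℝ) :=
  {f | (∀ v, 0 ≤ f v) ∧ (∑ v, f v = 1) ∧ ∃ s ∈ K.faces, ∀ v, f v ≠ 0 → v ∈ s}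

theorem exists_isDiscParam
    (hdisc : Nonempty (K.realization ≃ₜ ↥(Metric.closedBall (0 : EuclideanSpace ℝ (Fin 2)) 1))) :
    ∃ h k, IsDiscParam K.body h k := by
  obtain ⟨Φ⟩ := hdisc
  let ι := Complex.orthonormalBasisOneI.repr
  have hcomp : CompactSpace K.realization := Φ.symm.compactSpace
  have hclosed : IsClosed K.body := (isCompact_iff_compactSpace.2 hcomp).isClosed
  obtain ⟨h, hh⟩ := ContinuousMap.exists_restrict_eq hclosed
    (⟨fun x => ι.symm (Φ x), ι.symm.continuous.comp (continuous_subtype_val.comp Φ.continuous)⟩ :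
      C(K.body, ℂ))
  have hmem : ∀ z : ℂ, z ∈ Metric.closedBall (0 : ℂ) 1 →
      ι z ∈ Metric.closedBall (0 : EuclideanSpace ℝ (Fin 2)) 1 := fun z hz => by
    simpa using hz
  obtain ⟨k, hk⟩ := ContinuousMap.exists_restrict_eq
    (Metric.isClosed_closedBall (x := (0 : ℂ)) (ε := 1))
    (⟨fun z => (Φ.symm ⟨ι z, hmem z z.2⟩ : Fin K.n → ℝ), by fun_prop⟩ :
      C(Metric.closedBall (0 : ℂ) 1, Fin K.n → ℝ))
  have hh' : ∀ x (hx : x ∈ K.body), h x = ι.symm (Φ ⟨x, hx⟩) := fun x hx =>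
    congrArg (fun F : C(K.body, ℂ) => F ⟨x, hx⟩) hh
  have hk' : ∀ z (hz : z ∈ Metric.closedBall (0 : ℂ) 1), k z = Φ.symm ⟨ι z, hmem z hz⟩ :=
    fun z hz => congrArg (fun F : C(Metric.closedBall (0 : ℂ) 1, Fin K.n → ℝ) => F ⟨z, hz⟩) hk
  have hm : ∀ x ∈ K.body, h x ∈ Metric.closedBall (0 : ℂ) 1 := fun x hx => by
    rw [hh' x hx]
    have := (Φ ⟨x, hx⟩).2
    rw [mem_closedBall_zero_iff] at this ⊢
    rwa [LinearIsometryEquiv.norm_map]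
  have hmk : ∀ z ∈ Metric.closedBall (0 : ℂ) 1, k z ∈ K.body := fun z hz => by
    rw [hk' z hz]
    exact (Φ.symm _).2
  refine ⟨h, k, h.continuous, k.continuous, hm, hmk, fun x hx => ?_, fun z hz => ?_⟩
  · have hz := hm x hx
    rw [hk' _ hz]
    have : (⟨ι (h x), hmem _ hz⟩ : Metric.closedBall (0 : EuclideanSpace ℝ (Fin 2)) 1) =
        Φ ⟨x, hx⟩ := Subtype.ext (by simp [hh' x hx])
    rw [this, Φ.symm_apply_apply]
  · rw [hh' _ (hmk z hz)]
    have : (⟨k z, hmk z hz⟩ : K.realization) = Φ.symm ⟨ι z, hmem z hz⟩ :=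
      Subtype.ext (hk' z hz)
    rw [this, Φ.apply_symm_apply]
    simp

variable {K}

theorem cell_subset_body {s : Finset (Fin K.n)} (hs : s ∈ K.faces) : cell s ⊆ K.body :=
  fun _ hx => ⟨hx.1, hx.2.1, s, hs, hx.2.2⟩

theorem exists_mem_cell {x : Fin K.n → ℝ} (hx : x ∈ K.body) : ∃ s ∈ K.faces, x ∈ cell s := by
  obtain ⟨h0, h1, s, hs, hxs⟩ := hx
  exact ⟨s, hs, h0, h1, hxs⟩

theorem mem_cell_of_pos (h2 : K.IsTwoDimensional) {σ : Finset (Fin K.n)} (hc : σ.card = 3)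
    {x : Fin K.n → ℝ} (hx : x ∈ K.body) (hpos : ∀ v ∈ σ, 0 < x v) : x ∈ cell σ := by
  obtain ⟨s, hs, hxs⟩ := exists_mem_cell hx
  have hsub : σ ⊆ s := fun v hv => hxs.2.2 v (hpos v hv).ne'
  rwa [Finset.eq_of_subset_of_card_le hsub (hc ▸ h2 s hs)]

/-- For a point `p` in the interior of a triangle, the map `h - h p` winds around the boundary of
the triangle. -/
theorem not_hasLogOn_boundary (h2 : K.IsTwoDimensional) {h : (Fin K.n → ℝ) → ℂ}
    {k : ℂ → Fin K.n → ℝ} (H : IsDiscParam K.body h k) {σ : Finset (Fin K.n)}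
    (hσ : σ ∈ K.faces) (hc : σ.card = 3) {p : Fin K.n → ℝ} (hp : p ∈ K.body)
    (hpos : ∀ v ∈ σ, 0 < p v) :
    ¬ HasLogOn (fun x => h x - h p) {x ∈ cell σ | ∃ v ∈ σ, x v = 0} := by
  classical
  intro hlog
  -- an interior point mapped into the open disc
  obtain ⟨q, hq, hqpos, hqball⟩ : ∃ q ∈ K.body, (∀ v ∈ σ, 0 < q v) ∧ ‖h q‖ < 1 := by
    have hO : IsOpen {z : ℂ | ∀ v ∈ σ, 0 < k z v} := by
      simp only [ofPred_forall]
      refine isOpen_biInter_finset fun v _ => isOpen_lt continuous_const ?_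
      exact (continuous_apply v).comp H.continuous_k
    have hcl : h p ∈ closure (Metric.ball (0 : ℂ) 1) := by
      rw [closure_ball (0 : ℂ) one_ne_zero]
      exact H.mapsTo_h p hp
    obtain ⟨z, hz, hzb⟩ := mem_closure_iff.1 hcl _ hO (by
      simpa only [mem_ofPred_eq, H.left_inv p hp] using hpos)
    have hzc := Metric.ball_subset_closedBall hzb
    refine ⟨k z, H.mapsTo_k z hzc, hz, ?_⟩
    rw [H.right_inv z hzc]
    simpa using hzb
  have hqσ : q ∈ cell σ := mem_cell_of_pos h2 hc hq hqpos
  have hpσ : p ∈ cell σ := mem_cell_of_pos h2 hc hp hpos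
  -- a small homothetic copy of the triangle is mapped into the open disc
  obtain ⟨t, ht0, ht1, htball⟩ : ∃ t : ℝ, 0 < t ∧ t < 1 ∧
      ∀ y ∈ cell σ, ‖h (q + t • (y - q))‖ < 1 := by
    have hev : ∀ᶠ t in 𝓝 (0 : ℝ), ∀ y ∈ cell σ, ‖h (q + t • (y - q))‖ < 1 := by
      refine (isCompact_cell σ).eventually_forall_of_forall_eventually fun y _ => ?_
      have hcont : Continuous fun z : ℝ × (Fin K.n → ℝ) => ‖h (q + z.1 • (z.2 - q))‖ :=
        (H.continuous_h.comp (by fun_prop)).norm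
      exact hcont.continuousAt.eventually_lt continuousAt_const (by simpa using hqball)
    have h01 : ∀ᶠ t in 𝓝[>] (0 : ℝ), t ∈ Ioo (0 : ℝ) 1 := Ioo_mem_nhdsGT one_pos
    obtain ⟨t, ht, ht'⟩ := ((hev.filter_mono nhdsWithin_le_nhds).and h01).exists
    exact ⟨t, ht'.1, ht'.2, ht⟩
  have hcpt : IsCompact {x ∈ cell σ | ∃ v ∈ σ, x v = 0} := by
    have : {x ∈ cell σ | ∃ v ∈ σ, x v = 0} = cell σ ∩ ⋃ v ∈ σ, {x | x v = 0} := by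
      ext x; simp
    rw [this]
    exact (isCompact_cell σ).inter_right (isClosed_biUnion_finset fun v _ =>
      isClosed_eq (continuous_apply v) continuous_const)
  have hpconn : IsPreconnected ({x ∈ cell σ | ∀ v ∈ σ, 0 < x v} ×ˢ Ioc (0 : ℝ) 1) := by
    refine IsPreconnected.prod (Convex.isPreconnected ?_) isPreconnected_Ioc
    have : {x ∈ cell σ | ∀ v ∈ σ, 0 < x v} = cell σ ∩ ⋂ v ∈ σ, {x | 0 < x v} := by
      ext x; simp
    rw [this]
    refine (convex_cell σ).inter (convex_iInter fun v => convex_iInter fun _ => ?_)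
    exact convex_halfSpace_gt (LinearMap.proj v : (Fin K.n → ℝ) →ₗ[ℝ] ℝ).isLinear 0
  have hlog' : HasLogOn (fun x => h (q + t • (x - q)) - h q)
      {x ∈ cell σ | ∃ v ∈ σ, x v = 0} := by
    refine HasLogOn.of_homotopy
      (φ := fun (z : (Fin K.n → ℝ) × ℝ) x => h (z.1 + z.2 • (x - z.1)) - h z.1)
      (t₀ := (p, 1)) (t₁ := (q, t)) hcpt hpconn ?_ ?_ ⟨⟨hpσ, hpos⟩, by simp⟩
      ⟨⟨hqσ, hqpos⟩, ht0, ht1.le⟩ (hlog.congr (by simp))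
    · exact (H.continuous_h.comp (by fun_prop)).sub (H.continuous_h.comp (by fun_prop))
    · rintro ⟨r, τ⟩ ⟨⟨hr, hrpos⟩, hτ0, hτ1⟩ x ⟨hx, v, hv, hxv⟩ h0
      have hmem := (convex_cell σ).add_smul_sub_mem hr hx ⟨hτ0.le, hτ1⟩
      have he := H.injOn (cell_subset_body hσ hmem) (cell_subset_body hσ hr) (sub_eq_zero.1 h0)
      have hev := congrFun he v
      simp only [Pi.add_apply, Pi.smul_apply, Pi.sub_apply, hxv, smul_eq_mul, zero_sub] at hev
      have := mul_pos hτ0 (hrpos v hv)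
      linarith
  obtain ⟨F₀, hF₀, hF₀exp⟩ := hlog'
  obtain ⟨F, hF, hFF₀⟩ := hF₀.exists_continuous_eqOn hcpt.isClosed
  -- replace `h - h q` by a nowhere vanishing function on the small copy
  set A : Set (Fin K.n → ℝ) := {x | ∀ v ∈ σ, (1 - t) * q v ≤ x v} with hA
  set B : Set (Fin K.n → ℝ) := {x | ∃ v ∈ σ, x v ≤ (1 - t) * q v} with hB
  have hscale : ∀ x ∈ K.body, x ∈ A → q + t⁻¹ • (x - q) ∈ cell σ := by
    intro x hx hxA
    have hxσ : x ∈ cell σ := mem_cell_of_pos h2 hc hx fun v hv =>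
      (mul_pos (by linarith) (hqpos v hv)).trans_le (hxA v hv)
    have hz : ∀ v ∉ σ, x v = 0 ∧ q v = 0 := fun v hv =>
      ⟨by_contra fun h => hv (hxσ.2.2 v h), by_contra fun h => hv (hqσ.2.2 v h)⟩
    refine ⟨fun v => ?_, ?_, fun v hv => ?_⟩
    · by_cases hv : v ∈ σ
      · have h1 := hxA v hv
        have h3 : (q + t⁻¹ • (x - q)) v = t⁻¹ * (x v - (1 - t) * q v) := by
          simp only [Pi.add_apply, Pi.smul_apply, Pi.sub_apply, smul_eq_mul]
          field_simp
          ring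
        rw [h3]
        exact mul_nonneg (inv_nonneg.2 ht0.le) (by linarith)
      · simp [hz v hv]
    · simp only [Pi.add_apply, Pi.smul_apply, Pi.sub_apply, smul_eq_mul, Finset.sum_add_distrib,
        ← Finset.mul_sum, Finset.sum_sub_distrib, hxσ.2.1, hqσ.2.1]
      simp
    · by_contra hvσ
      exact hv (by simp [hz v hvσ])
  have hback : ∀ x, q + t • (q + t⁻¹ • (x - q) - q) = x := fun x => by
    rw [add_sub_cancel_left, smul_smul, mul_inv_cancel₀ ht0.ne', one_smul, add_sub_cancel]
  let g : (Fin K.n → ℝ) → ℂ := A.piecewise (fun x => Complex.exp (F (q + t⁻¹ • (x - q))))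
    (fun x => h x - h q)
  have hgA : ∀ x ∈ A, g x = Complex.exp (F (q + t⁻¹ • (x - q))) := fun x hx =>
    piecewise_eq_of_mem _ _ _ hx
  have hgB : ∀ x ∈ K.body ∩ B, g x = h x - h q := by
    rintro x ⟨hx, hxB⟩
    by_cases hxA : x ∈ A
    · obtain ⟨v, hv, hxv⟩ := hxB
      have hbd : q + t⁻¹ • (x - q) ∈ {x ∈ cell σ | ∃ v ∈ σ, x v = 0} := by
        refine ⟨hscale x hx hxA, v, hv, ?_⟩
        have h1 : x v = (1 - t) * q v := le_antisymm hxv (hxA v hv)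
        simp only [Pi.add_apply, Pi.smul_apply, Pi.sub_apply, smul_eq_mul, h1]
        field_simp
        ring
      rw [hgA x hxA, hFF₀ _ hbd, hF₀exp _ hbd]
      simp only [hback]
    · exact piecewise_eq_of_notMem _ _ _ hxA
  have hAB : K.body = (K.body ∩ A) ∪ (K.body ∩ B) := by
    rw [← inter_union_distrib_left, eq_comm, inter_eq_left]
    intro x _
    by_cases hx : x ∈ A
    · exact Or.inl hx
    · simp only [hA, mem_ofPred_eq, not_forall, not_le] at hx
      obtain ⟨v, hv, hlt⟩ := hx
      exact Or.inr ⟨v, hv, hlt.le⟩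
  have hbody : IsClosed K.body := by
    have : K.body = k '' Metric.closedBall (0 : ℂ) 1 := by
      ext x
      exact ⟨fun hx => ⟨h x, H.mapsTo_h x hx, H.left_inv x hx⟩,
        by rintro ⟨z, hz, rfl⟩; exact H.mapsTo_k z hz⟩
    rw [this]
    exact ((isCompact_closedBall _ _).image H.continuous_k).isClosed
  have hAc : IsClosed A := by
    simp only [hA, ofPred_forall]
    exact isClosed_biInter fun v _ => isClosed_le continuous_const (continuous_apply v)
  have hBc : IsClosed B := by
    have : B = ⋃ v ∈ σ, {x | x v ≤ (1 - t) * q v} := by ext x; simp [hB]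
    rw [this]
    exact isClosed_biUnion_finset fun v _ => isClosed_le (continuous_apply v) continuous_const
  have hgc : ContinuousOn g K.body := by
    rw [hAB]
    refine ContinuousOn.union_of_isClosed ?_ ?_ (hbody.inter hAc) (hbody.inter hBc)
    · exact (Complex.continuous_exp.comp (hF.comp (by fun_prop))).continuousOn.congr
        fun x hx => hgA x hx.2
    · exact (H.continuous_h.sub continuous_const).continuousOn.congr hgB
  have hgne : ∀ x ∈ K.body, g x ≠ 0 := by
    intro x hx
    rcases hAB ▸ hx with hxA | hxB
    · rw [hgA x hxA.2]
      exact Complex.exp_ne_zero _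
    · rw [hgB x hxB]
      intro h0
      obtain ⟨v, hv, hxv⟩ := hxB.2
      rw [H.injOn hx hq (sub_eq_zero.1 h0)] at hxv
      nlinarith [mul_pos ht0 (hqpos v hv)]
  obtain ⟨G, hG, hGexp⟩ := H.hasLogOn hgc hgne
  have hsub : Metric.sphere (0 : ℂ) 1 ⊆ Metric.closedBall 0 1 := Metric.sphere_subset_closedBall
  refine not_hasLogOn_sphere_sub hqball ⟨G ∘ k, hG.comp H.continuous_k.continuousOn
    (fun z hz => H.mapsTo_k z (hsub hz)), fun z hz => ?_⟩
  have hkz := H.mapsTo_k z (hsub hz)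
  have hkA : k z ∉ A := fun hmem => by
    have := htball _ (hscale _ hkz hmem)
    rw [hback, H.right_inv z (hsub hz)] at this
    rw [mem_sphere_zero_iff_norm] at hz
    exact this.ne hz
  rw [Function.comp_apply, hGexp _ hkz, ← H.right_inv z (hsub hz),
    H.left_inv _ hkz]
  exact piecewise_eq_of_notMem _ _ _ hkA

end SComplex

namespace SComplex

variable {K : SComplex}

theorem sum_mul_eq_of_mem_cell {n : ℕ} {t : Finset (Fin n)} {x : Fin n → ℝ} (hx : x ∈ cell t)
    {s : Fin n → ℝ} {ε : ℝ} (hs : ∀ v ∈ t, s v = ε) : ∑ v, s v * x v = ε := by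
  have : ∀ v, s v * x v = ε * x v := fun v => by
    by_cases hv : x v = 0
    · simp [hv]
    · rw [hs v (hx.2.2 v hv)]
  simp only [this, ← Finset.mul_sum, hx.2.1, mul_one]

/-- A linear function which does not vanish on the complement of a point in the disc has constant
sign there. -/
theorem sign_constant {h : (Fin K.n → ℝ) → ℂ} {k : ℂ → Fin K.n → ℝ}
    (H : IsDiscParam K.body h k) {s : Fin K.n → ℝ} {p : Fin K.n → ℝ}
    (hne : ∀ x ∈ K.body, x ≠ p → ∑ v, s v * x v ≠ 0) {u v : Fin K.n} (hu : {u} ∈ K.faces)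
    (hv : {v} ∈ K.faces) (hup : Pi.single u 1 ≠ p) (hvp : Pi.single v 1 ≠ p)
    (hsu : 0 < s u) (hsv : s v < 0) : False := by
  have hmem : ∀ w : Fin K.n, {w} ∈ K.faces → (Pi.single w 1 : Fin K.n → ℝ) ∈ K.body := fun w hw =>
    cell_subset_body hw (single_mem_cell (Finset.mem_singleton_self w))
  have hval : ∀ w : Fin K.n, ∑ i, s i * (Pi.single w 1 : Fin K.n → ℝ) i = s w := fun w =>
    sum_mul_eq_of_mem_cell (single_mem_cell (Finset.mem_singleton_self w)) (by simp)
  have hcont : Continuous fun x : Fin K.n → ℝ => ∑ i, s i * x i := by fun_prop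
  obtain ⟨x, hx, hx0⟩ := (H.isPreconnected_diff_singleton p).intermediate_value
    (f := fun x => ∑ i, s i * x i) ⟨hmem v hv, hvp⟩ ⟨hmem u hu, hup⟩ hcont.continuousOn
    (show (0 : ℝ) ∈ Icc _ _ by simp only [hval]; exact ⟨hsv.le, hsu.le⟩)
  exact hne x hx.1 hx.2 hx0

/-- The complex is connected: a function constant along edges is constant. -/
theorem eq_of_edge_constant {h : (Fin K.n → ℝ) → ℂ} {k : ℂ → Fin K.n → ℝ}
    (H : IsDiscParam K.body h k) {A : Type*} (g : Fin K.n → A)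
    (hg : ∀ u v, {u, v} ∈ K.faces → g u = g v) {u v : Fin K.n} (hu : {u} ∈ K.faces)
    (hv : {v} ∈ K.faces) : g u = g v := by
  classical
  by_contra hne
  have hsingle : ∀ w : Fin K.n, (Pi.single w 1 : Fin K.n → ℝ) ≠ 0 := fun w h0 => by
    simpa using congrFun h0 w
  refine sign_constant H (s := fun w => if g w = g u then 1 else -1) (p := 0)
    (fun x hx _ => ?_) hu hv (hsingle u) (hsingle v) (by simp) (by simp [Ne.symm hne])
  obtain ⟨t, ht, hxt⟩ := exists_mem_cell hx
  have hpair : ∀ a ∈ t, ∀ b ∈ t, g a = g b := fun a ha b hb =>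
    hg a b (K.down_closed t ht _ (by grind) (by simp))
  by_cases hc : ∃ a ∈ t, g a = g u
  · obtain ⟨a, ha, hau⟩ := hc
    rw [sum_mul_eq_of_mem_cell hxt (ε := 1) fun b hb => if_pos ((hpair b hb a ha).trans hau)]
    exact one_ne_zero
  · rw [sum_mul_eq_of_mem_cell hxt (ε := -1) fun b hb => if_neg fun hbu => hc ⟨b, hb, hbu⟩]
    norm_num

/-- Integral simplicial `1`-cocycles on a disc are coboundaries. -/
theorem exists_primitive {h : (Fin K.n → ℝ) → ℂ} {k : ℂ → Fin K.n → ℝ}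
    (H : IsDiscParam K.body h k) (c : Fin K.n → Fin K.n → ℤ)
    (hc : ∀ a b d, {a, b, d} ∈ K.faces → c a b + c b d = c a d) :
    ∃ g : Fin K.n → ℤ, ∀ u v, {u, v} ∈ K.faces → c u v = g v - g u := by
  classical
  let Θ : Fin K.n → (Fin K.n → ℝ) → ℂ := fun a x => ∑ w, (x w : ℂ) * c a w
  have hΘ : ∀ a, Continuous (Θ a) := fun a => by fun_prop
  let Φ : (Fin K.n → ℝ) → ℂ := fun x =>
    if hx : ∃ v, x v ≠ 0 then Complex.exp (Θ hx.choose x * (2 * Real.pi * Complex.I)) else 1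
  have hΦ : ∀ x ∈ K.body, ∀ a, x a ≠ 0 →
      Φ x = Complex.exp (Θ a x * (2 * Real.pi * Complex.I)) := by
    intro x hx a ha
    have hex : ∃ v, x v ≠ 0 := ⟨a, ha⟩
    obtain ⟨t, ht, hxt⟩ := exists_mem_cell hx
    have hb := hex.choose_spec
    simp only [Φ, dif_pos hex]
    generalize hex.choose = b at hb
    have hterm : Θ b x = Θ a x + c b a := by
      have h1 : ((∑ w, x w : ℝ) : ℂ) = 1 := by rw [hxt.2.1]; simp
      rw [Complex.ofReal_sum] at h1
      have h2 : Θ a x + c b a = ∑ w, (x w : ℂ) * (c a w + c b a) := by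
        simp only [Θ, mul_add, Finset.sum_add_distrib, ← Finset.sum_mul, h1, one_mul]
      rw [h2]
      refine Finset.sum_congr rfl fun w _ => ?_
      by_cases hw : x w = 0
      · simp [hw]
      · have hface : {b, a, w} ∈ K.faces := K.down_closed t ht _ (by
          have := hxt.2.2 a ha
          have := hxt.2.2 b hb
          have := hxt.2.2 w hw
          grind) (by simp)
        have := hc b a w hface
        rw [← this]
        push_cast
        ring
    rw [hterm, add_mul, Complex.exp_add, Complex.exp_int_mul_two_pi_mul_I, mul_one]
  have hΦc : ContinuousOn Φ K.body := by
    intro x hx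
    obtain ⟨a, ha⟩ : ∃ a, x a ≠ 0 := by
      by_contra! h0
      have := hx.2.1
      simp [h0] at this
    have hev : Φ =ᶠ[𝓝[K.body] x] fun y => Complex.exp (Θ a y * (2 * Real.pi * Complex.I)) := by
      have hopen : ∀ᶠ y in 𝓝[K.body] x, y a ≠ 0 :=
        nhdsWithin_le_nhds ((continuous_apply a).continuousAt.eventually_ne ha)
      filter_upwards [hopen, self_mem_nhdsWithin] with y hy hyb
      exact hΦ y hyb a hy
    refine ContinuousWithinAt.congr_of_eventuallyEq ?_ hev (hΦ x hx a ha)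
    have := hΘ a
    exact Continuous.continuousWithinAt (by fun_prop)
  have hΦne : ∀ x ∈ K.body, Φ x ≠ 0 := by
    intro x _
    simp only [Φ]
    split_ifs
    · exact Complex.exp_ne_zero _
    · exact one_ne_zero
  obtain ⟨G, hG, hGexp⟩ := H.hasLogOn hΦc hΦne
  have hdiag : ∀ u, {u} ∈ K.faces → c u u = 0 := fun u hu => by
    have := hc u u u (by simpa using hu)
    omega
  have hint : ∀ u, ∃ m : ℤ, {u} ∈ K.faces →
      G (Pi.single u 1) = m * (2 * Real.pi * Complex.I) := by
    intro u
    by_cases hu : {u} ∈ K.faces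
    · have hmem := cell_subset_body hu (single_mem_cell (Finset.mem_singleton_self u))
      have h1 := hGexp _ hmem
      rw [hΦ _ hmem u (by simp)] at h1
      have h3 : Θ u (Pi.single u 1) = 0 := by
        simp only [Θ]
        rw [Finset.sum_eq_single u] <;> simp +contextual [hdiag u hu]
      rw [h3, zero_mul, Complex.exp_zero] at h1
      obtain ⟨m, hm⟩ := Complex.exp_eq_one_iff.1 h1
      exact ⟨m, fun _ => hm⟩
    · exact ⟨0, fun h => absurd h hu⟩
  choose g hg using hint
  refine ⟨g, fun u v huv => ?_⟩
  have hu : {u} ∈ K.faces := K.down_closed _ huv _ (by simp) (by simp)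
  have hv : {v} ∈ K.faces := K.down_closed _ huv _ (by simp) (by simp)
  by_cases huv' : u = v
  · subst huv'
    rw [hdiag u hu, sub_self]
  have key : ∀ x ∈ cell {u, v}, Complex.exp (G x) =
      Complex.exp ((x v : ℂ) * c u v * (2 * Real.pi * Complex.I)) := by
    intro x hx
    have hxb := cell_subset_body huv hx
    have hsum : ∀ f : Fin K.n → ℂ, ∑ w, (x w : ℂ) * f w = x u * f u + x v * f v := by
      intro f
      rw [← Finset.sum_pair (f := fun w => (x w : ℂ) * f w) huv']
      refine (Finset.sum_subset (Finset.subset_univ _) fun w _ hw => ?_).symm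
      have : x w = 0 := by_contra fun h0 => hw (hx.2.2 w h0)
      simp [this]
    have hone : (x u : ℂ) + x v = 1 := by
      have h1 : ((∑ w, x w : ℝ) : ℂ) = 1 := by rw [hx.2.1]; simp
      rw [Complex.ofReal_sum] at h1
      have := hsum fun _ => 1
      simp only [mul_one] at this
      rw [← this, h1]
    rw [hGexp x hxb]
    by_cases hxu : x u = 0
    · have hxv : (x v : ℂ) = 1 := by simpa [hxu] using hone
      have hxv' : x v ≠ 0 := fun h0 => by simp [h0] at hxv
      rw [hΦ x hxb v hxv']
      simp only [Θ, hsum]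
      rw [hdiag v hv, hxu, hxv, one_mul (c u v : ℂ), Complex.exp_int_mul_two_pi_mul_I]
      simp
    · rw [hΦ x hxb u hxu]
      simp only [Θ, hsum]
      rw [hdiag u hu]
      simp
  have hfin := (convex_cell {u, v}).isPreconnected.sub_eq_sub_of_exp_eq
    (hG.mono (cell_subset_body huv))
    (G := fun x => (x v : ℂ) * c u v * (2 * Real.pi * Complex.I)) (by fun_prop) key
    (single_mem_cell (v := u) (by simp)) (single_mem_cell (v := v) (by simp))
  rw [hg u hu, hg v hv] at hfin
  simp only [Pi.single_eq_same, Pi.single_eq_of_ne (Ne.symm huv'), Complex.ofReal_one,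
    Complex.ofReal_zero, one_mul, zero_mul, sub_zero, ← sub_mul] at hfin
  have := mul_right_cancel₀ Complex.two_pi_I_ne_zero hfin
  exact_mod_cast this.symm

/-- The link of a vertex is connected: a function constant along link edges is constant. -/
theorem eq_of_link_constant {h : (Fin K.n → ℝ) → ℂ} {k : ℂ → Fin K.n → ℝ}
    (H : IsDiscParam K.body h k) {v : Fin K.n} (f : Fin K.n → ℤ)
    (hf : ∀ a b, a ≠ v → b ≠ v → {v, a, b} ∈ K.faces → f a = f b) {a b : Fin K.n}
    (hav : a ≠ v) (hbv : b ≠ v) (ha : {v, a} ∈ K.faces) (hb : {v, b} ∈ K.faces) : f a = f b := by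
  classical
  obtain ⟨g, hg⟩ := exists_primitive H
    (fun x y => if x = y then 0 else if x = v then f y else if y = v then - f x else 0) (by
      intro x y z hface
      have h1 : x = v → y ≠ v → z ≠ v → f y = f z := by
        rintro rfl hy hz
        exact hf y z hy hz hface
      have h2 : y = v → x ≠ v → z ≠ v → f x = f z := by
        rintro rfl hx hz
        exact hf x z hx hz (by rwa [show ({y, x, z} : Finset (Fin K.n)) = {x, y, z} by grind])
      have h3 : z = v → x ≠ v → y ≠ v → f x = f y := by
        rintro rfl hx hy
        exact hf x y hx hy (by rwa [show ({z, x, y} : Finset (Fin K.n)) = {x, y, z} by grind])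
      grind)
  have hga := hg v a ha
  have hgb := hg v b hb
  simp only [hav.symm, hbv.symm, if_true, if_false] at hga hgb
  suffices hab : g a = g b by omega
  by_contra hne
  have hsingle : ∀ w ≠ v, (Pi.single w 1 : Fin K.n → ℝ) ≠ Pi.single v 1 := fun w hw h0 => by
    have := congrFun h0 w
    simp [hw] at this
  refine sign_constant H (s := fun w => if w = v then 0 else if g w = g a then 1 else -1)
    (p := Pi.single v 1) (fun x hx hxv => ?_)
    (K.down_closed _ ha {a} (by simp) (by simp)) (K.down_closed _ hb {b} (by simp) (by simp))
    (hsingle a hav) (hsingle b hbv) (by simp [hav]) (by simp [hbv, Ne.symm hne])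
  obtain ⟨t, ht, hxt⟩ := exists_mem_cell hx
  have hpair : ∀ a ∈ t, ∀ b ∈ t, a ≠ v → b ≠ v → g a = g b := fun a ha b hb hav hbv => by
    have := hg a b (K.down_closed t ht _ (by grind) (by simp))
    simp only [hav, hbv, if_false, ite_self] at this
    omega
  obtain ⟨ε, hε, hs⟩ : ∃ ε : ℝ, ε ≠ 0 ∧
      ∀ w ∈ t, (if w = v then (0 : ℝ) else if g w = g a then 1 else -1) +
        (if w = v then ε else 0) = ε := by
    by_cases hc : ∃ c ∈ t, c ≠ v ∧ g c = g a
    · obtain ⟨c, hct, hcv, hca⟩ := hc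
      refine ⟨1, one_ne_zero, fun w hw => ?_⟩
      by_cases hwv : w = v
      · simp [hwv]
      · simp [hwv, (hpair w hw c hct hwv hcv).trans hca]
    · refine ⟨-1, by norm_num, fun w hw => ?_⟩
      by_cases hwv : w = v
      · simp [hwv]
      · have : g w ≠ g a := fun h0 => hc ⟨w, hw, hwv, h0⟩
        simp [hwv, this]
  have hsum := sum_mul_eq_of_mem_cell hxt hs
  simp only [add_mul, Finset.sum_add_distrib, ite_mul, zero_mul, Finset.sum_ite_eq',
    Finset.mem_univ, if_true] at hsum
  simp only [ite_mul, zero_mul]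
  intro h0
  rw [h0, zero_add] at hsum
  have hxv1 : x v = 1 := mul_left_cancel₀ hε (hsum.trans (mul_one ε).symm)
  refine hxv ?_
  have hrest : ∑ w ∈ Finset.univ.erase v, x w = 0 := by
    have := Finset.add_sum_erase Finset.univ x (Finset.mem_univ v)
    rw [hxt.2.1, hxv1] at this
    linarith
  rw [Finset.sum_eq_zero_iff_of_nonneg fun w _ => hxt.1 w] at hrest
  ext w
  by_cases hw : w = v
  · subst hw; simp [hxv1]
  · simp [hw, hrest w (by simp [hw])]

/-- Every edge of a triangulated disc lies in a triangle. -/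
theorem exists_triangle_of_edge {h : (Fin K.n → ℝ) → ℂ} {k : ℂ → Fin K.n → ℝ}
    (H : IsDiscParam K.body h k) {u v : Fin K.n} (huv : u ≠ v) (he : {u, v} ∈ K.faces) :
    ∃ w, w ≠ u ∧ w ≠ v ∧ {u, v, w} ∈ K.faces := by
  classical
  by_contra! hno
  obtain ⟨g, hg⟩ := exists_primitive H
    (fun x y => if x = u ∧ y = v then 1 else if x = v ∧ y = u then -1 else 0) (by
      intro x y z hface
      have h1 : ¬ (x = u ∧ y = v ∧ z ≠ u ∧ z ≠ v) := by
        rintro ⟨rfl, rfl, h1, h2⟩; exact hno z h1 h2 hface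
      have h2 : ¬ (x = v ∧ y = u ∧ z ≠ u ∧ z ≠ v) := by
        rintro ⟨rfl, rfl, h1, h2⟩
        exact hno z h1 h2 (by rwa [Finset.insert_comm])
      have h3 : ¬ (x = u ∧ z = v ∧ y ≠ u ∧ y ≠ v) := by
        rintro ⟨rfl, rfl, h1, h2⟩
        exact hno y h1 h2 (by rwa [show ({x, z, y} : Finset (Fin K.n)) = {x, y, z} by grind])
      have h4 : ¬ (x = v ∧ z = u ∧ y ≠ u ∧ y ≠ v) := by
        rintro ⟨rfl, rfl, h1, h2⟩
        exact hno y h1 h2 (by rwa [show ({z, x, y} : Finset (Fin K.n)) = {x, y, z} by grind])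
      have h5 : ¬ (y = u ∧ z = v ∧ x ≠ u ∧ x ≠ v) := by
        rintro ⟨rfl, rfl, h1, h2⟩
        exact hno x h1 h2 (by rwa [show ({y, z, x} : Finset (Fin K.n)) = {x, y, z} by grind])
      have h6 : ¬ (y = v ∧ z = u ∧ x ≠ u ∧ x ≠ v) := by
        rintro ⟨rfl, rfl, h1, h2⟩
        exact hno x h1 h2 (by rwa [show ({z, y, x} : Finset (Fin K.n)) = {x, y, z} by grind])
      grind)
  have hguv := hg u v he
  simp only [and_self, if_true] at hguv
  have hsingle : ∀ w,
      (Pi.single w 1 : Fin K.n → ℝ) ≠ Pi.single u (1 / 2) + Pi.single v (1 / 2) := by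
    intro w h0
    have h1 := congrFun h0 u
    have h2 := congrFun h0 v
    simp only [Pi.add_apply, Pi.single_apply, huv, huv.symm, if_true, if_false] at h1 h2
    by_cases hu : u = w
    · rw [if_pos hu] at h1; norm_num at h1
    · rw [if_neg hu] at h1; norm_num at h1
  refine sign_constant H (s := fun w => if g w = g u then 1 else -1)
    (p := Pi.single u (1 / 2) + Pi.single v (1 / 2)) (fun x hx hxp => ?_)
    (K.down_closed _ he {u} (by simp) (by simp)) (K.down_closed _ he {v} (by simp) (by simp))
    (hsingle u) (hsingle v) (by simp) (by
      have : g v ≠ g u := by omega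
      simp [this])
  obtain ⟨t, ht, hxt⟩ := exists_mem_cell hx
  by_cases hut : u ∈ t ∧ v ∈ t
  · have hsub : t ⊆ {u, v} := fun w hw => by
      by_contra hwuv
      simp only [Finset.mem_insert, Finset.mem_singleton, not_or] at hwuv
      exact hno w hwuv.1 hwuv.2 (K.down_closed t ht _ (by grind) (by simp))
    have hz : ∀ w, w ∉ ({u, v} : Finset (Fin K.n)) → x w = 0 := fun w hw =>
      by_contra fun h0 => hw (hsub (hxt.2.2 w h0))
    have hsum : ∀ f : Fin K.n → ℝ, ∑ w, f w * x w = f u * x u + f v * x v := by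
      intro f
      rw [← Finset.sum_pair (f := fun w => f w * x w) huv]
      exact (Finset.sum_subset (Finset.subset_univ _) fun w _ hw => by simp [hz w hw]).symm
    have hone := hsum fun _ => 1
    simp only [one_mul, hxt.2.1] at hone
    have hvu : g v ≠ g u := by omega
    rw [hsum]
    simp only [if_true, if_neg hvu]
    intro h0
    refine hxp ?_
    ext w
    simp only [Pi.add_apply, Pi.single_apply]
    by_cases hwu : w = u
    · subst hwu
      simp only [if_true, huv, if_false]
      linarith
    · by_cases hwv : w = v
      · subst hwv
        simp only [if_true, hwu, if_false]
        linarith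
      · simp only [hwu, hwv, if_false, add_zero]
        exact hz w (by simp [hwu, hwv])
  · have hpair : ∀ a ∈ t, ∀ b ∈ t, g a = g b := fun a ha b hb => by
      have := hg a b (K.down_closed t ht _ (by grind) (by simp))
      rw [if_neg (by rintro ⟨rfl, rfl⟩; exact hut ⟨ha, hb⟩),
        if_neg (by rintro ⟨rfl, rfl⟩; exact hut ⟨hb, ha⟩)] at this
      omega
    by_cases hc : ∃ a ∈ t, g a = g u
    · obtain ⟨a, ha, hau⟩ := hc
      rw [sum_mul_eq_of_mem_cell hxt (ε := 1) fun b hb => if_pos ((hpair b hb a ha).trans hau)]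
      exact one_ne_zero
    · rw [sum_mul_eq_of_mem_cell hxt (ε := -1) fun b hb => if_neg fun hbu => hc ⟨b, hb, hbu⟩]
      norm_num

end SComplex

namespace SComplex

variable {K : SComplex}

theorem hasLogOn_cell {h : (Fin K.n → ℝ) → ℂ} {k : ℂ → Fin K.n → ℝ}
    (H : IsDiscParam K.body h k) {s : Finset (Fin K.n)} (hs : s ∈ K.faces)
    {p : Fin K.n → ℝ} (hp : p ∈ K.body) (hps : p ∉ cell s) :
    HasLogOn (fun x => h x - h p) (cell s) := by
  refine HasLogOn.of_convex (convex_cell s) (isCompact_cell s)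
    (H.continuous_h.sub continuous_const).continuousOn fun x hx h0 => hps ?_
  rwa [← H.injOn (cell_subset_body hs hx) hp (sub_eq_zero.1 h0)]

theorem triangle_boundary_subset {n : ℕ} (a b c : Fin n) :
    {x ∈ cell ({a, b, c} : Finset (Fin n)) | ∃ v ∈ ({a, b, c} : Finset (Fin n)), x v = 0} ⊆
      cell {a, b} ∪ cell {b, c} ∪ cell {c, a} := by
  rintro x ⟨hx, v, hv, hxv⟩
  simp only [cell, mem_union, mem_ofPred_eq] at hx ⊢
  simp only [Finset.mem_insert, Finset.mem_singleton] at hx hv ⊢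
  rcases hv with rfl | rfl | rfl
  · exact Or.inl (Or.inr ⟨hx.1, hx.2.1, by grind⟩)
  · exact Or.inr ⟨hx.1, hx.2.1, by grind⟩
  · exact Or.inl (Or.inl ⟨hx.1, hx.2.1, by grind⟩)

/-- Some nonzero multiple of the cochain dual to a triangle is a coboundary. -/
theorem exists_cochain_of_triangle (h2 : K.IsTwoDimensional) {h : (Fin K.n → ℝ) → ℂ}
    {k : ℂ → Fin K.n → ℝ} (H : IsDiscParam K.body h k) {σ : Finset (Fin K.n)}
    (hσ : σ ∈ K.faces) (hcard : σ.card = 3) :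
    ∃ J : Fin K.n → Fin K.n → ℤ, (∀ u v, {u, v} ∈ K.faces → J u v = - J v u) ∧
      (∀ a b c, {a, b, c} ∈ K.faces → {a, b, c} ≠ σ → J a b + J b c + J c a = 0) ∧
      ∀ a b c, {a, b, c} = σ → J a b + J b c + J c a ≠ 0 := by
  classical
  let p : Fin K.n → ℝ := fun v => if v ∈ σ then 1 / 3 else 0
  have hpσ : p ∈ cell σ := by
    refine ⟨fun v => ?_, ?_, fun v hv => ?_⟩
    · simp only [p]; split_ifs <;> norm_num
    · simp [p, hcard]
    · by_contra hvσ
      simp [p, hvσ] at hv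
  have hpb : p ∈ K.body := cell_subset_body hσ hpσ
  have hpos : ∀ v ∈ σ, 0 < p v := fun v hv => by simp [p, hv]
  have hnot : ∀ s ∈ K.faces, s ≠ σ → p ∉ cell s := fun s hs hne hps => hne <| by
    have hsub : σ ⊆ s := fun v hv => hps.2.2 v (hpos v hv).ne'
    exact (Finset.eq_of_subset_of_card_le hsub (hcard ▸ h2 s hs)).symm
  set f : (Fin K.n → ℝ) → ℂ := fun x => h x - h p with hf
  have hlog : ∀ s ∈ K.faces, s ≠ σ → HasLogOn f (cell s) := fun s hs hne =>
    hasLogOn_cell H hs hpb (hnot s hs hne)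
  have hedge : ∀ u v : Fin K.n, ({u, v} : Finset (Fin K.n)) ≠ σ := fun u v e => by
    have := Finset.card_le_two (a := u) (b := v)
    rw [e, hcard] at this
    omega
  let ℓ : Fin K.n → ℂ := fun v => Complex.log (f (Pi.single v 1))
  have hJ : ∀ u v : Fin K.n, ∃ j : ℤ, {u, v} ∈ K.faces → ∀ F : (Fin K.n → ℝ) → ℂ,
      ContinuousOn F (cell {u, v}) → (∀ x ∈ cell {u, v}, Complex.exp (F x) = f x) →
      F (Pi.single v 1) - F (Pi.single u 1) = ℓ v - ℓ u + j * (2 * Real.pi * Complex.I) := by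
    intro u v
    by_cases huv : {u, v} ∈ K.faces
    · obtain ⟨F, hF, hFexp⟩ := hlog _ huv (hedge u v)
      have hu : (Pi.single u 1 : Fin K.n → ℝ) ∈ cell {u, v} := single_mem_cell (by simp)
      have hv : (Pi.single v 1 : Fin K.n → ℝ) ∈ cell {u, v} := single_mem_cell (by simp)
      have hℓ : ∀ w, (Pi.single w 1 : Fin K.n → ℝ) ∈ cell {u, v} →
          Complex.exp (F (Pi.single w 1) - ℓ w) = 1 := fun w hw => by
        have hne : f (Pi.single w 1) ≠ 0 := by
          rw [← hFexp _ hw]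
          exact Complex.exp_ne_zero _
        rw [Complex.exp_sub, hFexp _ hw, Complex.exp_log hne, div_self hne]
      obtain ⟨m, hm⟩ := Complex.exp_eq_one_iff.1 (hℓ u hu)
      obtain ⟨m', hm'⟩ := Complex.exp_eq_one_iff.1 (hℓ v hv)
      refine ⟨m' - m, fun _ G hG hGexp => ?_⟩
      rw [(convex_cell {u, v}).isPreconnected.sub_eq_sub_of_exp_eq hG hF
        (fun x hx => (hGexp x hx).trans (hFexp x hx).symm) hu hv]
      push_cast
      linear_combination hm' - hm
    · exact ⟨0, fun h0 => absurd h0 huv⟩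
  choose J hJ using hJ
  refine ⟨J, fun u v huv => ?_, fun a b c habc hne => ?_, fun a b c habc hsum => ?_⟩
  · obtain ⟨F, hF, hFexp⟩ := hlog _ huv (hedge u v)
    have h1 := hJ u v huv F hF hFexp
    have h3 := hJ v u (Finset.pair_comm u v ▸ huv) F (Finset.pair_comm u v ▸ hF)
      (Finset.pair_comm u v ▸ hFexp)
    have h4 : ((J u v : ℂ) + J v u) * (2 * Real.pi * Complex.I) = 0 := by
      linear_combination -h1 - h3
    have h5 := (mul_eq_zero.1 h4).resolve_right Complex.two_pi_I_ne_zero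
    have h6 : J u v + J v u = 0 := by exact_mod_cast h5
    omega
  · obtain ⟨F, hF, hFexp⟩ := hlog _ habc hne
    have hsub : ∀ u v, ({u, v} : Finset (Fin K.n)) ⊆ {a, b, c} →
        F (Pi.single v 1) - F (Pi.single u 1) = ℓ v - ℓ u + J u v * (2 * Real.pi * Complex.I) :=
      fun u v huv => hJ u v (K.down_closed _ habc _ huv (by simp)) F
        (hF.mono (cell_mono huv)) fun x hx => hFexp x (cell_mono huv hx)
    have h1 := hsub a b (by grind)
    have h3 := hsub b c (by grind)
    have h4 := hsub c a (by grind)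
    have h5 : ((J a b : ℂ) + J b c + J c a) * (2 * Real.pi * Complex.I) = 0 := by
      linear_combination -h1 - h3 - h4
    have h6 := (mul_eq_zero.1 h5).resolve_right Complex.two_pi_I_ne_zero
    exact_mod_cast h6
  · subst habc
    have hface : ∀ u v, ({u, v} : Finset (Fin K.n)) ⊆ {a, b, c} → {u, v} ∈ K.faces :=
      fun u v huv => K.down_closed _ hσ _ huv (by simp)
    have hdist : a ≠ b ∧ b ≠ c ∧ c ≠ a := by
      refine ⟨?_, ?_, ?_⟩ <;> rintro rfl
      · exact hedge a c (by simp)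
      · exact hedge a b (by simp)
      · exact hedge c b (by grind)
    obtain ⟨hab, hbc, hca⟩ := hdist
    -- logarithms along the edges, normalised to the chosen value at the initial vertex
    have hnorm : ∀ u v, ({u, v} : Finset (Fin K.n)) ⊆ {a, b, c} → ∀ z : ℂ,
        Complex.exp z = f (Pi.single u 1) →
        ∃ F, ContinuousOn F (cell {u, v}) ∧ (∀ x ∈ cell {u, v}, Complex.exp (F x) = f x) ∧
          F (Pi.single u 1) = z ∧
          F (Pi.single v 1) = z + (ℓ v - ℓ u + J u v * (2 * Real.pi * Complex.I)) := by
      intro u v huv z hz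
      obtain ⟨F, hF, hFexp⟩ := hlog _ (hface u v huv) (hedge u v)
      have hu : (Pi.single u 1 : Fin K.n → ℝ) ∈ cell {u, v} := single_mem_cell (by simp)
      refine ⟨fun x => F x + (z - F (Pi.single u 1)), hF.add continuousOn_const, fun x hx => ?_,
        by ring, ?_⟩
      · rw [Complex.exp_add, Complex.exp_sub, hz, hFexp _ hu, hFexp x hx, div_self, mul_one]
        rw [← hz]
        exact Complex.exp_ne_zero _
      · linear_combination hJ u v (hface u v huv) F hF hFexp
    obtain ⟨F₁, hF₁, hF₁exp, hF₁a, hF₁b⟩ := hnorm a b (by grind) (ℓ a) (by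
      refine Complex.exp_log fun h0 => ?_
      obtain ⟨F, -, hFexp⟩ := hlog _ (hface a b (by grind)) (hedge a b)
      have := hFexp _ (single_mem_cell (v := a) (by simp))
      rw [h0] at this
      exact Complex.exp_ne_zero _ this)
    obtain ⟨F₂, hF₂, hF₂exp, hF₂b, hF₂c⟩ := hnorm b c (by grind) (F₁ (Pi.single b 1))
      (hF₁exp _ (single_mem_cell (by simp)))
    obtain ⟨F₃, hF₃, hF₃exp, hF₃c, hF₃a⟩ := hnorm c a (by grind) (F₂ (Pi.single c 1))
      (hF₂exp _ (single_mem_cell (by simp)))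
    have hclose : F₃ (Pi.single a 1) = F₁ (Pi.single a 1) := by
      have : (J a b : ℂ) + J b c + J c a = 0 := by exact_mod_cast hsum
      rw [hF₃a, hF₂c, hF₁b, hF₁a]
      linear_combination (2 * Real.pi * Complex.I) * this
    have hclosed := fun u v : Fin K.n => (isCompact_cell {u, v}).isClosed
    obtain ⟨F₄, hF₄, hF₄exp, hF₄₁, hF₄₂⟩ := HasLogOn.union (hclosed a b) (hclosed b c) hF₁ hF₁exp
      hF₂ hF₂exp (by
        rw [cell_inter, show ({a, b} ∩ {b, c} : Finset (Fin K.n)) = {b} by grind, cell_singleton]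
        rintro x rfl
        exact hF₂b.symm)
    obtain ⟨F₅, hF₅, hF₅exp, -⟩ := HasLogOn.union ((hclosed a b).union (hclosed b c))
      (hclosed c a) hF₄ hF₄exp hF₃ hF₃exp (by
        rw [union_inter_distrib_right, cell_inter, cell_inter,
          show ({a, b} ∩ {c, a} : Finset (Fin K.n)) = {a} by grind,
          show ({b, c} ∩ {c, a} : Finset (Fin K.n)) = {c} by grind, cell_singleton,
          cell_singleton]
        rintro x (rfl | rfl)
        · rw [hF₄₁ _ (single_mem_cell (by simp)), hclose]
        · rw [hF₄₂ _ (single_mem_cell (by simp)), hF₃c])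
    exact not_hasLogOn_boundary h2 H hσ hcard hpb hpos
      (HasLogOn.mono ⟨F₅, hF₅, hF₅exp⟩ (triangle_boundary_subset a b c))

/-- An edge of a triangulated disc lies in at most two triangles. -/
theorem not_three_triangles (h2 : K.IsTwoDimensional) {h : (Fin K.n → ℝ) → ℂ}
    {k : ℂ → Fin K.n → ℝ} (H : IsDiscParam K.body h k) {u v a b c : Fin K.n} (huv : u ≠ v)
    (ha : {u, v, a} ∈ K.faces) (hb : {u, v, b} ∈ K.faces) (hc : {u, v, c} ∈ K.faces)
    (hau : a ≠ u) (hav : a ≠ v) (hbu : b ≠ u) (hbv : b ≠ v) (hcu : c ≠ u) (hcv : c ≠ v)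
    (hab : a ≠ b) (hbc : b ≠ c) (hac : a ≠ c) : False := by
  classical
  have hclosed := fun s : Finset (Fin K.n) => (isCompact_cell s).isClosed
  let arc : Fin K.n → Set (Fin K.n → ℝ) := fun w => cell {u, w} ∪ cell {v, w}
  have harc : ∀ w, IsCompact (arc w) := fun w => (isCompact_cell _).union (isCompact_cell _)
  have harcsub : ∀ w, arc w ⊆ cell {u, v, w} := fun w =>
    union_subset (cell_mono (by grind)) (cell_mono (by grind))
  have harcne : ∀ w, (arc w).Nonempty := fun w =>
    ⟨Pi.single w 1, Or.inl (single_mem_cell (by simp))⟩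
  have harcconn : ∀ w, IsPreconnected (arc w) := fun w =>
    IsPreconnected.union (Pi.single w 1) (single_mem_cell (by simp)) (single_mem_cell (by simp))
      (convex_cell _).isPreconnected (convex_cell _).isPreconnected
  let T : Fin K.n → Set (Fin K.n → ℝ) := fun w => {x ∈ cell {u, v, w} | 0 < x u ∧ 0 < x v}
  have hTconv : ∀ w, Convex ℝ (T w) := fun w =>
    (convex_cell _).inter
      ((convex_halfSpace_gt (LinearMap.proj u : (Fin K.n → ℝ) →ₗ[ℝ] ℝ).isLinear 0).inter
        (convex_halfSpace_gt (LinearMap.proj v : (Fin K.n → ℝ) →ₗ[ℝ] ℝ).isLinear 0))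
  have hmid : ∀ w, (fun i => if i ∈ ({u, v} : Finset (Fin K.n)) then (1 / 2 : ℝ) else 0) ∈ T w := by
    intro w
    refine ⟨⟨fun i => ?_, ?_, fun i hi => ?_⟩, by simp, by simp⟩
    · dsimp only; split_ifs <;> norm_num
    · rw [Finset.sum_ite_mem, Finset.univ_inter, Finset.sum_const, Finset.card_pair huv]
      norm_num
    · by_contra hi'
      have : i ∉ ({u, v} : Finset (Fin K.n)) := by grind
      simp [this] at hi
  have hTconn : IsPreconnected (T a ∪ T b) :=
    IsPreconnected.union _ (hmid a) (hmid b) (hTconv a).isPreconnected (hTconv b).isPreconnected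
  let bary : Fin K.n → Fin K.n → ℝ := fun w i =>
    if i ∈ ({u, v, w} : Finset (Fin K.n)) then 1 / 3 else 0
  have hbary : ∀ w, w ≠ u → w ≠ v → bary w ∈ T w := by
    intro w hwu hwv
    have hcard : ({u, v, w} : Finset (Fin K.n)).card = 3 := by
      rw [Finset.card_eq_three]
      exact ⟨u, v, w, huv, hwu.symm, hwv.symm, rfl⟩
    refine ⟨⟨fun i => ?_, ?_, fun i hi => ?_⟩, by simp [bary], by simp [bary]⟩
    · simp only [bary]; split_ifs <;> norm_num
    · simp only [bary]
      rw [Finset.sum_ite_mem, Finset.univ_inter, Finset.sum_const, hcard]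
      norm_num
    · by_contra hi'
      exact hi (if_neg hi')
  have hTbody : T a ∪ T b ⊆ K.body := union_subset
    (fun x hx => cell_subset_body ha hx.1) (fun x hx => cell_subset_body hb hx.1)
  have hnotmem : ∀ w ∉ ({u, v, b} : Finset (Fin K.n)), bary b ∉ cell {u, v, w} := by
    intro w hw hmem
    have := hmem.2.2 b (by simp [bary])
    grind
  -- the loop `arc a ∪ arc c` bounds a disc missing the barycentre of `{u, v, b}`
  have hlogb : HasLogOn (fun x => h x - h (bary b)) (arc a ∪ arc c) := by
    have hbb := cell_subset_body hb (hbary b hbu hbv).1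
    refine (HasLogOn.union_of_isPreconnected (hclosed _) (hclosed _)
      (hasLogOn_cell H ha hbb (hnotmem a (by grind)))
      (hasLogOn_cell H hc hbb (hnotmem c (by grind))) ?_ ?_).mono
      (union_subset_union (harcsub a) (harcsub c))
    · rw [cell_inter]
      exact (convex_cell _).isPreconnected
    · exact ⟨Pi.single u 1, single_mem_cell (by simp), single_mem_cell (by simp)⟩
  have hloga : HasLogOn (fun x => h x - h (bary a)) (arc a ∪ arc c) := by
    refine HasLogOn.of_homotopy (φ := fun (p : Fin K.n → ℝ) x => h x - h p) (t₀ := bary b)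
      (t₁ := bary a) ((harc a).union (harc c)) hTconn ?_ ?_ (Or.inr (hbary b hbu hbv))
      (Or.inl (hbary a hau hav)) hlogb
    · exact (H.continuous_h.comp continuous_snd).sub (H.continuous_h.comp continuous_fst)
    · intro p hp x hx h0
      have hxb : x ∈ K.body := by
        rcases hx with hx | hx
        · exact cell_subset_body ha (harcsub a hx)
        · exact cell_subset_body hc (harcsub c hx)
      have hxp := H.injOn hxb (hTbody hp) (sub_eq_zero.1 h0)
      have hpos : 0 < p u ∧ 0 < p v := hp.elim (fun h => h.2) (fun h => h.2)
      rw [← hxp] at hpos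
      rcases hx with (hx | hx) | (hx | hx)
      · have := hx.2.2 v hpos.2.ne'
        grind
      · have := hx.2.2 u hpos.1.ne'
        grind
      · have := hx.2.2 v hpos.2.ne'
        grind
      · have := hx.2.2 u hpos.1.ne'
        grind
  have haa := cell_subset_body ha (hbary a hau hav).1
  have hlogfull : HasLogOn (fun x => h x - h (bary a)) ((arc a ∪ arc c) ∪ cell {u, v, c}) := by
    have hinter : (arc a ∪ arc c) ∩ cell {u, v, c} = arc c := by
      refine Subset.antisymm ?_ (fun x hx => ⟨Or.inr hx, harcsub c hx⟩)
      rintro x ⟨hx | hx, hxc⟩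
      · rcases hx with hx | hx
        · have hmem : x ∈ cell ({u, a} ∩ {u, v, c}) := by
            rw [← cell_inter]
            exact ⟨hx, hxc⟩
          exact Or.inl (cell_mono (by grind) hmem)
        · have hmem : x ∈ cell ({v, a} ∩ {u, v, c}) := by
            rw [← cell_inter]
            exact ⟨hx, hxc⟩
          exact Or.inr (cell_mono (by grind) hmem)
      · exact hx
    refine HasLogOn.union_of_isPreconnected ((harc a).union (harc c)).isClosed (hclosed _) hloga
      (hasLogOn_cell H hc haa fun hmem => ?_) ?_ ?_
    · have := hmem.2.2 a (by simp [bary])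
      grind
    · rw [hinter]
      exact harcconn c
    · rw [hinter]
      exact harcne c
  refine not_hasLogOn_boundary h2 H ha (Finset.card_eq_three.2
    ⟨u, v, a, huv, hau.symm, hav.symm, rfl⟩) haa
    (fun w hw => by simp only [bary, if_pos hw]; norm_num)
    (hlogfull.mono ((triangle_boundary_subset u v a).trans ?_))
  rintro x ((hx | hx) | hx)
  · exact Or.inr (cell_mono (by grind) hx)
  · exact Or.inl (Or.inl (Or.inr hx))
  · exact Or.inl (Or.inl (Or.inl (Finset.pair_comm u a ▸ hx)))

end SComplex

namespace SComplex

variable {K : SComplex}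

/-- The `i`-simplices of a complex. -/
abbrev Simplex (K : SComplex) (i : ℕ) : Type :=
  {s // s ∈ K.faces.filter fun s => s.card = i + 1}

/-- The initial vertex of an edge, for an arbitrary choice of orientation. -/
noncomputable def src (e : K.Simplex 1) : Fin K.n :=
  (Finset.card_eq_two.1 (Finset.mem_filter.1 e.2).2).choose

/-- The terminal vertex of an edge, for an arbitrary choice of orientation. -/
noncomputable def tgt (e : K.Simplex 1) : Fin K.n :=
  (Finset.card_eq_two.1 (Finset.mem_filter.1 e.2).2).choose_spec.choose

theorem src_ne_tgt (e : K.Simplex 1) : src e ≠ tgt e :=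
  (Finset.card_eq_two.1 (Finset.mem_filter.1 e.2).2).choose_spec.choose_spec.1

theorem simplex_eq_src_tgt (e : K.Simplex 1) : e.1 = {src e, tgt e} :=
  (Finset.card_eq_two.1 (Finset.mem_filter.1 e.2).2).choose_spec.choose_spec.2

/-- The value of a `0`-cochain at a vertex. -/
def vertexValue {R : Type*} [AddCommGroup R] (g : K.Simplex 0 → R) (v : Fin K.n) : R :=
  if h : {v} ∈ K.faces.filter fun s => s.card = 0 + 1 then g ⟨_, h⟩ else 0

/-- The value of a `1`-cochain at an ordered pair of vertices. -/
noncomputable def edgeValue {R : Type*} [AddCommGroup R] (x : K.Simplex 1 → R) (u v : Fin K.n) :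
    R :=
  if h : {u, v} ∈ K.faces.filter fun s => s.card = 1 + 1 then
    have e : K.Simplex 1 := ⟨{u, v}, h⟩
    if u = src e then x e else - x e
  else 0

section Cochains

variable {R : Type*} [AddCommGroup R]

theorem vertexValue_of_mem (g : K.Simplex 0 → R) (s : K.Simplex 0) {v : Fin K.n}
    (hs : s.1 = {v}) : vertexValue g v = g s := by
  obtain ⟨s, h⟩ := s
  subst hs
  exact dif_pos h

/-- An alternating function of pairs of vertices is recovered from its values on oriented
edges. -/
theorem edgeValue_eq {x : K.Simplex 1 → R} {J : Fin K.n → Fin K.n → R}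
    (hJ : ∀ u v, {u, v} ∈ K.faces → J u v = - J v u) (hx : ∀ e, x e = J (src e) (tgt e))
    {u v : Fin K.n} (huv : u ≠ v) (he : {u, v} ∈ K.faces) : edgeValue x u v = J u v := by
  have h : {u, v} ∈ K.faces.filter fun s => s.card = 1 + 1 :=
    Finset.mem_filter.2 ⟨he, Finset.card_pair huv⟩
  have h1 : {u, v} = _ := simplex_eq_src_tgt (⟨{u, v}, h⟩ : K.Simplex 1)
  have h3 := src_ne_tgt (⟨{u, v}, h⟩ : K.Simplex 1)
  rw [edgeValue, dif_pos h]
  dsimp only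
  rw [hx]
  generalize src (⟨{u, v}, h⟩ : K.Simplex 1) = a at *
  generalize tgt (⟨{u, v}, h⟩ : K.Simplex 1) = b at *
  split_ifs with hu
  · subst hu
    have : b = v := by
      have : b ∈ ({u, v} : Finset (Fin K.n)) := h1 ▸ by simp
      grind
    rw [this]
  · have hav : a = v := by
      have : a ∈ ({u, v} : Finset (Fin K.n)) := h1 ▸ by simp
      grind
    have hbu : b = u := by
      have : b ∈ ({u, v} : Finset (Fin K.n)) := h1 ▸ by simp
      grind
    rw [hav, hbu, hJ u v he]

theorem edgeValue_src_tgt (x : K.Simplex 1 → R) (e : K.Simplex 1) :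
    edgeValue x (src e) (tgt e) = x e := by
  have h := simplex_eq_src_tgt e
  have he : {src e, tgt e} ∈ K.faces.filter fun s => s.card = 1 + 1 := h ▸ e.2
  have hee : (⟨_, he⟩ : K.Simplex 1) = e := Subtype.ext h.symm
  rw [edgeValue, dif_pos he, hee, if_pos rfl]

theorem edgeValue_symm (x : K.Simplex 1 → R) (u v : Fin K.n) :
    edgeValue x u v = - edgeValue x v u := by
  by_cases h : {u, v} ∈ K.faces.filter fun s => s.card = 1 + 1
  · have h' : {v, u} ∈ K.faces.filter fun s => s.card = 1 + 1 := Finset.pair_comm u v ▸ h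
    have hee : (⟨_, h'⟩ : K.Simplex 1) = ⟨_, h⟩ := Subtype.ext (Finset.pair_comm v u)
    have h1 : {u, v} = _ := simplex_eq_src_tgt (⟨{u, v}, h⟩ : K.Simplex 1)
    have huv : u ≠ v := fun huv => by
      have := (Finset.mem_filter.1 h).2
      simp [huv] at this
    have h4 : src (⟨{u, v}, h⟩ : K.Simplex 1) ∈ ({u, v} : Finset (Fin K.n)) := by
      generalize src (⟨{u, v}, h⟩ : K.Simplex 1) = a at *
      rw [h1]
      simp
    rw [edgeValue, edgeValue, dif_pos h, dif_pos h', hee]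
    dsimp only
    generalize src (⟨{u, v}, h⟩ : K.Simplex 1) = a at h4 ⊢
    rcases Finset.mem_insert.1 h4 with rfl | h5
    · rw [if_pos rfl, if_neg huv.symm, neg_neg]
    · rw [Finset.mem_singleton.1 h5, if_neg huv, if_pos rfl]
  · have h' : {v, u} ∉ K.faces.filter fun s => s.card = 1 + 1 := Finset.pair_comm u v ▸ h
    rw [edgeValue, edgeValue, dif_neg h, dif_neg h', neg_zero]

end Cochains

/-- The coboundary of `0`-cochains. -/
noncomputable def coboundaryZero (K : SComplex) :
    (K.Simplex 0 → ℚ) →ₗ[ℚ] (K.Simplex 1 → ℚ) where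
  toFun g e := vertexValue g (tgt e) - vertexValue g (src e)
  map_add' g g' := by
    ext e
    simp only [vertexValue, Pi.add_apply]
    split_ifs <;> ring
  map_smul' c g := by
    ext e
    simp only [vertexValue, Pi.smul_apply, smul_eq_mul, RingHom.id_apply]
    split_ifs <;> ring

theorem exists_vertices (t : K.Simplex 2) : ∃ p : Fin K.n × Fin K.n × Fin K.n,
    p.1 ≠ p.2.1 ∧ p.1 ≠ p.2.2 ∧ p.2.1 ≠ p.2.2 ∧ t.1 = {p.1, p.2.1, p.2.2} := by
  obtain ⟨a, b, c, h⟩ := Finset.card_eq_three.1 (Finset.mem_filter.1 t.2).2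
  exact ⟨(a, b, c), h⟩

/-- The vertices of a triangle in an arbitrarily chosen order. -/
noncomputable def vertices (t : K.Simplex 2) : Fin K.n × Fin K.n × Fin K.n :=
  (exists_vertices t).choose

theorem vertices_spec (t : K.Simplex 2) : (vertices t).1 ≠ (vertices t).2.1 ∧
    (vertices t).1 ≠ (vertices t).2.2 ∧ (vertices t).2.1 ≠ (vertices t).2.2 ∧
    t.1 = {(vertices t).1, (vertices t).2.1, (vertices t).2.2} :=
  (exists_vertices t).choose_spec

/-- The sum of a function of ordered pairs of vertices around a triangle. -/
noncomputable def cyclicSum {R : Type*} [AddCommGroup R] (J : Fin K.n → Fin K.n → R)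
    (t : K.Simplex 2) : R :=
  J (vertices t).1 (vertices t).2.1 + J (vertices t).2.1 (vertices t).2.2 +
    J (vertices t).2.2 (vertices t).1

/-- The coboundary of `1`-cochains. -/
noncomputable def coboundaryOne (K : SComplex) :
    (K.Simplex 1 → ℚ) →ₗ[ℚ] (K.Simplex 2 → ℚ) where
  toFun x t := cyclicSum (edgeValue x) t
  map_add' x y := by
    have h : ∀ u v, edgeValue (x + y) u v = edgeValue x u v + edgeValue y u v := fun u v => by
      simp only [edgeValue, Pi.add_apply]
      split_ifs <;> ring
    ext t
    simp only [cyclicSum, h, Pi.add_apply]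
    ring
  map_smul' c x := by
    have h : ∀ u v, edgeValue (c • x) u v = c * edgeValue x u v := fun u v => by
      simp only [edgeValue, Pi.smul_apply, smul_eq_mul]
      split_ifs <;> ring
    ext t
    simp only [cyclicSum, h, Pi.smul_apply, smul_eq_mul, RingHom.id_apply]
    ring

theorem coboundaryOne_eq_cyclicSum {x : K.Simplex 1 → ℚ} {J : Fin K.n → Fin K.n → ℚ}
    (hJ : ∀ u v, {u, v} ∈ K.faces → J u v = - J v u) (hx : ∀ e, x e = J (src e) (tgt e))
    (t : K.Simplex 2) : coboundaryOne K x t = cyclicSum J t := by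
  obtain ⟨h1, h3, h4, h5⟩ := vertices_spec t
  have ht := (Finset.mem_filter.1 t.2).1
  have hsub : ∀ u v, ({u, v} : Finset (Fin K.n)) ⊆ t.1 → {u, v} ∈ K.faces := fun u v h =>
    K.down_closed _ ht _ h (by simp)
  change cyclicSum (edgeValue x) t = _
  simp only [cyclicSum]
  rw [edgeValue_eq hJ hx h1 (hsub _ _ (by grind)), edgeValue_eq hJ hx h4 (hsub _ _ (by grind)),
    edgeValue_eq hJ hx h3.symm (hsub _ _ (by grind))]

theorem ker_coboundaryZero {h : (Fin K.n → ℝ) → ℂ} {k : ℂ → Fin K.n → ℝ}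
    (H : IsDiscParam K.body h k) : LinearMap.ker K.coboundaryZero = ℚ ∙ (1 : K.Simplex 0 → ℚ) := by
  ext g
  rw [LinearMap.mem_ker, Submodule.mem_span_singleton]
  have hvert : ∀ s : K.Simplex 0, ∃ v, s.1 = {v} ∧ {v} ∈ K.faces := fun s => by
    obtain ⟨v, hv⟩ := Finset.card_eq_one.1 (Finset.mem_filter.1 s.2).2
    exact ⟨v, hv, hv ▸ (Finset.mem_filter.1 s.2).1⟩
  constructor
  · intro hg
    have hedge : ∀ u v, {u, v} ∈ K.faces → vertexValue g u = vertexValue g v := by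
      intro u v huv
      by_cases hne : u = v
      · rw [hne]
      have he : ∀ e, (0 : K.Simplex 1 → ℚ) e = vertexValue g (tgt e) - vertexValue g (src e) :=
        fun e => congrFun hg.symm e
      have := edgeValue_eq (J := fun u v => vertexValue g v - vertexValue g u)
        (fun _ _ _ => (neg_sub _ _).symm) he hne huv
      have h0 : edgeValue (0 : K.Simplex 1 → ℚ) u v = 0 := by
        simp only [edgeValue, Pi.zero_apply, neg_zero, ite_self, dite_eq_ite]
      linarith
    rcases isEmpty_or_nonempty (K.Simplex 0) with hemp | ⟨⟨s₀⟩⟩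
    · exact ⟨0, Subsingleton.elim _ _⟩
    · refine ⟨g s₀, funext fun s => ?_⟩
      obtain ⟨u, hu, hu'⟩ := hvert s₀
      obtain ⟨v, hv, hv'⟩ := hvert s
      simpa [vertexValue_of_mem g s₀ hu, vertexValue_of_mem g s hv] using
        eq_of_edge_constant H (vertexValue g) hedge hu' hv'
  · rintro ⟨c, rfl⟩
    ext e
    have hmem : ∀ v ∈ e.1, vertexValue (c • (1 : K.Simplex 0 → ℚ)) v = c := fun v hv => by
      have : {v} ∈ K.faces.filter fun s => s.card = 0 + 1 := Finset.mem_filter.2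
        ⟨K.down_closed _ (Finset.mem_filter.1 e.2).1 _ (by simpa using hv) (by simp), by simp⟩
      rw [vertexValue_of_mem _ ⟨_, this⟩ rfl]
      simp
    have he := simplex_eq_src_tgt e
    change vertexValue _ _ - vertexValue _ _ = (0 : ℚ)
    rw [hmem _ (by grind), hmem _ (by grind), sub_self]

theorem range_coboundaryOne (h2 : K.IsTwoDimensional) {h : (Fin K.n → ℝ) → ℂ}
    {k : ℂ → Fin K.n → ℝ} (H : IsDiscParam K.body h k) :
    LinearMap.range K.coboundaryOne = ⊤ := by
  classical
  rw [eq_top_iff, ← (Pi.basisFun ℚ (K.Simplex 2)).span_eq, Submodule.span_le]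
  rintro _ ⟨t, rfl⟩
  have ht := Finset.mem_filter.1 t.2
  obtain ⟨J, hanti, hzero, hne⟩ := exists_cochain_of_triangle h2 H ht.1 ht.2
  have hval := coboundaryOne_eq_cyclicSum (x := fun e => (J (src e) (tgt e) : ℚ))
    (J := fun u v => (J u v : ℚ)) (fun u v huv => by exact_mod_cast hanti u v huv) fun _ => rfl
  have hvert : ∀ s : K.Simplex 2, s.1 = {(vertices s).1, (vertices s).2.1, (vertices s).2.2} :=
    fun s => (vertices_spec s).2.2.2
  have hcyc : ∀ s : K.Simplex 2, cyclicSum (fun u v => (J u v : ℚ)) s = ((cyclicSum J s : ℤ) : ℚ) :=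
    fun s => by simp only [cyclicSum]; push_cast; ring
  have hnet : ((cyclicSum J t : ℤ) : ℚ) ≠ 0 := by
    exact_mod_cast hne _ _ _ (hvert t).symm
  refine ⟨((cyclicSum J t : ℤ) : ℚ)⁻¹ • fun e => (J (src e) (tgt e) : ℚ), ?_⟩
  ext s
  rw [map_smul, Pi.smul_apply, hval, hcyc, smul_eq_mul, Pi.basisFun_apply]
  by_cases hst : s = t
  · subst hst
    rw [Pi.single_eq_same, inv_mul_cancel₀ hnet]
  · have : cyclicSum J s = 0 := hzero _ _ _ (hvert s ▸ (Finset.mem_filter.1 s.2).1)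
      fun he => hst (Subtype.ext ((hvert s).trans he))
    rw [Pi.single_eq_of_ne hst, this, Int.cast_zero, mul_zero]

theorem ker_coboundaryOne {h : (Fin K.n → ℝ) → ℂ} {k : ℂ → Fin K.n → ℝ}
    (H : IsDiscParam K.body h k) :
    LinearMap.ker K.coboundaryOne = LinearMap.range K.coboundaryZero := by
  ext x
  rw [LinearMap.mem_ker]
  constructor
  · intro hx
    obtain ⟨⟨D, hD⟩, hint⟩ :=
      IsLocalization.exist_integer_multiples_of_finite (nonZeroDivisors ℤ) x
    have hD0 : (D : ℚ) ≠ 0 := by exact_mod_cast nonZeroDivisors.ne_zero hD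
    choose y hy using hint
    have hy' : ∀ e, (y e : ℚ) = D * x e := fun e => by
      have := hy e
      rw [Algebra.smul_def] at this
      simpa using this
    have hval : ∀ u v, ((edgeValue y u v : ℤ) : ℚ) = D * edgeValue x u v := fun u v => by
      simp only [edgeValue]
      split_ifs <;> simp [hy']
    obtain ⟨g, hg⟩ := exists_primitive H (edgeValue y) (by
      intro a b d habd
      have hanti := edgeValue_symm y
      by_cases hcard : ({a, b, d} : Finset (Fin K.n)).card = 3
      · let t : K.Simplex 2 := ⟨{a, b, d}, Finset.mem_filter.2 ⟨habd, hcard⟩⟩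
        have ht : cyclicSum (edgeValue y) t = 0 := by
          have h0 : cyclicSum (edgeValue x) t = 0 := congrFun hx t
          have : ((cyclicSum (edgeValue y) t : ℤ) : ℚ) = D * cyclicSum (edgeValue x) t := by
            simp only [cyclicSum]
            push_cast
            simp only [hval]
            ring
          rw [h0, mul_zero] at this
          exact_mod_cast this
        have hvert : {a, b, d} = {(vertices t).1, (vertices t).2.1, (vertices t).2.2} :=
          (vertices_spec t).2.2.2
        simp only [cyclicSum] at ht
        generalize (vertices t).1 = p at *
        generalize (vertices t).2.1 = q at *
        generalize (vertices t).2.2 = r at *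
        have ha : a ∈ ({p, q, r} : Finset (Fin K.n)) := hvert ▸ by simp
        have hb : b ∈ ({p, q, r} : Finset (Fin K.n)) := hvert ▸ by simp
        have hd : d ∈ ({p, q, r} : Finset (Fin K.n)) := hvert ▸ by simp
        simp only [Finset.mem_insert, Finset.mem_singleton] at ha hb hd
        have h1 := hanti p p
        have h3 := hanti q q
        have h4 := hanti r r
        have h5 := hanti p q
        have h6 := hanti q r
        have h7 := hanti r p
        rcases ha with ha | ha | ha <;> rcases hb with hb | hb | hb <;>
          rcases hd with hd | hd | hd <;> rw [ha, hb, hd] <;> omega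
      · have hdeg : a = b ∨ b = d ∨ a = d := by
          by_contra! hne
          exact hcard (Finset.card_eq_three.2 ⟨a, b, d, hne.1, hne.2.2, hne.2.1, rfl⟩)
        have h1 := hanti a a
        have h3 := hanti b b
        have h4 := hanti a b
        rcases hdeg with rfl | rfl | rfl <;> omega)
    refine ⟨fun s => (D : ℚ)⁻¹ * ∑ v ∈ s.1, (g v : ℚ), ?_⟩
    ext e
    have he := simplex_eq_src_tgt e
    have hmem : ∀ v ∈ e.1, vertexValue
        (fun s : K.Simplex 0 => (D : ℚ)⁻¹ * ∑ v ∈ s.1, (g v : ℚ)) v = (D : ℚ)⁻¹ * g v := by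
      intro v hv
      have : {v} ∈ K.faces.filter fun s => s.card = 0 + 1 := Finset.mem_filter.2
        ⟨K.down_closed _ (Finset.mem_filter.1 e.2).1 _ (by simpa using hv) (by simp), by simp⟩
      rw [vertexValue_of_mem _ ⟨_, this⟩ rfl]
      simp
    change vertexValue _ _ - vertexValue _ _ = x e
    rw [hmem _ (by grind), hmem _ (by grind)]
    have h1 := hg (src e) (tgt e) (he ▸ (Finset.mem_filter.1 e.2).1)
    rw [edgeValue_src_tgt] at h1
    have h3 : (y e : ℚ) = g (tgt e) - g (src e) := by exact_mod_cast h1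
    rw [← mul_sub, ← h3, hy', inv_mul_cancel_left₀ hD0]
  · rintro ⟨g, rfl⟩
    ext t
    rw [coboundaryOne_eq_cyclicSum (x := K.coboundaryZero g)
      (J := fun u v => vertexValue g v - vertexValue g u)
      (fun _ _ _ => (neg_sub _ _).symm) fun _ => rfl]
    simp only [cyclicSum, Pi.zero_apply]
    ring

/-- A triangulated disc has Euler characteristic one. -/
theorem eulerSum_eq_one (h2 : K.IsTwoDimensional) {h : (Fin K.n → ℝ) → ℂ}
    {k : ℂ → Fin K.n → ℝ} (H : IsDiscParam K.body h k) : K.eulerSum = 1 := by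
  have hone : (1 : K.Simplex 0 → ℚ) ≠ 0 := by
    obtain ⟨-, hsum, s, hs, -⟩ := H.mapsTo_k 0 (by simp)
    obtain ⟨v, hv⟩ : s.Nonempty := by
      rw [Finset.nonempty_iff_ne_empty]
      rintro rfl
      exact K.not_empty_mem hs
    have hmem : {v} ∈ K.faces.filter fun s => s.card = 0 + 1 := Finset.mem_filter.2
      ⟨K.down_closed _ hs _ (by simpa using hv) (by simp), by simp⟩
    exact fun h0 => one_ne_zero (congrFun h0 ⟨_, hmem⟩)
  have h0 := LinearMap.finrank_range_add_finrank_ker K.coboundaryZero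
  have h1 := LinearMap.finrank_range_add_finrank_ker K.coboundaryOne
  rw [ker_coboundaryZero H, finrank_span_singleton hone, Module.finrank_fintype_fun_eq_card,
    Fintype.card_coe] at h0
  rw [range_coboundaryOne h2 H, ker_coboundaryOne H, finrank_top,
    Module.finrank_fintype_fun_eq_card, Module.finrank_fintype_fun_eq_card, Fintype.card_coe,
    Fintype.card_coe] at h1
  simp only [eulerSum, count]
  omega

end SComplex

namespace SComplex

variable {K : SComplex}

/-- The edges lying on exactly one triangle. -/
def boundaryEdges (K : SComplex) : Finset (Finset (Fin K.n)) :=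
  K.faces.filter fun e => e.card = 2 ∧ (K.faces.filter fun s => s.card = 3 ∧ e ⊆ s).card = 1

/-- The vertices spanning a triangle with the edge `{u, v}`. -/
def apices (K : SComplex) (u v : Fin K.n) : Finset (Fin K.n) :=
  Finset.univ.filter fun w => w ≠ u ∧ w ≠ v ∧ {u, v, w} ∈ K.faces

theorem mem_apices {u v w : Fin K.n} :
    w ∈ K.apices u v ↔ w ≠ u ∧ w ≠ v ∧ {u, v, w} ∈ K.faces := by
  simp [apices]

theorem card_triangles_eq_card_apices {u v : Fin K.n} (huv : u ≠ v) :
    (K.faces.filter fun s => s.card = 3 ∧ {u, v} ⊆ s).card = (K.apices u v).card := by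
  symm
  refine Finset.card_bij (fun w _ => {u, v, w}) (fun w hw => ?_) (fun w hw w' hw' he => ?_)
    fun s hs => ?_
  · obtain ⟨hwu, hwv, hf⟩ := mem_apices.1 hw
    exact Finset.mem_filter.2 ⟨hf, Finset.card_eq_three.2
      ⟨u, v, w, huv, hwu.symm, hwv.symm, rfl⟩, by grind⟩
  · have h1 := mem_apices.1 hw
    have : w ∈ ({u, v, w'} : Finset (Fin K.n)) := he ▸ by simp
    grind
  · obtain ⟨hs, hcard, hsub⟩ := Finset.mem_filter.1 hs
    obtain ⟨w, hw⟩ : (s \ {u, v}).Nonempty := by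
      rw [← Finset.card_pos, Finset.card_sdiff_of_subset hsub, hcard, Finset.card_pair huv]
      norm_num
    have hws := Finset.mem_sdiff.1 hw
    have heq : ({u, v, w} : Finset (Fin K.n)) = s := by
      refine Finset.eq_of_subset_of_card_le (by grind) ?_
      rw [hcard, Finset.card_eq_three.2 ⟨u, v, w, huv, by grind, by grind, rfl⟩]
    exact ⟨w, mem_apices.2 ⟨by grind, by grind, heq ▸ hs⟩, heq⟩

theorem card_apices (h2 : K.IsTwoDimensional) {h : (Fin K.n → ℝ) → ℂ}
    {k : ℂ → Fin K.n → ℝ} (H : IsDiscParam K.body h k) {u v : Fin K.n} (huv : u ≠ v)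
    (he : {u, v} ∈ K.faces) : (K.apices u v).card = 1 ∨ (K.apices u v).card = 2 := by
  have hpos : 0 < (K.apices u v).card := by
    obtain ⟨w, hw⟩ := exists_triangle_of_edge H huv he
    exact Finset.card_pos.2 ⟨w, mem_apices.2 hw⟩
  have hle : (K.apices u v).card ≤ 2 := by
    by_contra! hlt
    obtain ⟨a, b, c, ha, hb, hc, hab, hac, hbc⟩ := Finset.two_lt_card_iff.1 hlt
    rw [mem_apices] at ha hb hc
    exact not_three_triangles h2 H huv ha.2.2 hb.2.2 hc.2.2 ha.1 ha.2.1 hb.1 hb.2.1 hc.1 hc.2.1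
      hab hbc hac
  omega

/-- The link of a vertex, as a graph on its neighbours. -/
def link (K : SComplex) (v : Fin K.n) : SimpleGraph {w // w ≠ v ∧ {v, w} ∈ K.faces} where
  Adj w w' := w ≠ w' ∧ {v, w.1, w'.1} ∈ K.faces
  symm := ⟨fun w w' hw => ⟨hw.1.symm, by
    have h := hw.2
    rwa [Finset.pair_comm] at h⟩⟩
  loopless := ⟨fun _ hw => hw.1 rfl⟩

theorem link_preconnected {h : (Fin K.n → ℝ) → ℂ} {k : ℂ → Fin K.n → ℝ}
    (H : IsDiscParam K.body h k) (v : Fin K.n) : (K.link v).Preconnected := by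
  classical
  intro a b
  let f : Fin K.n → ℤ := fun w =>
    if hw : w ≠ v ∧ {v, w} ∈ K.faces then if (K.link v).Reachable a ⟨w, hw⟩ then 1 else 0 else 0
  have hab := eq_of_link_constant H (v := v) f (fun c d hc hd hcd => by
    by_cases hne : c = d
    · rw [hne]
    have hc' : c ≠ v ∧ {v, c} ∈ K.faces := ⟨hc, K.down_closed _ hcd _ (by grind) (by simp)⟩
    have hd' : d ≠ v ∧ {v, d} ∈ K.faces := ⟨hd, K.down_closed _ hcd _ (by grind) (by simp)⟩
    have hadj : (K.link v).Adj ⟨c, hc'⟩ ⟨d, hd'⟩ := ⟨fun he => hne (congrArg Subtype.val he), hcd⟩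
    have hiff : (K.link v).Reachable a ⟨c, hc'⟩ ↔ (K.link v).Reachable a ⟨d, hd'⟩ :=
      ⟨fun hr => hr.trans hadj.reachable, fun hr => hr.trans hadj.symm.reachable⟩
    simp only [f, dif_pos hc', dif_pos hd', hiff]) a.2.1 b.2.1 a.2.2 b.2.2
  simp only [f, dif_pos a.2, dif_pos b.2, SimpleGraph.Reachable.refl, if_true] at hab
  by_contra hnot
  rw [if_neg hnot] at hab
  exact one_ne_zero hab

/-- A vertex of a triangulated disc lies on no or on exactly two boundary edges. -/
theorem card_boundaryEdges_at (h2 : K.IsTwoDimensional) {h : (Fin K.n → ℝ) → ℂ}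
    {k : ℂ → Fin K.n → ℝ} (H : IsDiscParam K.body h k) (v : Fin K.n) :
    (K.boundaryEdges.filter fun e => v ∈ e).card = 0 ∨
      (K.boundaryEdges.filter fun e => v ∈ e).card = 2 := by
  classical
  have hdeg : ∀ w, (K.link v).degree w = (K.apices v w.1).card := fun w => by
    rw [← SimpleGraph.card_neighborFinset_eq_degree]
    refine Finset.card_bij (fun w' _ => w'.1) (fun w' hw' => ?_)
      (fun _ _ _ _ he => Subtype.ext he) fun w' hw' => ?_
    · rw [SimpleGraph.mem_neighborFinset] at hw'
      exact mem_apices.2 ⟨w'.2.1, fun he => hw'.1 (Subtype.ext he.symm), hw'.2⟩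
    · obtain ⟨h1, h3, h4⟩ := mem_apices.1 hw'
      refine ⟨⟨w', h1, K.down_closed _ h4 _ (by grind) (by simp)⟩, ?_, rfl⟩
      rw [SimpleGraph.mem_neighborFinset]
      exact ⟨fun he => h3 (congrArg Subtype.val he).symm, h4⟩
  have hends : (K.boundaryEdges.filter fun e => v ∈ e).card =
      (Finset.univ.filter fun w => (K.link v).degree w = 1).card := by
    symm
    refine Finset.card_bij (fun w _ => {v, w.1}) (fun w hw => ?_) (fun w _ w' _ he => ?_)
      fun e he => ?_
    · rw [Finset.mem_filter, hdeg] at hw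
      refine Finset.mem_filter.2 ⟨Finset.mem_filter.2 ⟨w.2.2, Finset.card_pair w.2.1.symm, ?_⟩,
        by simp⟩
      rw [card_triangles_eq_card_apices w.2.1.symm, hw.2]
    · have : w.1 ∈ ({v, w'.1} : Finset (Fin K.n)) := he ▸ by simp
      have := w.2.1
      exact Subtype.ext (by grind)
    · obtain ⟨hb, hv⟩ := Finset.mem_filter.1 he
      obtain ⟨hf, hcard, hone⟩ := Finset.mem_filter.1 hb
      obtain ⟨w, hw⟩ : ∃ w, e.erase v = {w} := Finset.card_eq_one.1 (by
        rw [Finset.card_erase_of_mem hv, hcard])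
      have hwv : w ≠ v := Finset.ne_of_mem_erase (hw ▸ Finset.mem_singleton_self w : w ∈ e.erase v)
      have hee : {v, w} = e := by rw [← Finset.insert_erase hv, hw]
      subst hee
      rw [card_triangles_eq_card_apices hwv.symm] at hone
      exact ⟨⟨w, hwv, hf⟩, Finset.mem_filter.2 ⟨Finset.mem_univ _, by rw [hdeg, hone]⟩, rfl⟩
  rw [hends]
  have hsum : ∑ w, ((K.link v).degree w + if (K.link v).degree w = 1 then 1 else 0) =
      2 * Fintype.card {w // w ≠ v ∧ {v, w} ∈ K.faces} := by
    rw [Finset.sum_congr rfl (g := fun _ => 2), Finset.sum_const, Finset.card_univ, smul_eq_mul,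
      mul_comm]
    intro w _
    rcases card_apices h2 H w.2.1.symm w.2.2 with hw | hw <;> simp [hdeg, hw]
  rw [Finset.sum_add_distrib, SimpleGraph.sum_degrees_eq_twice_card_edges, ← Finset.card_filter]
    at hsum
  rcases isEmpty_or_nonempty {w // w ≠ v ∧ {v, w} ∈ K.faces} with hemp | hne
  · left
    rw [Finset.card_eq_zero]
    exact Finset.eq_empty_of_isEmpty _
  · have hconn : (K.link v).Connected := ⟨link_preconnected H v⟩
    have hle := hconn.card_vert_le_card_edgeSet_add_one
    rw [Nat.card_eq_fintype_card, Nat.card_eq_fintype_card, ← SimpleGraph.edgeFinset_card] at hle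
    omega

/-- The boundary of a triangulated disc has as many vertices as edges. -/
theorem card_boundary_vertices (h2 : K.IsTwoDimensional) {h : (Fin K.n → ℝ) → ℂ}
    {k : ℂ → Fin K.n → ℝ} (H : IsDiscParam K.body h k) :
    (Finset.univ.filter fun v => ∃ e ∈ K.boundaryEdges, v ∈ e).card = K.boundaryEdges.card := by
  have hcount := Finset.sum_card_bipartiteAbove_eq_sum_card_bipartiteBelow
    (s := (Finset.univ : Finset (Fin K.n))) (t := K.boundaryEdges) fun v e => v ∈ e
  simp only [Finset.bipartiteAbove, Finset.bipartiteBelow] at hcount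
  rw [Finset.sum_congr rfl (g := fun v => if ∃ e ∈ K.boundaryEdges, v ∈ e then 2 else 0),
    Finset.sum_congr (s₁ := K.boundaryEdges) rfl (g := fun _ => 2), Finset.sum_const,
    ← Finset.sum_filter, Finset.sum_const] at hcount
  · simpa using hcount
  · intro e he
    rw [Finset.filter_univ_mem]
    exact (Finset.mem_filter.1 he).2.1
  · intro v _
    split_ifs with hv
    · obtain ⟨e, he, hve⟩ := hv
      refine (card_boundaryEdges_at h2 H v).resolve_left fun h0 => ?_
      rw [Finset.card_eq_zero] at h0
      exact Finset.notMem_empty e (h0 ▸ Finset.mem_filter.2 ⟨he, hve⟩)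
    · rw [Finset.card_eq_zero, Finset.filter_eq_empty_iff]
      exact fun e he hve => hv ⟨e, he, hve⟩

end SComplex

/-- If only members of `T` are identified, then the simplices outside `T` are counted without
change. -/
theorem identCount_add_card_filter {n m : ℕ} {S T : Finset (Finset (Fin n))} (hTS : T ⊆ S)
    {π : Fin n → Fin m}
    (hπ : ∀ s ∈ S, ∀ t ∈ S, s.image π = t.image π → s ≠ t → s ∈ T ∧ t ∈ T) (i : ℕ) :
    identCount S π i + (T.filter fun s => s.card = i + 1).card =
      identCount T π i + (S.filter fun s => s.card = i + 1).card := by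
  have hsplit : (S.filter fun s => s.card = i + 1) =
      (T.filter fun s => s.card = i + 1) ∪ ((S \ T).filter fun s => s.card = i + 1) := by
    rw [← Finset.filter_union, Finset.union_sdiff_of_subset hTS]
  have hdisj : Disjoint (T.filter fun s => s.card = i + 1)
      ((S \ T).filter fun s => s.card = i + 1) :=
    Finset.disjoint_filter_filter Finset.disjoint_sdiff
  have himage : Disjoint ((T.filter fun s => s.card = i + 1).image fun s => s.image π)
      (((S \ T).filter fun s => s.card = i + 1).image fun s => s.image π) := by
    rw [Finset.disjoint_left]
    intro x hx hx'
    obtain ⟨s, hs, rfl⟩ := Finset.mem_image.1 hx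
    obtain ⟨t, ht, hts⟩ := Finset.mem_image.1 hx'
    have hsT := (Finset.mem_filter.1 hs).1
    have htT := Finset.mem_sdiff.1 (Finset.mem_filter.1 ht).1
    exact htT.2 (hπ t htT.1 s (hTS hsT) hts fun he => htT.2 (he ▸ hsT)).1
  have hinj : (((S \ T).filter fun s => s.card = i + 1).image fun s => s.image π).card =
      ((S \ T).filter fun s => s.card = i + 1).card := by
    refine Finset.card_image_of_injOn fun s hs t ht hst => ?_
    by_contra hne
    have hsT := Finset.mem_sdiff.1 (Finset.mem_filter.1 hs).1
    have htT := Finset.mem_sdiff.1 (Finset.mem_filter.1 ht).1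
    exact hsT.2 (hπ s hsT.1 t htT.1 hst hne).1
  rw [identCount, identCount, hsplit, Finset.image_union, Finset.card_union_of_disjoint himage,
    Finset.card_union_of_disjoint hdisj, hinj]
  omega

/-- **Theorem 3 (main theorem).** Let `K` be a finite triangulated polygon in the plane,
i.e. a finite `2`-dimensional simplicial complex whose geometric realization is
homeomorphic to a closed disc, and let `K₀` be its boundary (the edges lying on exactly
one triangle, together with their vertices).  Suppose the vertices are identified via a
map `π` which is injective on each simplex, identifies only boundary vertices, and
identifies only boundary simplices.  Then, counting simplices after identification,
`χ(K) = χ(K₀) + 1`, i.e. `n₀ - n₁ + n₂ = (n₀(K₀) - n₁(K₀)) + 1`. -/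
theorem euler_of_triangulated_polygon_with_identifications
    (K : SComplex) (h2 : K.IsTwoDimensional)
    (hdisc : Nonempty (K.realization ≃ₜ
      ↥(Metric.closedBall (0 : EuclideanSpace ℝ (Fin 2)) 1)))
    (K₀ : Finset (Finset (Fin K.n)))
    (hK₀ : ∀ t, t ∈ K₀ ↔ t ∈ K.faces ∧
        ((t.card = 2 ∧ (K.faces.filter fun s => s.card = 3 ∧ t ⊆ s).card = 1) ∨
         (t.card = 1 ∧ ∃ e ∈ K.faces, e.card = 2 ∧ t ⊆ e ∧
            (K.faces.filter fun s => s.card = 3 ∧ e ⊆ s).card = 1)))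
    (m : ℕ) (π : Fin K.n → Fin m)
    (hπinj : ∀ s ∈ K.faces, Set.InjOn π ↑s)
    (hπbd : ∀ u v : Fin K.n, π u = π v → u ≠ v → {u} ∈ K₀ ∧ {v} ∈ K₀)
    (hπfaces : ∀ s ∈ K.faces, ∀ t ∈ K.faces,
      s.image π = t.image π → s ≠ t → s ∈ K₀ ∧ t ∈ K₀) :
    (identCount K.faces π 0 : ℤ) - identCount K.faces π 1 + identCount K.faces π 2
      = ((identCount K₀ π 0 : ℤ) - identCount K₀ π 1) + 1 := by
  obtain ⟨h, k, H⟩ := K.exists_isDiscParam hdisc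
  have hsub : K₀ ⊆ K.faces := fun t ht => ((hK₀ t).1 ht).1
  have hzero := identCount_add_card_filter hsub hπfaces 0
  have hone := identCount_add_card_filter hsub hπfaces 1
  have htwo := identCount_add_card_filter hsub hπfaces 2
  have htriangles : (K₀.filter fun s => s.card = 2 + 1) = ∅ := by
    rw [Finset.filter_eq_empty_iff]
    intro t ht
    have := (hK₀ t).1 ht
    omega
  have hedges : (K₀.filter fun s => s.card = 1 + 1) = K.boundaryEdges := by
    ext t
    rw [Finset.mem_filter, hK₀, SComplex.boundaryEdges, Finset.mem_filter]
    constructor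
    · rintro ⟨⟨hf, h1 | h1⟩, hcard⟩
      · exact ⟨hf, h1⟩
      · omega
    · rintro ⟨hf, h1⟩
      exact ⟨⟨hf, Or.inl h1⟩, h1.1⟩
  have hvertices : (K₀.filter fun s => s.card = 0 + 1).card = K.boundaryEdges.card := by
    rw [← SComplex.card_boundary_vertices h2 H]
    symm
    refine Finset.card_bij (fun v _ => {v}) (fun v hv => ?_)
      (fun _ _ _ _ he => Finset.singleton_injective he) fun t ht => ?_
    · obtain ⟨e, he, hve⟩ := (Finset.mem_filter.1 hv).2
      obtain ⟨hf, hcard, h1⟩ := Finset.mem_filter.1 he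
      have hve' : {v} ⊆ e := Finset.singleton_subset_iff.2 hve
      exact Finset.mem_filter.2 ⟨(hK₀ _).2 ⟨K.down_closed _ hf _ hve' (by simp),
        Or.inr ⟨by simp, e, hf, hcard, hve', h1⟩⟩, by simp⟩
    · obtain ⟨ht, hcard⟩ := Finset.mem_filter.1 ht
      obtain ⟨v, rfl⟩ := Finset.card_eq_one.1 hcard
      obtain ⟨-, h1 | ⟨-, e, hf, he, hve, h1⟩⟩ := (hK₀ _).1 ht
      · simp at h1
      · exact ⟨v, Finset.mem_filter.2 ⟨Finset.mem_univ _, e, Finset.mem_filter.2 ⟨hf, he, h1⟩,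
          Finset.singleton_subset_iff.1 hve⟩, rfl⟩
  have hident : identCount K₀ π 2 = 0 := by
    rw [identCount, htriangles, Finset.image_empty, Finset.card_empty]
  have heuler := SComplex.eulerSum_eq_one h2 H
  rw [hvertices] at hzero
  rw [hedges] at hone
  rw [htriangles, hident, Finset.card_empty] at htwo
  simp only [SComplex.eulerSum, SComplex.count] at heuler
  omega
end

section
/- Subdividing a triangle σ of a 2-dimensional triangulation K by a segment τ = (x,y), where x and y lie on two different sides of σ (subdividing also the adjacent triangles sharing those sides so the result K' is again a simplicial complex), leaves the quantity n0 - n1 + n2 unchanged: it is the same for K and K'. -/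
open Geometry
open scoped Classical

section BarycentricCoordinates

variable {E : Type*}

/-- The sum of the coefficients of a finitely supported function on `E`. -/
noncomputable def coeffSum : (E →₀ ℝ) →ₗ[ℝ] ℝ :=
  Finsupp.linearCombination ℝ fun _ => (1 : ℝ)

@[simp]
theorem coeffSum_single (v : E) (c : ℝ) : coeffSum (Finsupp.single v c) = c := by
  simp [coeffSum]

theorem coeffSum_eq_sum {s : Finset E} {w : E →₀ ℝ} (hw : ∀ v ∉ s, w v = 0) :
    coeffSum w = ∑ v ∈ s, w v := by
  rw [coeffSum, Finsupp.linearCombination_apply, Finsupp.sum_of_support_subset (s := s)]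
  · simp
  · intro v hv
    by_contra h
    exact Finsupp.mem_support_iff.1 hv (hw v h)
  · simp

variable [AddCommGroup E] [Module ℝ E]

/-- The point of `E` whose coefficients are given by a finitely supported function on `E`. -/
noncomputable def weightedPoint : (E →₀ ℝ) →ₗ[ℝ] E :=
  Finsupp.linearCombination ℝ id

@[simp]
theorem weightedPoint_single (v : E) (c : ℝ) : weightedPoint (Finsupp.single v c) = c • v := by
  simp [weightedPoint]

theorem weightedPoint_eq_sum {s : Finset E} {w : E →₀ ℝ} (hw : ∀ v ∉ s, w v = 0) :
    weightedPoint w = ∑ v ∈ s, w v • v := by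
  rw [weightedPoint, Finsupp.linearCombination_apply, Finsupp.sum_of_support_subset (s := s)]
  · simp
  · intro v hv
    by_contra h
    exact Finsupp.mem_support_iff.1 hv (hw v h)
  · simp

/-- `w` is a family of barycentric coordinates of the point `p` of the convex hull of `s`. -/
structure IsBarycentric (s : Finset E) (w : E →₀ ℝ) (p : E) : Prop where
  nonneg : ∀ v, 0 ≤ w v
  eq_zero : ∀ v ∉ s, w v = 0
  coeffSum_eq : coeffSum w = 1
  weightedPoint_eq : weightedPoint w = p

theorem mem_convexHull_iff_exists_isBarycentric {s : Finset E} {p : E} :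
    p ∈ convexHull ℝ (s : Set E) ↔ ∃ w, IsBarycentric s w p := by
  rw [Finset.mem_convexHull']
  constructor
  · rintro ⟨w, hw, hsum, hp⟩
    let u : E →₀ ℝ := Finsupp.onFinset s (fun v => if v ∈ s then w v else 0) (by simp_all)
    have hu : ∀ v ∉ s, u v = 0 := fun v hv => by simp [u, hv]
    refine ⟨u, fun v => ?_, hu, ?_, ?_⟩
    · by_cases hv : v ∈ s <;> simp [u, hv, hw]
    · rw [coeffSum_eq_sum hu, ← hsum]
      exact Finset.sum_congr rfl fun v hv => by simp [u, hv]
    · rw [weightedPoint_eq_sum hu, ← hp]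
      exact Finset.sum_congr rfl fun v hv => by simp [u, hv]
  · rintro ⟨w, hw⟩
    refine ⟨w, fun v _ => hw.nonneg v, ?_, ?_⟩
    · rw [← coeffSum_eq_sum hw.eq_zero, hw.coeffSum_eq]
    · rw [← weightedPoint_eq_sum hw.eq_zero, hw.weightedPoint_eq]

theorem affineIndependent_coe_iff {s : Finset E} :
    AffineIndependent ℝ ((↑) : s → E) ↔
      ∀ w : E →₀ ℝ, (∀ v ∉ s, w v = 0) → coeffSum w = 0 → weightedPoint w = 0 → w = 0 := by
  constructor
  · intro hs w hw hsum hp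
    rw [coeffSum_eq_sum hw] at hsum
    rw [weightedPoint_eq_sum hw] at hp
    ext v
    by_cases hv : v ∈ s
    · exact hs.eq_zero_of_sum_eq_zero_subtype hsum hp v hv
    · exact hw v hv
  · intro h
    rw [affineIndependent_iff]
    intro t f hsum hp i hi
    let w : E →₀ ℝ := ∑ j ∈ t, Finsupp.single (j : E) (f j)
    have hw : w = 0 := by
      refine h w (fun v hv => ?_) ?_ ?_
      · simp only [w, Finsupp.finsetSum_apply]
        refine Finset.sum_eq_zero fun j _ => Finsupp.single_eq_of_ne ?_
        rintro rfl
        exact hv j.2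
      · simpa [w] using hsum
      · simpa [w] using hp
    have hwi : w i = f i := by
      simp only [w, Finsupp.finsetSum_apply]
      rw [Finset.sum_eq_single i]
      · simp
      · intro j _ hj
        exact Finsupp.single_eq_of_ne fun h => hj (Subtype.ext h.symm)
      · exact fun h => absurd hi h
    rw [← hwi, hw, Finsupp.zero_apply]

namespace IsBarycentric

theorem mono {s t : Finset E} {w : E →₀ ℝ} {p : E} (hw : IsBarycentric s w p) (hst : s ⊆ t) :
    IsBarycentric t w p :=
  ⟨hw.nonneg, fun v hv => hw.eq_zero v fun h => hv (hst h), hw.coeffSum_eq, hw.weightedPoint_eq⟩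

theorem unique_of_affineIndependent {s : Finset E} {w w' : E →₀ ℝ} {p : E}
    (hs : AffineIndependent ℝ ((↑) : s → E)) (hw : IsBarycentric s w p)
    (hw' : IsBarycentric s w' p) : w = w' := by
  refine sub_eq_zero.1 (affineIndependent_coe_iff.1 hs _ (fun v hv => ?_) ?_ ?_)
  · simp [hw.eq_zero v hv, hw'.eq_zero v hv]
  · simp [hw.coeffSum_eq, hw'.coeffSum_eq]
  · simp [hw.weightedPoint_eq, hw'.weightedPoint_eq]

theorem unique {K : SimplicialComplex ℝ E} {s t : Finset E} {w w' : E →₀ ℝ} {p : E}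
    (hs : s ∈ K.faces) (ht : t ∈ K.faces) (hw : IsBarycentric s w p)
    (hw' : IsBarycentric t w' p) : w = w' := by
  have hp := K.inter_subset_convexHull hs ht
    ⟨mem_convexHull_iff_exists_isBarycentric.2 ⟨w, hw⟩,
      mem_convexHull_iff_exists_isBarycentric.2 ⟨w', hw'⟩⟩
  rw [← Finset.coe_inter] at hp
  obtain ⟨u, hu⟩ := mem_convexHull_iff_exists_isBarycentric.1 hp
  rw [unique_of_affineIndependent (K.indep hs) hw (hu.mono Finset.inter_subset_left),
    unique_of_affineIndependent (K.indep ht) hw' (hu.mono Finset.inter_subset_right)]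

end IsBarycentric

end BarycentricCoordinates

section EdgeSubdivision

variable {E : Type*}

/-- The vertices of the simplex that carries the simplex `s` when the edge `{a, b}` is
subdivided at `x`. -/
noncomputable def carrierVertices (a b x : E) (s : Finset E) : Finset E :=
  if x ∈ s then s.erase x ∪ {a, b} else s

/-- The relation `x = α • a + β • b`, as a finitely supported function. -/
noncomputable def edgeRelation (a b x : E) (α β : ℝ) : E →₀ ℝ :=
  Finsupp.single a α + Finsupp.single b β - Finsupp.single x 1

theorem carrierVertices_mono {a b x : E} {s t : Finset E} (hst : s ⊆ t) :
    carrierVertices a b x s ⊆ carrierVertices a b x t := by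
  unfold carrierVertices
  split_ifs <;> grind

theorem carrierVertices_nonempty {a b x : E} {s : Finset E} (hs : s.Nonempty) :
    (carrierVertices a b x s).Nonempty := by
  unfold carrierVertices
  split_ifs
  · exact ⟨a, by simp⟩
  · exact hs

theorem card_le_card_carrierVertices {a b x : E} {s : Finset E} (hs : ¬ {a, b} ⊆ s) :
    s.card ≤ (carrierVertices a b x s).card := by
  unfold carrierVertices
  split_ifs with hx
  · obtain ⟨v, hv, hvs⟩ := Finset.not_subset.1 hs
    calc s.card = (insert v (s.erase x)).card := by
          rw [Finset.card_insert_of_notMem fun hmem => hvs (Finset.mem_of_mem_erase hmem),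
            Finset.card_erase_add_one hx]
      _ ≤ (s.erase x ∪ {a, b}).card := Finset.card_le_card (by grind)
  · rfl

theorem edgeRelation_of_ne {a b x v : E} {α β : ℝ} (hva : v ≠ a) (hvb : v ≠ b) (hvx : v ≠ x) :
    edgeRelation a b x α β v = 0 := by
  simp [edgeRelation, hva, hvb, hvx]

theorem left_or_right_eq_zero {a b : E} {s : Finset E} {w : E →₀ ℝ} (hs : ¬ {a, b} ⊆ s)
    (hw : ∀ v ∉ s, w v = 0) : w a = 0 ∨ w b = 0 := by
  by_contra! hab
  refine hs fun v hv => ?_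
  by_contra hvs
  rcases Finset.mem_insert.1 hv with rfl | hv
  · exact hab.1 (hw _ hvs)
  · rw [Finset.mem_singleton] at hv
    subst hv
    exact hab.2 (hw _ hvs)

variable [AddCommGroup E] [Module ℝ E]

/-- The data of an edge `{a, b}` of a simplicial complex `K` with a point `x = α • a + β • b` in
its relative interior. -/
structure IsInteriorPointOfEdge (K : SimplicialComplex ℝ E) (a b x : E) (α β : ℝ) : Prop where
  ne : a ≠ b
  mem_faces : {a, b} ∈ K.faces
  left_pos : 0 < α
  right_pos : 0 < β
  add_eq_one : α + β = 1
  eq_combination : α • a + β • b = x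
  ne_left : x ≠ a
  ne_right : x ≠ b

namespace IsInteriorPointOfEdge

variable {K : SimplicialComplex ℝ E} {a b x : E} {α β : ℝ}

theorem isBarycentric (h : IsInteriorPointOfEdge K a b x α β) :
    IsBarycentric {a, b} (Finsupp.single a α + Finsupp.single b β) x where
  nonneg v := by
    have ha : 0 ≤ Finsupp.single a α v := by
      rw [Finsupp.single_apply]; split_ifs <;> simp [h.left_pos.le]
    have hb : 0 ≤ Finsupp.single b β v := by
      rw [Finsupp.single_apply]; split_ifs <;> simp [h.right_pos.le]
    exact add_nonneg ha hb
  eq_zero v hv := by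
    simp only [Finset.mem_insert, Finset.mem_singleton, not_or] at hv
    simp [hv.1, hv.2]
  coeffSum_eq := by simp [h.add_eq_one]
  weightedPoint_eq := by simp [h.eq_combination]

theorem notMem_of_mem_faces (h : IsInteriorPointOfEdge K a b x α β) {s : Finset E}
    (hs : s ∈ K.faces) : x ∉ s := by
  intro hx
  have hxs : IsBarycentric s (Finsupp.single x 1) x := by
    refine ⟨fun v => ?_, fun v hv => ?_, by simp, by simp⟩
    · rw [Finsupp.single_apply]; split_ifs <;> simp
    · exact Finsupp.single_eq_of_ne fun hvx => hv (hvx ▸ hx)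
  have := DFunLike.congr_fun (hxs.unique hs h.mem_faces h.isBarycentric) x
  simp [h.ne_left, h.ne_right] at this

theorem coeffSum_edgeRelation (h : IsInteriorPointOfEdge K a b x α β) :
    coeffSum (edgeRelation a b x α β) = 0 := by
  simp [edgeRelation, h.add_eq_one]

theorem weightedPoint_edgeRelation (h : IsInteriorPointOfEdge K a b x α β) :
    weightedPoint (edgeRelation a b x α β) = 0 := by
  simp [edgeRelation, h.eq_combination]

theorem edgeRelation_left (h : IsInteriorPointOfEdge K a b x α β) :
    edgeRelation a b x α β a = α := by
  simp [edgeRelation, h.ne, h.ne_left.symm]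

theorem edgeRelation_right (h : IsInteriorPointOfEdge K a b x α β) :
    edgeRelation a b x α β b = β := by
  simp [edgeRelation, h.ne.symm, h.ne_right.symm]

theorem edgeRelation_mid (h : IsInteriorPointOfEdge K a b x α β) :
    edgeRelation a b x α β x = -1 := by
  simp [edgeRelation, h.ne_left, h.ne_right]

/-- Eliminating `x` moves coefficients supported on `s` to its carrier. -/
theorem eliminate_eq_zero (h : IsInteriorPointOfEdge K a b x α β) {s : Finset E} {w : E →₀ ℝ}
    (hw : ∀ v ∉ s, w v = 0) :
    ∀ v ∉ carrierVertices a b x s, (w + w x • edgeRelation a b x α β) v = 0 := by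
  intro v hv
  simp only [Finsupp.add_apply, Finsupp.smul_apply, smul_eq_mul]
  unfold carrierVertices at hv
  split_ifs at hv with hx
  · simp only [Finset.mem_union, Finset.mem_erase, Finset.mem_insert, Finset.mem_singleton,
      not_or, not_and] at hv
    rcases eq_or_ne v x with rfl | hvx
    · rw [h.edgeRelation_mid]; ring
    · rw [hw v (hv.1 hvx), edgeRelation_of_ne hv.2.1 hv.2.2 hvx]; ring
  · rw [hw v hv, hw x hx]; ring

theorem isBarycentric_eliminate (h : IsInteriorPointOfEdge K a b x α β) {s : Finset E}
    {w : E →₀ ℝ} {p : E} (hw : IsBarycentric s w p) :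
    IsBarycentric (carrierVertices a b x s) (w + w x • edgeRelation a b x α β) p where
  nonneg v := by
    simp only [Finsupp.add_apply, Finsupp.smul_apply, smul_eq_mul]
    have hv := hw.nonneg v
    have hx := hw.nonneg x
    rcases eq_or_ne v x with rfl | hvx
    · rw [h.edgeRelation_mid]; linarith
    · rcases eq_or_ne v a with rfl | hva
      · rw [h.edgeRelation_left]; have := h.left_pos; positivity
      · rcases eq_or_ne v b with rfl | hvb
        · rw [h.edgeRelation_right]; have := h.right_pos; positivity
        · rw [edgeRelation_of_ne hva hvb hvx]; linarith
  eq_zero := h.eliminate_eq_zero hw.eq_zero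
  coeffSum_eq := by simp [h.coeffSum_edgeRelation, hw.coeffSum_eq]
  weightedPoint_eq := by simp [h.weightedPoint_edgeRelation, hw.weightedPoint_eq]

theorem convexHull_subset_carrier (h : IsInteriorPointOfEdge K a b x α β) (s : Finset E) :
    convexHull ℝ (s : Set E) ⊆ convexHull ℝ (carrierVertices a b x s : Set E) := by
  intro p hp
  obtain ⟨w, hw⟩ := mem_convexHull_iff_exists_isBarycentric.1 hp
  exact mem_convexHull_iff_exists_isBarycentric.2 ⟨_, h.isBarycentric_eliminate hw⟩

theorem eliminate_injective (h : IsInteriorPointOfEdge K a b x α β) {s t : Finset E}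
    {w u : E →₀ ℝ} {p q : E} (hs : ¬ {a, b} ⊆ s) (ht : ¬ {a, b} ⊆ t)
    (hw : IsBarycentric s w p) (hu : IsBarycentric t u q)
    (heq : w + w x • edgeRelation a b x α β = u + u x • edgeRelation a b x α β) : w = u := by
  have ha := DFunLike.congr_fun heq a
  have hb := DFunLike.congr_fun heq b
  simp only [Finsupp.add_apply, Finsupp.smul_apply, smul_eq_mul, h.edgeRelation_left,
    h.edgeRelation_right] at ha hb
  have hα := h.left_pos
  have hβ := h.right_pos
  have hwa := hw.nonneg a
  have hwb := hw.nonneg b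
  have hua := hu.nonneg a
  have hub := hu.nonneg b
  have hx : w x = u x := by
    apply le_antisymm
    · rcases left_or_right_eq_zero ht hu.eq_zero with h0 | h0
      · exact le_of_mul_le_mul_right (by linarith) hα
      · exact le_of_mul_le_mul_right (by linarith) hβ
    · rcases left_or_right_eq_zero hs hw.eq_zero with h0 | h0
      · exact le_of_mul_le_mul_right (by linarith) hα
      · exact le_of_mul_le_mul_right (by linarith) hβ
  rw [hx] at heq
  exact add_right_cancel heq

/-- The subdivision of `K` at an interior point `x` of the edge `{a, b}`. -/
noncomputable def subdivide (h : IsInteriorPointOfEdge K a b x α β) : SimplicialComplex ℝ E where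
  faces := {s | ¬ {a, b} ⊆ s ∧ carrierVertices a b x s ∈ K.faces}
  isRelLowerSet_faces := by
    rintro s ⟨hs, hsK⟩
    refine ⟨?_, fun t hts ht => ⟨fun hab => hs (hab.trans hts),
      K.down_closed hsK (carrierVertices_mono hts) (carrierVertices_nonempty ht)⟩⟩
    rw [Finset.nonempty_iff_ne_empty]
    rintro rfl
    simp [carrierVertices, SimplicialComplex.empty_notMem] at hsK
  indep := by
    rintro s ⟨hs, hsK⟩
    rw [affineIndependent_coe_iff]
    intro w hw hsum hp
    have h0 := affineIndependent_coe_iff.1 (K.indep hsK) _ (h.eliminate_eq_zero hw)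
      (by simp [hsum, h.coeffSum_edgeRelation]) (by simp [hp, h.weightedPoint_edgeRelation])
    have ha := DFunLike.congr_fun h0 a
    have hb := DFunLike.congr_fun h0 b
    simp only [Finsupp.add_apply, Finsupp.smul_apply, smul_eq_mul, h.edgeRelation_left,
      h.edgeRelation_right, Finsupp.zero_apply] at ha hb
    have hx : w x = 0 := by
      rcases left_or_right_eq_zero hs hw with hz | hz
      · simpa [hz, h.left_pos.ne'] using ha
      · simpa [hz, h.right_pos.ne'] using hb
    simpa [hx] using h0
  inter_subset_convexHull := by
    rintro s t ⟨hs, hsK⟩ ⟨ht, htK⟩ p ⟨hps, hpt⟩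
    obtain ⟨w, hw⟩ := mem_convexHull_iff_exists_isBarycentric.1 hps
    obtain ⟨u, hu⟩ := mem_convexHull_iff_exists_isBarycentric.1 hpt
    have hwu : w = u := h.eliminate_injective hs ht hw hu
      ((h.isBarycentric_eliminate hw).unique hsK htK (h.isBarycentric_eliminate hu))
    rw [← Finset.coe_inter]
    refine mem_convexHull_iff_exists_isBarycentric.2
      ⟨w, hw.nonneg, fun v hv => ?_, hw.coeffSum_eq, hw.weightedPoint_eq⟩
    by_cases hvs : v ∈ s
    · rw [hwu]
      exact hu.eq_zero v fun hvt => hv (Finset.mem_inter.2 ⟨hvs, hvt⟩)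
    · exact hw.eq_zero v hvs

theorem mem_faces_subdivide (h : IsInteriorPointOfEdge K a b x α β) {s : Finset E} :
    s ∈ h.subdivide.faces ↔ ¬ {a, b} ⊆ s ∧ carrierVertices a b x s ∈ K.faces :=
  Iff.rfl

theorem symm (h : IsInteriorPointOfEdge K a b x α β) : IsInteriorPointOfEdge K b a x β α where
  ne := h.ne.symm
  mem_faces := Finset.pair_comm a b ▸ h.mem_faces
  left_pos := h.right_pos
  right_pos := h.left_pos
  add_eq_one := by rw [add_comm, h.add_eq_one]
  eq_combination := by rw [add_comm, h.eq_combination]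
  ne_left := h.ne_right
  ne_right := h.ne_left

theorem carrierVertices_insert_erase_left (h : IsInteriorPointOfEdge K a b x α β) {s : Finset E}
    (hs : s ∈ K.faces) (hab : {a, b} ⊆ s) :
    carrierVertices a b x (insert x (s.erase a)) = s := by
  have hx := h.notMem_of_mem_faces hs
  have := h.ne
  unfold carrierVertices
  grind

theorem insert_erase_left_mem (h : IsInteriorPointOfEdge K a b x α β) {s : Finset E}
    (hs : s ∈ K.faces) (hab : {a, b} ⊆ s) : insert x (s.erase a) ∈ h.subdivide.faces := by
  refine ⟨fun hsub => ?_, by rwa [h.carrierVertices_insert_erase_left hs hab]⟩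
  have := h.ne_left
  have ha := hsub (Finset.mem_insert_self a {b})
  grind

theorem insert_erase_right_mem (h : IsInteriorPointOfEdge K a b x α β) {s : Finset E}
    (hs : s ∈ K.faces) (hab : {a, b} ⊆ s) : insert x (s.erase b) ∈ h.subdivide.faces := by
  have := h.symm.insert_erase_left_mem hs (by rwa [Finset.pair_comm])
  simpa only [mem_faces_subdivide, carrierVertices, Finset.pair_comm b a] using this

/-- A point whose relative coordinate at `a` is at most that at `b` lies in the part of the
simplex away from `a`. -/
theorem mem_convexHull_insert_erase_left (h : IsInteriorPointOfEdge K a b x α β) {s : Finset E}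
    {w : E →₀ ℝ} {p : E} (hs : s ∈ K.faces) (hab : {a, b} ⊆ s) (hw : IsBarycentric s w p)
    (hle : w a / α ≤ w b / β) :
    p ∈ convexHull ℝ ((insert x (s.erase a) : Finset E) : Set E) := by
  have hα := h.left_pos
  have hβ := h.right_pos
  have hx := h.notMem_of_mem_faces hs
  have hbs : b ∈ s := hab (by simp)
  refine mem_convexHull_iff_exists_isBarycentric.2
    ⟨w - (w a / α) • edgeRelation a b x α β, fun v => ?_, fun v hv => ?_, ?_, ?_⟩
  · simp only [Finsupp.sub_apply, Finsupp.smul_apply, smul_eq_mul]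
    have hv := hw.nonneg v
    have ha : 0 ≤ w a / α := div_nonneg (hw.nonneg a) hα.le
    rcases eq_or_ne v x with rfl | hvx
    · rw [h.edgeRelation_mid]; linarith
    · rcases eq_or_ne v a with rfl | hva
      · rw [h.edgeRelation_left, div_mul_cancel₀ _ hα.ne', sub_self]
      · rcases eq_or_ne v b with rfl | hvb
        · rw [h.edgeRelation_right]
          linarith [(le_div_iff₀ hβ).1 hle]
        · rw [edgeRelation_of_ne hva hvb hvx]; linarith
  · simp only [Finsupp.sub_apply, Finsupp.smul_apply, smul_eq_mul]
    simp only [Finset.mem_insert, Finset.mem_erase, not_or, not_and] at hv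
    rcases eq_or_ne v a with rfl | hva
    · rw [h.edgeRelation_left, div_mul_cancel₀ _ hα.ne', sub_self]
    · have hvs := hv.2 hva
      rw [hw.eq_zero v hvs, edgeRelation_of_ne hva (fun hvb => hvs (hvb ▸ hbs)) hv.1]
      ring
  · simp [h.coeffSum_edgeRelation, hw.coeffSum_eq]
  · simp [h.weightedPoint_edgeRelation, hw.weightedPoint_eq]

theorem carrierVertices_of_mem_faces (h : IsInteriorPointOfEdge K a b x α β) {s : Finset E}
    (hs : s ∈ K.faces) : carrierVertices a b x s = s :=
  if_neg (h.notMem_of_mem_faces hs)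

theorem mem_faces_subdivide_of_not_subset (h : IsInteriorPointOfEdge K a b x α β) {s : Finset E}
    (hs : s ∈ K.faces) (hab : ¬ {a, b} ⊆ s) : s ∈ h.subdivide.faces :=
  ⟨hab, by rwa [h.carrierVertices_of_mem_faces hs]⟩

theorem space_subdivide (h : IsInteriorPointOfEdge K a b x α β) :
    h.subdivide.space = K.space := by
  ext p
  simp only [SimplicialComplex.mem_space_iff]
  constructor
  · rintro ⟨s, hs, hp⟩
    exact ⟨_, hs.2, h.convexHull_subset_carrier s hp⟩
  · rintro ⟨s, hs, hp⟩
    by_cases hab : {a, b} ⊆ s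
    · obtain ⟨w, hw⟩ := mem_convexHull_iff_exists_isBarycentric.1 hp
      rcases le_total (w a / α) (w b / β) with hle | hle
      · exact ⟨_, h.insert_erase_left_mem hs hab,
          h.mem_convexHull_insert_erase_left hs hab hw hle⟩
      · exact ⟨_, h.insert_erase_right_mem hs hab,
          h.symm.mem_convexHull_insert_erase_left hs (by rwa [Finset.pair_comm]) hw hle⟩
    · exact ⟨s, h.mem_faces_subdivide_of_not_subset hs hab, hp⟩

/-- The faces of the subdivision, enumerated through the faces of `K`. -/
theorem faces_subdivide_eq (h : IsInteriorPointOfEdge K a b x α β) (hfin : K.faces.Finite) :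
    h.subdivide.faces =
      ((hfin.toFinset.filter fun s => ¬ {a, b} ⊆ s) ∪
        ((hfin.toFinset.filter fun s => {a, b} ⊆ s).image (fun s => insert x (s \ {a, b})) ∪
        ((hfin.toFinset.filter fun s => {a, b} ⊆ s).image (fun s => insert x (s.erase a)) ∪
        (hfin.toFinset.filter fun s => {a, b} ⊆ s).image (fun s => insert x (s.erase b)))) :
        Finset (Finset E)) := by
  ext s
  simp only [Finset.coe_union, Finset.coe_image, Finset.coe_filter, Set.mem_union, Set.mem_image,
    Set.mem_ofPred_eq, Set.Finite.mem_toFinset]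
  constructor
  · rintro ⟨hs, hsK⟩
    by_cases hx : x ∈ s
    · right
      have hc : carrierVertices a b x s = s.erase x ∪ {a, b} := if_pos hx
      rw [hc] at hsK
      have hxa := h.ne_left
      have hxb := h.ne_right
      have hne := h.ne
      by_cases ha : a ∈ s
      · right; right
        exact ⟨_, ⟨hsK, by simp⟩, by grind⟩
      · by_cases hb : b ∈ s
        · right; left
          exact ⟨_, ⟨hsK, by simp⟩, by grind⟩
        · left
          exact ⟨_, ⟨hsK, by simp⟩, by grind⟩
    · left
      exact ⟨by simpa [carrierVertices, hx] using hsK, hs⟩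
  · rintro (⟨hs, hab⟩ | ⟨t, ⟨ht, hab⟩, rfl⟩ | ⟨t, ⟨ht, hab⟩, rfl⟩ | ⟨t, ⟨ht, hab⟩, rfl⟩)
    · exact h.mem_faces_subdivide_of_not_subset hs hab
    · exact h.subdivide.down_closed (h.insert_erase_left_mem ht hab) (by grind) (by simp)
    · exact h.insert_erase_left_mem ht hab
    · exact h.insert_erase_right_mem ht hab

theorem finite_faces_subdivide (h : IsInteriorPointOfEdge K a b x α β) (hfin : K.faces.Finite) :
    h.subdivide.faces.Finite := by
  rw [h.faces_subdivide_eq hfin]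
  exact Finset.finite_toSet _

theorem sum_neg_one_pow_card_subdivide (h : IsInteriorPointOfEdge K a b x α β)
    (hfin : K.faces.Finite) :
    ∑ s ∈ (h.finite_faces_subdivide hfin).toFinset, (-1 : ℤ) ^ s.card =
      ∑ s ∈ hfin.toFinset, (-1 : ℤ) ^ s.card := by
  have hne := h.ne
  have hxa := h.ne_left
  have hxb := h.ne_right
  have hxs : ∀ s ∈ hfin.toFinset, x ∉ s := fun s hs =>
    h.notMem_of_mem_faces (hfin.mem_toFinset.1 hs)
  have hinj (r : Finset E → Finset E) (hr : ∀ s v, v ≠ a → v ≠ b → (v ∈ r s ↔ v ∈ s)) :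
      Set.InjOn (fun s => insert x (r s))
        (hfin.toFinset.filter fun s => {a, b} ⊆ s : Finset (Finset E)) := by
    intro s hs t ht heq
    simp only [Finset.coe_filter, Set.mem_ofPred_eq] at hs ht
    have := hxs s hs.1
    have := hxs t ht.1
    simp only [Finset.insert_subset_iff, Finset.singleton_subset_iff] at hs ht
    ext v
    have := Finset.ext_iff.1 heq v
    grind
  have hfaces := Finset.coe_injective <|
    (h.finite_faces_subdivide hfin).coe_toFinset.trans (h.faces_subdivide_eq hfin)
  rw [hfaces, ← Finset.sum_filter_not_add_sum_filter hfin.toFinset fun s => {a, b} ⊆ s,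
    Finset.sum_union, Finset.sum_union, Finset.sum_union, Finset.sum_image, Finset.sum_image,
    Finset.sum_image, ← Finset.sum_add_distrib, ← Finset.sum_add_distrib]
  · congr 1
    refine Finset.sum_congr rfl fun s hs => ?_
    obtain ⟨hsK, hab⟩ := Finset.mem_filter.1 hs
    have hx := hxs s hsK
    have ha : a ∈ s := hab (by simp)
    have hb : b ∈ s := hab (by simp)
    have hcard : (s \ {a, b}).card + 2 = s.card := by
      rw [← Finset.card_pair hne, Finset.card_sdiff_add_card_eq_card hab]
    rw [Finset.card_insert_of_notMem (by simp [hx]), Finset.card_insert_of_notMem (by simp [hx]),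
      Finset.card_insert_of_notMem (by simp [hx]), Finset.card_erase_add_one ha,
      Finset.card_erase_add_one hb, ← hcard]
    ring
  · exact hinj _ (by grind)
  · exact hinj _ (by grind)
  · exact hinj _ (by grind)
  · rw [Finset.disjoint_left]
    simp only [Finset.mem_image, Finset.mem_filter, Finset.insert_subset_iff,
      Finset.singleton_subset_iff]
    rintro _ ⟨s, hs, rfl⟩ ⟨t, ht, heq⟩
    have := Finset.ext_iff.1 heq a
    grind
  · rw [Finset.disjoint_left]
    simp only [Finset.mem_union, Finset.mem_image, Finset.mem_filter, Finset.insert_subset_iff,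
      Finset.singleton_subset_iff]
    rintro _ ⟨s, hs, rfl⟩ (⟨t, ht, heq⟩ | ⟨t, ht, heq⟩)
    · have := Finset.ext_iff.1 heq b
      grind
    · have := Finset.ext_iff.1 heq a
      grind
  · rw [Finset.disjoint_left]
    simp only [Finset.mem_union, Finset.mem_image, Finset.mem_filter]
    rintro s ⟨hs, -⟩ (⟨t, -, rfl⟩ | ⟨t, -, rfl⟩ | ⟨t, -, rfl⟩) <;>
      exact hxs _ hs (Finset.mem_insert_self _ _)

end IsInteriorPointOfEdge

/-- The relative interior of an edge consists of its points that are not vertices. -/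
theorem exists_isInteriorPointOfEdge {K : SimplicialComplex ℝ E} {e : Finset E} {x : E}
    (he : e ∈ K.faces) (hcard : e.card = 2) (hx : x ∈ convexHull ℝ (e : Set E)) (hxe : x ∉ e) :
    ∃ a b α β, e = {a, b} ∧ IsInteriorPointOfEdge K a b x α β := by
  obtain ⟨a, b, hab, rfl⟩ := Finset.card_eq_two.1 hcard
  simp only [Finset.mem_insert, Finset.mem_singleton, not_or] at hxe
  rw [Finset.coe_pair, convexHull_pair] at hx
  obtain ⟨α, β, hα, hβ, hαβ, hxeq⟩ :=
    mem_openSegment_of_ne_left_right (Ne.symm hxe.1) (Ne.symm hxe.2) hx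
  exact ⟨a, b, α, β, rfl, hab, he, hα, hβ, hαβ, hxeq, hxe.1, hxe.2⟩

theorem euler_sum_eq_neg_sum {K : SimplicialComplex ℝ E} (hfin : K.faces.Finite)
    (hdim : ∀ s ∈ K.faces, s.card ≤ 3) :
    ({s ∈ K.faces | s.card = 1}.ncard : ℤ) - {s ∈ K.faces | s.card = 2}.ncard
        + {s ∈ K.faces | s.card = 3}.ncard = -∑ s ∈ hfin.toFinset, (-1 : ℤ) ^ s.card := by
  have hcount (i : ℕ) : ({s ∈ K.faces | s.card = i}.ncard : ℤ) =
      ∑ s ∈ hfin.toFinset, if s.card = i then 1 else 0 := by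
    rw [Finset.sum_boole, ← Set.ncard_coe_finset]
    simp
  rw [hcount, hcount, hcount, ← Finset.sum_sub_distrib, ← Finset.sum_add_distrib,
    ← Finset.sum_neg_distrib]
  refine Finset.sum_congr rfl fun s hs => ?_
  have hsK := hfin.mem_toFinset.1 hs
  have hpos := (SimplicialComplex.nonempty_of_mem_faces hsK).card_pos
  have hle := hdim s hsK
  interval_cases s.card <;> norm_num

/-- Subdividing successively at interior points `x` and `y` of two edges of a triangle gives a
subdivision with the edge `{x, y}` and the same alternating sum of face numbers. -/
theorem exists_subdivision_with_edge {K : SimplicialComplex ℝ E} (hfin : K.faces.Finite)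
    (hdim : ∀ s ∈ K.faces, s.card ≤ 3) {σ e₁ e₂ : Finset E} (hσ : σ ∈ K.faces)
    (he₁ : e₁ ⊆ σ) (he₂ : e₂ ⊆ σ) (hc₁ : e₁.card = 2) (hc₂ : e₂.card = 2) (hne : e₁ ≠ e₂)
    {x y : E} (hx : x ∈ convexHull ℝ (e₁ : Set E)) (hxv : x ∉ e₁)
    (hy : y ∈ convexHull ℝ (e₂ : Set E)) (hyv : y ∉ e₂) :
    ∃ K' : SimplicialComplex ℝ E, K'.faces.Finite ∧ {x, y} ∈ K'.faces ∧ K'.space = K.space ∧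
      (∀ t ∈ K'.faces, ∃ s ∈ K.faces, convexHull ℝ (t : Set E) ⊆ convexHull ℝ (s : Set E)) ∧
      ({s ∈ K'.faces | s.card = 1}.ncard : ℤ) - {s ∈ K'.faces | s.card = 2}.ncard
          + {s ∈ K'.faces | s.card = 3}.ncard
        = ({s ∈ K.faces | s.card = 1}.ncard : ℤ) - {s ∈ K.faces | s.card = 2}.ncard
          + {s ∈ K.faces | s.card = 3}.ncard := by
  obtain ⟨a, b, α, β, rfl, h₁⟩ := exists_isInteriorPointOfEdge
    (K.down_closed hσ he₁ (Finset.card_pos.1 (by omega))) hc₁ hx hxv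
  have hnot : ¬ {a, b} ⊆ e₂ := fun hsub =>
    hne (Finset.eq_of_subset_of_card_le hsub (by omega))
  have he₂K : e₂ ∈ K.faces := K.down_closed hσ he₂ (Finset.card_pos.1 (by omega))
  obtain ⟨c, d, γ, δ, rfl, h₂⟩ := exists_isInteriorPointOfEdge
    (h₁.mem_faces_subdivide_of_not_subset he₂K hnot) hc₂ hy hyv
  have hx₂ := h₁.notMem_of_mem_faces he₂K
  have hxy : x ≠ y := by
    rintro rfl
    refine h₂.notMem_of_mem_faces (s := {x}) ⟨?_, ?_⟩ (Finset.mem_singleton_self x)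
    · intro hsub
      exact h₁.ne_left (Finset.mem_singleton.1 (hsub (Finset.mem_insert_self a {b}))).symm
    · simpa [carrierVertices] using h₁.mem_faces
  have hfin₁ := h₁.finite_faces_subdivide hfin
  have hdim₁ : ∀ s ∈ h₁.subdivide.faces, s.card ≤ 3 := fun s hs =>
    (card_le_card_carrierVertices hs.1).trans (hdim _ hs.2)
  have hdim₂ : ∀ s ∈ h₂.subdivide.faces, s.card ≤ 3 := fun s hs =>
    (card_le_card_carrierVertices hs.1).trans (hdim₁ _ hs.2)
  refine ⟨h₂.subdivide, h₂.finite_faces_subdivide hfin₁, ⟨?_, ?_, ?_⟩, ?_, ?_, ?_⟩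
  · intro hsub
    have hc := hsub (Finset.mem_insert_self c {d})
    have := h₂.ne_left
    grind
  · have hcarrier : carrierVertices c d y {x, y} = insert x {c, d} := by
      unfold carrierVertices
      grind
    rw [hcarrier]
    intro hsub
    have hxa := h₁.ne_left
    have hxb := h₁.ne_right
    grind
  · have hcarrier : carrierVertices a b x (carrierVertices c d y {x, y}) = {c, d} ∪ {a, b} := by
      unfold carrierVertices
      grind
    rw [hcarrier]
    exact K.down_closed hσ (Finset.union_subset he₂ he₁) ⟨c, by simp⟩
  · rw [h₂.space_subdivide, h₁.space_subdivide]
  · intro t ht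
    exact ⟨_, ht.2.2, (h₂.convexHull_subset_carrier t).trans (h₁.convexHull_subset_carrier _)⟩
  · rw [euler_sum_eq_neg_sum (h₂.finite_faces_subdivide hfin₁) hdim₂,
      euler_sum_eq_neg_sum hfin hdim, h₂.sum_neg_one_pow_card_subdivide hfin₁,
      h₁.sum_neg_one_pow_card_subdivide hfin]

end EdgeSubdivision

/-- **Subdivision lemma.** Let `K` be a finite `2`-dimensional simplicial complex in the
plane, `σ` a triangle of `K`, and `τ = (x, y)` a segment dividing `σ`, where `x` and `y`
lie (strictly) on two different sides `e₁`, `e₂` of `σ`.  Then there is a subdivision `K'`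
of `K` (same underlying space, every simplex of `K'` contained in a simplex of `K`) in
which `{x, y}` is a `1`-simplex, and the quantity `n₀ - n₁ + n₂` is the same for `K`
and `K'`. -/
theorem subdivision_preserves_euler_sum
    (K : SimplicialComplex ℝ (EuclideanSpace ℝ (Fin 2)))
    (hfin : K.faces.Finite)
    (hdim : ∀ s ∈ K.faces, s.card ≤ 3)
    (σ : Finset (EuclideanSpace ℝ (Fin 2))) (hσ : σ ∈ K.faces) (hσ3 : σ.card = 3)
    (e₁ e₂ : Finset (EuclideanSpace ℝ (Fin 2)))
    (he₁ : e₁ ⊆ σ) (he₂ : e₂ ⊆ σ) (hc₁ : e₁.card = 2) (hc₂ : e₂.card = 2) (hne : e₁ ≠ e₂)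
    (x y : EuclideanSpace ℝ (Fin 2))
    (hx : x ∈ convexHull ℝ (e₁ : Set (EuclideanSpace ℝ (Fin 2)))) (hxv : x ∉ e₁)
    (hy : y ∈ convexHull ℝ (e₂ : Set (EuclideanSpace ℝ (Fin 2)))) (hyv : y ∉ e₂) :
    ∃ K' : SimplicialComplex ℝ (EuclideanSpace ℝ (Fin 2)),
      K'.faces.Finite ∧
      ({x, y} : Finset (EuclideanSpace ℝ (Fin 2))) ∈ K'.faces ∧
      K'.space = K.space ∧
      (∀ t ∈ K'.faces, ∃ s ∈ K.faces,
        convexHull ℝ (t : Set (EuclideanSpace ℝ (Fin 2)))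
          ⊆ convexHull ℝ (s : Set (EuclideanSpace ℝ (Fin 2)))) ∧
      ({s ∈ K'.faces | s.card = 1}.ncard : ℤ) - {s ∈ K'.faces | s.card = 2}.ncard
          + {s ∈ K'.faces | s.card = 3}.ncard
        = ({s ∈ K.faces | s.card = 1}.ncard : ℤ) - {s ∈ K.faces | s.card = 2}.ncard
          + {s ∈ K.faces | s.card = 3}.ncard := by
  convert exists_subdivision_with_edge hfin hdim hσ he₁ he₂ hc₁ hc₂ hne hx hxv hy hyv
end
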